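/- Let α ∈ (0,π), w ∈ (0,π), and L ∈ (0,∞), and let u : P(α,w,L) → ℝ be a translator with boundary value −∞ at every point of the horizontal sides of P(α,w,L) and +∞ at every point of the nonhorizontal sides. Then the graph of u has strictly negative Gauss curvature everywhere; equivalently, det D²u(p) = u_xx(p)·u_yy(p) − u_xy(p)² < 0 at every point p ∈ P(α,w,L). -/

import Mathlib

/-!
The Hessian determinant `hdet u` of a translator satisfies, near its zeros, a linear elliptic
inequality to which the strong maximum principle applies. Hence `hdet u ≤ 0` on the parallelogram
together with `hdet u < 0` at one point gives `hdet u < 0` everywhere (`det_neg_of_nonpos`). A point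
of negative determinant exists because `u → -∞` at both ends of a segment joining the horizontal
sides (`exists_det_neg`). It remains to show `hdet u q ≤ 0` for every `q` (`hdet_nonpos`).

Suppose `hdet u q > 0`. For each angle `θ` there is a tilted grim reaper `treaper u q θ`, ruled by
lines of direction `θ`, whose graph is tangent to that of `u` at `q`; it lives over a strip. As the
translator equation forces `D²u(q)` to be positive definite, `u` lies above this reaper on a chord
through `q` of direction `θ`, and below it along a transverse direction (`exists_above`,
`exists_below`). Consider the set `aboveSet` where `u` exceeds the reaper.

* The two ends of the chord lie in different components of `aboveSet` (`chord_ends_separated`).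
  Otherwise a path joining them would close up with the chord to a loop enclosing a region where `u`
  lies below the reaper, against the maximum principle. The planar topology is done with continuous
  logarithms of `z - c` on the loop (`no_positive_join`).
* Each component of `aboveSet` reaches one of the two nonhorizontal sides (`side_reached`). Otherwise
  `u` minus the reaper would attain a positive maximum on it (`component_not_enclosed`); here the
  corners of the parallelogram are removed by catenoid-like barriers (`corner_removal`), and the
  edges of the strip by slightly narrower grim reapers (`strip_removal`).
* Two components reaching the same nonhorizontal side coincide, since `u = +∞` there
  (`same_side_same_component`), and the property of reaching a given side is open in `θ`
  (`touch_eventually`).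

So for each `θ` the end of the chord in direction `θ` reaches exactly one nonhorizontal side, locally
constant in `θ`, and the end in direction `θ + π` reaches the other one. This contradicts the
connectedness of the line of angles.
-/

open Real Filter MeasureTheory Set

noncomputable section

/-- Partial derivative with respect to the first variable. -/
def pdx (u : ℝ × ℝ → ℝ) (p : ℝ × ℝ) : ℝ := fderiv ℝ u p (1, 0)

/-- Partial derivative with respect to the second variable. -/
def pdy (u : ℝ × ℝ → ℝ) (p : ℝ × ℝ) : ℝ := fderiv ℝ u p (0, 1)

/-- `u` is a smooth solution of the translator equation
`(1 + u_y²)u_xx − 2u_x u_y u_xy + (1 + u_x²)u_yy = 1 + u_x² + u_y²` on `Ω`. -/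
def IsTranslatorOn (Ω : Set (ℝ × ℝ)) (u : ℝ × ℝ → ℝ) : Prop :=
  ContDiffOn ℝ (⊤ : ℕ∞) u Ω ∧
  ∀ p ∈ Ω,
    (1 + (pdy u p) ^ 2) * pdx (pdx u) p
      - 2 * pdx u p * pdy u p * pdy (pdx u) p
      + (1 + (pdx u p) ^ 2) * pdy (pdy u) p
    = 1 + (pdx u p) ^ 2 + (pdy u p) ^ 2

/-- The open parallelogram `P(α, w, L)`. -/
def Pgram (α w L : ℝ) : Set (ℝ × ℝ) :=
  {p | 0 < p.2 ∧ p.2 < w ∧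
       p.2 * Real.cos α / Real.sin α < p.1 ∧
       p.1 < L + p.2 * Real.cos α / Real.sin α}

/-- `u` is a translator on `P(α,w,L)` with boundary value `−∞` at every point of the
horizontal sides and `+∞` at every point of the nonhorizontal sides. -/
def ScherkBVP (α w L : ℝ) (u : ℝ × ℝ → ℝ) : Prop :=
  IsTranslatorOn (Pgram α w L) u ∧
  (∀ x : ℝ, 0 < x → x < L →
      Tendsto u (nhdsWithin (x, 0) (Pgram α w L)) atBot) ∧
  (∀ x : ℝ, w * Real.cos α / Real.sin α < x → x < L + w * Real.cos α / Real.sin α →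
      Tendsto u (nhdsWithin (x, w) (Pgram α w L)) atBot) ∧
  (∀ y : ℝ, 0 < y → y < w →
      Tendsto u (nhdsWithin (y * Real.cos α / Real.sin α, y) (Pgram α w L)) atTop) ∧
  (∀ y : ℝ, 0 < y → y < w →
      Tendsto u (nhdsWithin (L + y * Real.cos α / Real.sin α, y) (Pgram α w L)) atTop)

/-- The region `Ω(α, w)`: a "parallelogram" whose right-hand side is at infinity. -/
def OmegaReg (α w : ℝ) : Set (ℝ × ℝ) :=
  {p | 0 < p.2 ∧ p.2 < w ∧ p.2 * Real.cos α / Real.sin α < p.1}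

/-- `u` is a translator on `Ω(α,w)` with boundary value `−∞` at every point of the two
horizontal edges and `+∞` at every point of the nonhorizontal edge. -/
def ScherkenoidBVP (α w : ℝ) (u : ℝ × ℝ → ℝ) : Prop :=
  IsTranslatorOn (OmegaReg α w) u ∧
  (∀ x : ℝ, 0 < x → Tendsto u (nhdsWithin (x, 0) (OmegaReg α w)) atBot) ∧
  (∀ x : ℝ, w * Real.cos α / Real.sin α < x →
      Tendsto u (nhdsWithin (x, w) (OmegaReg α w)) atBot) ∧
  (∀ y : ℝ, 0 < y → y < w →
      Tendsto u (nhdsWithin (y * Real.cos α / Real.sin α, y) (OmegaReg α w)) atTop)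

/-- The full strip `ℝ × (0, w)`. -/
def TStrip (w : ℝ) : Set (ℝ × ℝ) := {p | 0 < p.2 ∧ p.2 < w}

/-- The half strip `(0,∞) × (0, w)`. -/
def THalfStrip (w : ℝ) : Set (ℝ × ℝ) := {p | 0 < p.1 ∧ 0 < p.2 ∧ p.2 < w}

/-- A pitchfork function of width `w`: a translator on `ℝ × (0,w)` with boundary value
`+∞` at `(x,0)` for `x < 0`, `−∞` at `(x,0)` for `x > 0`, and `−∞` at `(x,w)` for all `x`. -/
def IsPitchfork (w : ℝ) (u : ℝ × ℝ → ℝ) : Prop :=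
  IsTranslatorOn (TStrip w) u ∧
  (∀ x : ℝ, x < 0 → Tendsto u (nhdsWithin (x, 0) (TStrip w)) atTop) ∧
  (∀ x : ℝ, 0 < x → Tendsto u (nhdsWithin (x, 0) (TStrip w)) atBot) ∧
  (∀ x : ℝ, Tendsto u (nhdsWithin (x, w) (TStrip w)) atBot)

/-- The downward-tilted grim reaper `g_w` of width `w ≥ π`, normalized by `g_w(0,w/2) = 0`. -/
def grimTilt (w : ℝ) (p : ℝ × ℝ) : ℝ :=
  (w / π) ^ 2 * Real.log (Real.sin (π * p.2 / w)) - p.1 * Real.sqrt ((w / π) ^ 2 - 1)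

/-! ### Partial derivatives and second order conditions -/

/-- `f` is differentiable at `p` with gradient `(a, b)`. -/
def HasGrad (f : ℝ × ℝ → ℝ) (a b : ℝ) (p : ℝ × ℝ) : Prop :=
  HasFDerivAt f (a • ContinuousLinearMap.fst ℝ ℝ ℝ + b • ContinuousLinearMap.snd ℝ ℝ ℝ) p

namespace HasGrad

variable {f g : ℝ × ℝ → ℝ} {a b c d : ℝ} {p : ℝ × ℝ}

theorem pdx_eq (h : HasGrad f a b p) : pdx f p = a := by
  simp [pdx, HasFDerivAt.fderiv h]

theorem pdy_eq (h : HasGrad f a b p) : pdy f p = b := by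
  simp [pdy, HasFDerivAt.fderiv h]

theorem congr_val (h : HasGrad f a b p) (h1 : a = c) (h2 : b = d) : HasGrad f c d p := by
  subst h1 h2; exact h

theorem continuousAt (h : HasGrad f a b p) : ContinuousAt f p := HasFDerivAt.continuousAt h

theorem congr_fun (h : HasGrad f a b p) (hfg : g =ᶠ[nhds p] f) : HasGrad g a b p :=
  HasFDerivAt.congr_of_eventuallyEq h hfg

theorem of_differentiableAt (h : DifferentiableAt ℝ f p) : HasGrad f (pdx f p) (pdy f p) p := by
  unfold HasGrad
  convert h.hasFDerivAt using 1
  apply ContinuousLinearMap.ext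
  rintro ⟨x, y⟩
  have h0 : ((x, y) : ℝ × ℝ) = x • (1, 0) + y • (0, 1) := by ext <;> simp
  have h1 : fderiv ℝ f p (x, y) = x * pdx f p + y * pdy f p := by
    rw [h0, map_add, map_smul, map_smul]; rfl
  rw [h1]
  simp [mul_comm]

theorem const (c : ℝ) : HasGrad (fun _ => c) 0 0 p := by
  simpa [HasGrad] using hasFDerivAt_const c p

theorem fst : HasGrad (fun x => x.1) 1 0 p := by
  simpa [HasGrad] using (hasFDerivAt_fst (𝕜 := ℝ) (p := p))

theorem snd : HasGrad (fun x => x.2) 0 1 p := by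
  simpa [HasGrad] using (hasFDerivAt_snd (𝕜 := ℝ) (p := p))

theorem add (hf : HasGrad f a b p) (hg : HasGrad g c d p) :
    HasGrad (fun x => f x + g x) (a + c) (b + d) p := by
  refine (HasFDerivAt.add hf hg).congr_fderiv ?_
  ext <;> simp

theorem sub (hf : HasGrad f a b p) (hg : HasGrad g c d p) :
    HasGrad (fun x => f x - g x) (a - c) (b - d) p := by
  refine (HasFDerivAt.sub hf hg).congr_fderiv ?_
  ext <;> simp

theorem mul (hf : HasGrad f a b p) (hg : HasGrad g c d p) :
    HasGrad (fun x => f x * g x) (a * g p + f p * c) (b * g p + f p * d) p := by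
  refine (HasFDerivAt.mul hf hg).congr_fderiv ?_
  ext <;> simp <;> ring

theorem const_mul (k : ℝ) (hf : HasGrad f a b p) :
    HasGrad (fun x => k * f x) (k * a) (k * b) p := by
  refine (HasFDerivAt.const_mul hf k).congr_fderiv ?_
  ext <;> simp

theorem comp {φ : ℝ → ℝ} {φ' : ℝ} (hf : HasGrad f a b p) (hφ : HasDerivAt φ φ' (f p)) :
    HasGrad (fun x => φ (f x)) (φ' * a) (φ' * b) p := by
  refine (HasDerivAt.comp_hasFDerivAt p hφ hf).congr_fderiv ?_
  ext <;> simp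

theorem line {x₀ y₀ ξ η t : ℝ} (hf : HasGrad f a b (x₀ + t * ξ, y₀ + t * η)) :
    HasDerivAt (fun t => f (x₀ + t * ξ, y₀ + t * η)) (a * ξ + b * η) t := by
  have h1 : HasDerivAt (fun t : ℝ => (x₀ + t * ξ, y₀ + t * η)) (ξ, η) t := by
    refine HasDerivAt.prodMk ?_ ?_
    · simpa using ((hasDerivAt_id t).mul_const ξ).const_add x₀
    · simpa using ((hasDerivAt_id t).mul_const η).const_add y₀
  have h2 := HasFDerivAt.comp_hasDerivAt (f := fun t : ℝ => (x₀ + t * ξ, y₀ + t * η)) t hf h1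
  simpa [Function.comp_def] using h2

/-- Second partial derivatives of a function whose gradient is known near `p`. -/
theorem second {A B : ℝ × ℝ → ℝ} {a₁ a₂ b₁ b₂ : ℝ}
    (h : ∀ᶠ x in nhds p, HasGrad f (A x) (B x) x)
    (hA : HasGrad A a₁ a₂ p) (hB : HasGrad B b₁ b₂ p) :
    pdx (pdx f) p = a₁ ∧ pdy (pdx f) p = a₂ ∧ pdx (pdy f) p = b₁ ∧ pdy (pdy f) p = b₂ := by
  have e1 : pdx f =ᶠ[nhds p] A := h.mono fun x hx => hx.pdx_eq
  have e2 : pdy f =ᶠ[nhds p] B := h.mono fun x hx => hx.pdy_eq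
  have h1 := hA.congr_fun e1
  have h2 := hB.congr_fun e2
  exact ⟨h1.pdx_eq, h1.pdy_eq, h2.pdx_eq, h2.pdy_eq⟩

end HasGrad

section C2
variable {f g : ℝ × ℝ → ℝ} {p : ℝ × ℝ}

theorem contDiffAt_pdx {n : ℕ} (h : ContDiffAt ℝ (n + 1 : ℕ) f p) : ContDiffAt ℝ n (pdx f) p := by
  have := h.fderiv_right (m := n) (by norm_cast)
  exact this.clm_apply contDiffAt_const

theorem contDiffAt_pdy {n : ℕ} (h : ContDiffAt ℝ (n + 1 : ℕ) f p) : ContDiffAt ℝ n (pdy f) p := by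
  have := h.fderiv_right (m := n) (by norm_cast)
  exact this.clm_apply contDiffAt_const

theorem ContDiffAt.ev {n : ℕ} (h : ContDiffAt ℝ n f p) : ∀ᶠ x in nhds p, ContDiffAt ℝ n f x :=
  h.eventually (by simp)

theorem ContDiffAt.hasGrad {n : ℕ} (h : ContDiffAt ℝ (n + 1 : ℕ) f p) :
    HasGrad f (pdx f p) (pdy f p) p :=
  HasGrad.of_differentiableAt (h.differentiableAt (by simp))

theorem pdx_pdy_comm (h : ContDiffAt ℝ (2 : ℕ) f p) : pdx (pdy f) p = pdy (pdx f) p := by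
  have hs := ContDiffAt.isSymmSndFDerivAt h (by simp)
  have hd : DifferentiableAt ℝ (fderiv ℝ f) p :=
    (h.fderiv_right (m := (1 : ℕ)) (by norm_cast)).differentiableAt (by simp)
  have e : ∀ v w : ℝ × ℝ, fderiv ℝ (fun x => fderiv ℝ f x v) p w
      = fderiv ℝ (fderiv ℝ f) p w v := by
    intro v w
    have := (hd.hasFDerivAt.clm_apply (hasFDerivAt_const v p)).fderiv
    rw [this]; simp
  change fderiv ℝ (fun x => fderiv ℝ f x (0, 1)) p (1, 0)
    = fderiv ℝ (fun x => fderiv ℝ f x (1, 0)) p (0, 1)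
  rw [e, e]
  exact hs.eq _ _

theorem second_sub (hf : ContDiffAt ℝ (2 : ℕ) f p) (hg : ContDiffAt ℝ (2 : ℕ) g p) :
    pdx (fun x => f x - g x) p = pdx f p - pdx g p ∧
    pdy (fun x => f x - g x) p = pdy f p - pdy g p ∧
    pdx (pdx (fun x => f x - g x)) p = pdx (pdx f) p - pdx (pdx g) p ∧
    pdy (pdx (fun x => f x - g x)) p = pdy (pdx f) p - pdy (pdx g) p ∧
    pdy (pdy (fun x => f x - g x)) p = pdy (pdy f) p - pdy (pdy g) p := by
  have h := (hf.hasGrad (n := 1)).sub (hg.hasGrad (n := 1))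
  have ev : ∀ᶠ x in nhds p, HasGrad (fun x => f x - g x) (pdx f x - pdx g x)
      (pdy f x - pdy g x) x := by
    filter_upwards [hf.ev, hg.ev] with x h1 h2
    exact (h1.hasGrad (n := 1)).sub (h2.hasGrad (n := 1))
  have h2 := HasGrad.second ev
    (((contDiffAt_pdx (n := 1) hf).hasGrad (n := 0)).sub ((contDiffAt_pdx (n := 1) hg).hasGrad (n := 0)))
    (((contDiffAt_pdy (n := 1) hf).hasGrad (n := 0)).sub ((contDiffAt_pdy (n := 1) hg).hasGrad (n := 0)))
  exact ⟨h.pdx_eq, h.pdy_eq, h2.1, h2.2.1, h2.2.2.2⟩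

/-- Second derivative along a line. -/
theorem hasDerivAt_line2 {ξ η : ℝ} (hf : ContDiffAt ℝ (2 : ℕ) f p) :
    HasDerivAt (fun t : ℝ => f (p.1 + t * ξ, p.2 + t * η)) (pdx f p * ξ + pdy f p * η) 0 ∧
    (∀ᶠ t in nhds (0 : ℝ), HasDerivAt (fun t : ℝ => f (p.1 + t * ξ, p.2 + t * η))
      (pdx f (p.1 + t * ξ, p.2 + t * η) * ξ + pdy f (p.1 + t * ξ, p.2 + t * η) * η) t) ∧
    HasDerivAt (fun t : ℝ => pdx f (p.1 + t * ξ, p.2 + t * η) * ξ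
        + pdy f (p.1 + t * ξ, p.2 + t * η) * η)
      (ξ ^ 2 * pdx (pdx f) p + 2 * ξ * η * pdy (pdx f) p + η ^ 2 * pdy (pdy f) p) 0 := by
  have hp : ((p.1 + 0 * ξ, p.2 + 0 * η) : ℝ × ℝ) = p := by ext <;> simp
  refine ⟨?_, ?_, ?_⟩
  · have := (hf.hasGrad (n := 1))
    rw [← hp] at this
    have := this.line
    rwa [hp] at this
  · have hc : ContinuousAt (fun t : ℝ => ((p.1 + t * ξ, p.2 + t * η) : ℝ × ℝ)) 0 := by fun_prop
    have := hc.eventually (p := fun x => ContDiffAt ℝ (2 : ℕ) f x) (by simpa [hp] using hf.ev)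
    filter_upwards [this] with t ht
    exact (ht.hasGrad (n := 1)).line
  · have h1 := ((contDiffAt_pdx (n := 1) hf).hasGrad (n := 0))
    have h2 := ((contDiffAt_pdy (n := 1) hf).hasGrad (n := 0))
    rw [← hp] at h1 h2
    have := (h1.line.mul_const ξ).add (h2.line.mul_const η)
    rw [hp, pdx_pdy_comm hf] at this
    refine this.congr_deriv ?_
    ring

/-- Second order condition at a maximum along a line. -/
theorem line_second_order (hf : ContDiffAt ℝ (2 : ℕ) f p) {ξ η : ℝ}
    (hm : IsLocalMax (fun t : ℝ => f (p.1 + t * ξ, p.2 + t * η)) 0) :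
    ξ ^ 2 * pdx (pdx f) p + 2 * ξ * η * pdy (pdx f) p + η ^ 2 * pdy (pdy f) p ≤ 0 := by
  obtain ⟨h1, h2, h3⟩ := hasDerivAt_line2 (ξ := ξ) (η := η) hf
  set F := fun t : ℝ => f (p.1 + t * ξ, p.2 + t * η) with hF
  have hd : deriv F =ᶠ[nhds 0] _ := h2.mono fun t ht => ht.deriv
  have hdd : deriv (deriv F) 0 = _ := (h3.congr_of_eventuallyEq hd).deriv
  by_contra hcon
  push Not at hcon
  have hmin : IsLocalMin F 0 := isLocalMin_of_deriv_deriv_pos (by rw [hdd]; exact hcon)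
    hm.deriv_eq_zero h1.continuousAt
  have hconst : F =ᶠ[nhds 0] fun _ => F 0 := by
    filter_upwards [hmin, hm] with t ht1 ht2
    exact le_antisymm ht2 ht1
  have h4 : deriv (deriv F) 0 = 0 := by
    have : deriv F =ᶠ[nhds 0] fun _ => 0 := by
      have := hconst.deriv
      simpa using this
    rw [this.deriv_eq]; simp
  linarith [hdd]

/-- First and second order conditions at an interior maximum. -/
theorem IsLocalMax.second_order (hf : ContDiffAt ℝ (2 : ℕ) f p) (hm : IsLocalMax f p) :
    pdx f p = 0 ∧ pdy f p = 0 ∧ ∀ ξ η : ℝ,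
      ξ ^ 2 * pdx (pdx f) p + 2 * ξ * η * pdy (pdx f) p + η ^ 2 * pdy (pdy f) p ≤ 0 := by
  have h0 := hm.fderiv_eq_zero
  refine ⟨by simp [pdx, h0], by simp [pdy, h0], fun ξ η => line_second_order hf ?_⟩
  have hp : ((p.1 + 0 * ξ, p.2 + 0 * η) : ℝ × ℝ) = p := by ext <;> simp
  have hc : ContinuousAt (fun t : ℝ => ((p.1 + t * ξ, p.2 + t * η) : ℝ × ℝ)) 0 := by fun_prop
  have := hc.eventually (p := fun x => f x ≤ f p) (by beta_reduce; rw [hp]; exact hm)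
  simpa [IsLocalMax, IsMaxFilter] using this

/-- The second order operator of the translator equation, with gradient `(P, Q)` frozen in the
coefficients. -/
def aOp (P Q : ℝ) (f : ℝ × ℝ → ℝ) (x : ℝ × ℝ) : ℝ :=
  (1 + Q ^ 2) * pdx (pdx f) x - 2 * P * Q * pdy (pdx f) x + (1 + P ^ 2) * pdy (pdy f) x

theorem IsLocalMax.aOp_nonpos (hf : ContDiffAt ℝ (2 : ℕ) f p) (hm : IsLocalMax f p) (P Q : ℝ) :
    aOp P Q f p ≤ 0 := by
  obtain ⟨_, _, h⟩ := hm.second_order hf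
  have h1 := h 1 0
  have h2 := h 0 1
  have h3 := h Q (-P)
  unfold aOp
  nlinarith

/-- Comparison at a maximum of a difference. -/
theorem IsLocalMax.compare (hf : ContDiffAt ℝ (2 : ℕ) f p) (hg : ContDiffAt ℝ (2 : ℕ) g p)
    (hm : IsLocalMax (fun x => f x - g x) p) :
    pdx f p = pdx g p ∧ pdy f p = pdy g p ∧ ∀ P Q, aOp P Q f p ≤ aOp P Q g p := by
  have hfg : ContDiffAt ℝ (2 : ℕ) (fun x => f x - g x) p := hf.sub hg
  obtain ⟨e1, e2, _⟩ := hm.second_order hfg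
  obtain ⟨s1, s2, s3, s4, s5⟩ := second_sub hf hg
  refine ⟨by linarith, by linarith, fun P Q => ?_⟩
  have := hm.aOp_nonpos hfg P Q
  unfold aOp at *
  rw [s3, s4, s5] at this
  linarith

end C2

/-! ### The strong maximum principle -/

/-- Squared Euclidean distance in the plane (`ℝ × ℝ` carries the sup norm). -/
def sqDist (x y : ℝ × ℝ) : ℝ := (x.1 - y.1) ^ 2 + (x.2 - y.2) ^ 2

theorem continuous_sqDist (y : ℝ × ℝ) : Continuous fun x => sqDist x y := by
  unfold sqDist; fun_prop

theorem sqDist_nonneg (x y : ℝ × ℝ) : 0 ≤ sqDist x y := by unfold sqDist; positivity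

theorem sqDist_eq_zero {x y : ℝ × ℝ} (h : sqDist x y = 0) : x = y := by
  unfold sqDist at h
  have h1 : (x.1 - y.1) ^ 2 = 0 := by nlinarith [sq_nonneg (x.1 - y.1), sq_nonneg (x.2 - y.2)]
  have h2 : (x.2 - y.2) ^ 2 = 0 := by nlinarith [sq_nonneg (x.1 - y.1), sq_nonneg (x.2 - y.2)]
  ext
  · have := pow_eq_zero_iff (two_ne_zero) |>.1 h1; linarith
  · have := pow_eq_zero_iff (two_ne_zero) |>.1 h2; linarith

/-- Derivatives of the Hopf barrier `-ε (exp (-κ |x - y|²) - m)`. -/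
theorem hopf_barrier (κ ε m : ℝ) (y x : ℝ × ℝ) :
    let g : ℝ × ℝ → ℝ := fun x => -ε * (exp (-κ * sqDist x y) - m)
    let E := exp (-κ * sqDist x y)
    ContDiffAt ℝ (2 : ℕ) g x ∧ pdx g x = ε * (2 * κ * (x.1 - y.1) * E) ∧
    pdy g x = ε * (2 * κ * (x.2 - y.2) * E) ∧
    pdx (pdx g) x = -ε * ((4 * κ ^ 2 * (x.1 - y.1) ^ 2 - 2 * κ) * E) ∧
    pdy (pdx g) x = -ε * (4 * κ ^ 2 * (x.1 - y.1) * (x.2 - y.2) * E) ∧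
    pdy (pdy g) x = -ε * ((4 * κ ^ 2 * (x.2 - y.2) ^ 2 - 2 * κ) * E) := by
  intro g E
  have hE : ∀ x : ℝ × ℝ, HasGrad (fun x => exp (-κ * sqDist x y))
      (-(2 * κ * (x.1 - y.1) * exp (-κ * sqDist x y)))
      (-(2 * κ * (x.2 - y.2) * exp (-κ * sqDist x y))) x := by
    intro x
    have h1 : HasGrad (fun x : ℝ × ℝ => x.1 - y.1) _ _ x := HasGrad.fst.sub (HasGrad.const y.1)
    have h2 : HasGrad (fun x : ℝ × ℝ => x.2 - y.2) _ _ x := HasGrad.snd.sub (HasGrad.const y.2)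
    have h3 := (((h1.mul h1).add (h2.mul h2)).const_mul (-κ)).comp (Real.hasDerivAt_exp _)
    have e : (fun x => exp (-κ * sqDist x y)) = fun x : ℝ × ℝ =>
        exp (-κ * ((x.1 - y.1) * (x.1 - y.1) + (x.2 - y.2) * (x.2 - y.2))) := by
      funext x; unfold sqDist; ring_nf
    rw [e]
    refine h3.congr_val ?_ ?_ <;> (unfold sqDist; ring_nf)
  have hg : ∀ x : ℝ × ℝ, HasGrad g (ε * (2 * κ * (x.1 - y.1) * exp (-κ * sqDist x y)))
      (ε * (2 * κ * (x.2 - y.2) * exp (-κ * sqDist x y))) x := by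
    intro x
    refine (((hE x).sub (HasGrad.const m)).const_mul (-ε)).congr_val ?_ ?_ <;> ring
  have h1 : HasGrad (fun x : ℝ × ℝ => x.1 - y.1) _ _ x := HasGrad.fst.sub (HasGrad.const y.1)
  have h2 : HasGrad (fun x : ℝ × ℝ => x.2 - y.2) _ _ x := HasGrad.snd.sub (HasGrad.const y.2)
  have hs := HasGrad.second (Eventually.of_forall hg)
    (((h1.const_mul (2 * κ)).mul (hE x)).const_mul ε)
    (((h2.const_mul (2 * κ)).mul (hE x)).const_mul ε)
  refine ⟨?_, (hg x).pdx_eq, (hg x).pdy_eq, ?_, ?_, ?_⟩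
  · simp only [g, sqDist]; fun_prop
  · rw [hs.1]; ring
  · rw [hs.2.1]; ring
  · rw [hs.2.2.2]; ring

theorem hopf_algebra {κ ρ C p q a b k F : ℝ} (hκ1 : 1 ≤ κ) (hC0 : 0 ≤ C) (hk : 0 < k)
    (hκ : 2 * (2 + C) + C * (2 * (1 + 2 * ρ) + 1) < κ * ρ)
    (hPQ : p ^ 2 + q ^ 2 ≤ C) (hb1 : ρ / 4 < a ^ 2 + b ^ 2) (hb2 : a ^ 2 + b ^ 2 < 4 * ρ)
    (hF : F ≤ k)
    (hop : -C * (k * (2 * κ) * |a| + k * (2 * κ) * |b| + F) ≤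
      -k * (4 * κ ^ 2 * (a ^ 2 + b ^ 2 + (q * a - p * b) ^ 2) - 2 * κ * (2 + p ^ 2 + q ^ 2))) :
    False := by
  have hab : |a| + |b| ≤ 1 + 2 * ρ := by
    have h1 : 2 * |a| ≤ 1 + a ^ 2 := by rw [← sq_abs a]; linarith [sq_nonneg (|a| - 1)]
    have h2 : 2 * |b| ≤ 1 + b ^ 2 := by rw [← sq_abs b]; linarith [sq_nonneg (|b| - 1)]
    linarith
  generalize |a| = A at *
  generalize |b| = B at *
  have hκ2 : 0 ≤ κ ^ 2 := by positivity
  have key : 4 * κ ^ 2 * (a ^ 2 + b ^ 2 + (q * a - p * b) ^ 2)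
      - 2 * κ * (2 + p ^ 2 + q ^ 2) ≤ C * (2 * κ * (A + B) + 1) := by
    have h3 : C * F ≤ C * k := mul_le_mul_of_nonneg_left hF hC0
    refine le_of_mul_le_mul_left ?_ hk
    linarith
  have k1 : κ * (κ * ρ) ≤ 4 * κ ^ 2 * (a ^ 2 + b ^ 2 + (q * a - p * b) ^ 2) := by
    have h5 := mul_nonneg hκ2 (sq_nonneg (q * a - p * b))
    have h6 := mul_le_mul_of_nonneg_left hb1.le hκ2
    linarith
  have k2 : 2 * κ * (2 + p ^ 2 + q ^ 2) ≤ κ * (2 * (2 + C)) := by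
    have := mul_le_mul_of_nonneg_left hPQ (by linarith : 0 ≤ 2 * κ)
    linarith
  have k3 : C * (2 * κ * (A + B) + 1) ≤ κ * (C * (2 * (1 + 2 * ρ) + 1)) := by
    have h7 := mul_le_mul_of_nonneg_left hab (by linarith : 0 ≤ 2 * κ)
    have h4 : 2 * κ * (A + B) + 1 ≤ κ * (2 * (1 + 2 * ρ) + 1) := by linarith
    calc _ ≤ C * (κ * (2 * (1 + 2 * ρ) + 1)) := mul_le_mul_of_nonneg_left h4 hC0
      _ = _ := by ring
  have k4 := mul_lt_mul_of_pos_left hκ (by linarith : 0 < κ)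
  linarith

/-- A non-positive subsolution cannot vanish at a boundary point `z` of a disc (centre `y`) on
whose closure it is otherwise negative. -/
theorem hopf_touch {f : ℝ × ℝ → ℝ} {P Q : ℝ × ℝ → ℝ} {z y : ℝ × ℝ} {δ₀ C : ℝ} (hδ₀ : 0 < δ₀)
    (hf : ∀ x ∈ Metric.closedBall z δ₀, ContDiffAt ℝ (2 : ℕ) f x)
    (hle : ∀ x ∈ Metric.closedBall z δ₀, f x ≤ 0) (hz : f z = 0) (hzy : z ≠ y)
    (hneg : ∀ x ∈ Metric.closedBall z δ₀, x ≠ z → sqDist x y ≤ sqDist z y → f x < 0)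
    (hell : ∀ᶠ x in nhds z, P x ^ 2 + Q x ^ 2 ≤ C ∧
      -C * (|pdx f x| + |pdy f x| + |f x|) ≤ aOp (P x) (Q x) f x) : False := by
  set ρ := sqDist z y with hρ
  have hρ0 : 0 < ρ := lt_of_le_of_ne (sqDist_nonneg _ _) fun h => hzy (sqDist_eq_zero h.symm)
  have hC0 : 0 ≤ C := by
    obtain ⟨h, _⟩ := hell.self_of_nhds
    nlinarith [sq_nonneg (P z), sq_nonneg (Q z)]
  have e1 : ∀ᶠ x in nhds z, ρ / 4 < sqDist x y :=
    (continuous_sqDist y).continuousAt.eventually (lt_mem_nhds (by linarith))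
  have e2 : ∀ᶠ x in nhds z, sqDist x y < 4 * ρ :=
    (continuous_sqDist y).continuousAt.eventually (gt_mem_nhds (by linarith))
  obtain ⟨δ₁, hδ₁, hball⟩ := Metric.nhds_basis_closedBall.eventually_iff.1 (hell.and (e1.and e2))
  set δ := min δ₀ δ₁
  have hδ : 0 < δ := lt_min hδ₀ hδ₁
  have hs0 : Metric.closedBall z δ ⊆ Metric.closedBall z δ₀ :=
    Metric.closedBall_subset_closedBall (min_le_left _ _)
  have hs1 : Metric.closedBall z δ ⊆ Metric.closedBall z δ₁ :=
    Metric.closedBall_subset_closedBall (min_le_right _ _)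
  have hcf : ContinuousOn f (Metric.closedBall z δ) := fun x hx =>
    (hf x (hs0 hx)).continuousAt.continuousWithinAt
  obtain ⟨κ, hκ1, hκ⟩ : ∃ κ : ℝ, 1 ≤ κ ∧
      2 * (2 + C) + C * (2 * (1 + 2 * ρ) + 1) < κ * ρ := by
    refine ⟨1 + (2 * (2 + C) + C * (2 * (1 + 2 * ρ) + 1)) / ρ, ?_, ?_⟩
    · have : 0 ≤ (2 * (2 + C) + C * (2 * (1 + 2 * ρ) + 1)) / ρ := by positivity
      linarith
    · rw [add_mul, div_mul_cancel₀ _ hρ0.ne']; linarith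
  -- the part of the small sphere inside the touching disc is compact, so `f ≤ -η` there
  obtain ⟨η, hη, hfη⟩ : ∃ η > 0, ∀ x ∈ Metric.sphere z δ, sqDist x y ≤ ρ → f x ≤ -η := by
    have hcomp : IsCompact (Metric.sphere z δ ∩ {x | sqDist x y ≤ ρ}) :=
      (isCompact_sphere z δ).inter_right (isClosed_le (continuous_sqDist y) continuous_const)
    rcases (Metric.sphere z δ ∩ {x | sqDist x y ≤ ρ}).eq_empty_or_nonempty with he | hne
    · refine ⟨1, one_pos, fun x hx hx' => ?_⟩
      exact absurd (he ▸ (⟨hx, hx'⟩ : x ∈ Metric.sphere z δ ∩ {x | sqDist x y ≤ ρ}))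
        (notMem_empty x)
    · obtain ⟨x₁, hx₁, hmax⟩ := hcomp.exists_isMaxOn hne
        (hcf.mono (inter_subset_left.trans Metric.sphere_subset_closedBall))
      refine ⟨-f x₁, ?_, fun x hx hx' => by simpa using hmax ⟨hx, hx'⟩⟩
      have : f x₁ < 0 := hneg x₁ (hs0 (Metric.sphere_subset_closedBall hx₁.1))
        (fun h => by
          have := hx₁.1; rw [h] at this; simp at this; exact hδ.ne this) hx₁.2
      simpa using this
  set ε := η / 2 with hε2
  have hε : 0 < ε := by positivity
  set m := exp (-κ * ρ)
  set g : ℝ × ℝ → ℝ := fun x => -ε * (exp (-κ * sqDist x y) - m) with hg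
  have hgc : Continuous g := by
    have := continuous_sqDist y
    simp only [hg]; fun_prop
  obtain ⟨x, hx, hmax⟩ := (isCompact_closedBall z δ).exists_isMaxOn
    ⟨z, Metric.mem_closedBall_self hδ.le⟩
    (hcf.sub hgc.continuousOn : ContinuousOn (fun x => f x - g x) _)
  have hval : 0 ≤ f x - g x := by
    have h : f z - g z ≤ f x - g x := hmax (Metric.mem_closedBall_self hδ.le)
    have hgz : g z = 0 := by simp [hg, m, hρ]
    linarith
  have hEpos : 0 < exp (-κ * sqDist x y) := exp_pos _
  have hmpos : 0 < m := exp_pos _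
  have h_int : x ∈ Metric.ball z δ := by
    by_contra hnb
    have hsph : x ∈ Metric.sphere z δ := by
      simp only [Metric.mem_ball, not_lt, Metric.mem_closedBall, Metric.mem_sphere] at *
      exact le_antisymm hx hnb
    rcases le_or_gt (sqDist x y) ρ with hin | hout
    · have h1 := hfη x hsph hin
      have h2 : exp (-κ * sqDist x y) ≤ 1 := exp_le_one_iff.2 (by
        have := sqDist_nonneg x y; nlinarith)
      simp only [hg] at hval
      have h3 := mul_le_mul_of_nonneg_left h2 hε.le
      have h4 := mul_pos hε hmpos
      linarith
    · have h1 := hle x (hs0 hx)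
      have h2 : exp (-κ * sqDist x y) < m := exp_lt_exp.2 (by nlinarith)
      simp only [hg] at hval
      have h3 := mul_lt_mul_of_pos_left h2 hε
      linarith
  have hloc : IsLocalMax (fun x => f x - g x) x :=
    hmax.isLocalMax (Filter.mem_of_superset (Metric.isOpen_ball.mem_nhds h_int)
      Metric.ball_subset_closedBall)
  obtain ⟨hgC, gx, gy, gxx, gxy, gyy⟩ := hopf_barrier κ ε m y x
  obtain ⟨c1, c2, c3⟩ := hloc.compare (hf x (hs0 hx)) hgC
  obtain ⟨⟨hPQ, hop⟩, hb1, hb2⟩ := hball (hs1 hx)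
  have c4 := c3 (P x) (Q x)
  rw [c1, c2, gx, gy] at hop
  set E := exp (-κ * sqDist x y) with hE
  have hfle := hle x (hs0 hx)
  have habsf : |f x| ≤ ε * E := by
    rw [abs_of_nonpos hfle]
    simp only [hg] at hval
    have h4 := mul_pos hε hmpos
    linarith
  set a := x.1 - y.1 with ha
  set b := x.2 - y.2 with hb
  have hN : sqDist x y = a ^ 2 + b ^ 2 := rfl
  rw [hN] at hb1 hb2
  have habs1 : |ε * (2 * κ * a * E)| = ε * E * (2 * κ) * |a| := by
    rw [show ε * (2 * κ * a * E) = (ε * E * (2 * κ)) * a by ring, abs_mul,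
      abs_of_nonneg (by positivity)]
  have habs2 : |ε * (2 * κ * b * E)| = ε * E * (2 * κ) * |b| := by
    rw [show ε * (2 * κ * b * E) = (ε * E * (2 * κ)) * b by ring, abs_mul,
      abs_of_nonneg (by positivity)]
  rw [habs1, habs2] at hop
  have hgop : aOp (P x) (Q x) g x = -(ε * E) *
      (4 * κ ^ 2 * (a ^ 2 + b ^ 2 + (Q x * a - P x * b) ^ 2) - 2 * κ * (2 + P x ^ 2 + Q x ^ 2)) := by
    unfold aOp; rw [gxx, gxy, gyy]; ring
  rw [hgop] at c4
  have hεE : 0 < ε * E := by positivity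
  exact hopf_algebra hκ1 hC0 hεE hκ hPQ hb1 hb2 habsf (hop.trans c4)

/-- **Strong maximum principle** for non-positive subsolutions of
`a^{ij} f_{ij} ≥ -C (|∇f| + |f|)`, where the coefficients are those of the translator operator. -/
theorem strong_max {U : Set (ℝ × ℝ)} (hU : IsOpen U) (hconn : IsPreconnected U)
    {f : ℝ × ℝ → ℝ} (hf : ∀ x ∈ U, ContDiffAt ℝ (2 : ℕ) f x) (P Q : ℝ × ℝ → ℝ)
    (hle : ∀ x ∈ U, f x ≤ 0)
    (hell : ∀ z ∈ U, f z = 0 → ∃ C, ∀ᶠ x in nhds z, P x ^ 2 + Q x ^ 2 ≤ C ∧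
      -C * (|pdx f x| + |pdy f x| + |f x|) ≤ aOp (P x) (Q x) f x)
    {x₀ : ℝ × ℝ} (hx₀ : x₀ ∈ U) (h0 : f x₀ = 0) : ∀ x ∈ U, f x = 0 := by
  have hcf : ContinuousOn f U := fun x hx => (hf x hx).continuousAt.continuousWithinAt
  have hopen : IsOpen {x | x ∈ U ∧ f x = 0} := by
    rw [isOpen_iff_mem_nhds]
    rintro z₀ ⟨hz₀U, hz₀⟩
    by_contra hcon
    obtain ⟨ρ, hρ, hρU⟩ := Metric.nhds_basis_closedBall.mem_iff.1 (hU.mem_nhds hz₀U)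
    -- a point `y` near `z₀` with `f y < 0`
    obtain ⟨y, hy1, hy2⟩ : ∃ y, dist y z₀ < ρ / 8 ∧ f y < 0 := by
      by_contra hno
      push Not at hno
      apply hcon
      filter_upwards [Metric.ball_mem_nhds z₀ (show 0 < ρ / 8 by positivity)] with y hy
      have hyU : y ∈ U := hρU (Metric.mem_closedBall.2 (by
        have := Metric.mem_ball.1 hy; linarith))
      exact ⟨hyU, le_antisymm (hle y hyU) (hno y hy)⟩
    have hcomp : IsCompact {x | x ∈ Metric.closedBall z₀ ρ ∧ f x = 0} := by
      have : IsClosed (Metric.closedBall z₀ ρ ∩ f ⁻¹' {0}) :=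
        (hcf.mono hρU).preimage_isClosed_of_isClosed Metric.isClosed_closedBall isClosed_singleton
      exact (isCompact_closedBall z₀ ρ).of_isClosed_subset this inter_subset_left
    obtain ⟨z, ⟨hzb, hz⟩, hmin⟩ := hcomp.exists_isMinOn
      ⟨z₀, Metric.mem_closedBall_self hρ.le, hz₀⟩ (continuous_sqDist y).continuousOn
    have hle0 : sqDist z y ≤ sqDist z₀ y := hmin ⟨Metric.mem_closedBall_self hρ.le, hz₀⟩
    have hd0 : |y.1 - z₀.1| < ρ / 8 ∧ |y.2 - z₀.2| < ρ / 8 := by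
      rw [Prod.dist_eq, max_lt_iff] at hy1; simpa [Real.dist_eq] using hy1
    have hsq : sqDist z₀ y < ρ ^ 2 / 16 := by
      unfold sqDist
      have h1 := abs_lt.1 hd0.1
      have h2 := abs_lt.1 hd0.2
      nlinarith
    -- every point as close to `y` as `z₀` lies well inside the ball of radius `ρ`
    have hclose : ∀ x, sqDist x y ≤ sqDist z₀ y → dist x z₀ ≤ ρ / 2 := by
      intro x hx
      have hx' := hx.trans hsq.le
      unfold sqDist at hx'
      have h1 : |x.1 - y.1| ≤ ρ / 4 := abs_le_of_sq_le_sq (by nlinarith [sq_nonneg (x.2 - y.2)]) (by positivity)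
      have h2 : |x.2 - y.2| ≤ ρ / 4 := abs_le_of_sq_le_sq (by nlinarith [sq_nonneg (x.1 - y.1)]) (by positivity)
      have h3 := abs_le.1 h1
      have h4 := abs_le.1 h2
      have h5 := abs_lt.1 hd0.1
      have h6 := abs_lt.1 hd0.2
      rw [Prod.dist_eq, max_le_iff, Real.dist_eq, Real.dist_eq, abs_le, abs_le]
      refine ⟨⟨?_, ?_⟩, ⟨?_, ?_⟩⟩ <;> linarith
    have hzU : z ∈ U := hρU hzb
    have hzd := hclose z hle0
    have hzy : z ≠ y := fun h => by rw [h] at hz; linarith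
    -- the disc with diameter from `y` to `z` touches the zero set at `z` only
    set y' : ℝ × ℝ := ((z.1 + y.1) / 2, (z.2 + y.2) / 2) with hy'
    have hzy' : z ≠ y' := by
      intro h
      apply hzy
      have h1 := congrArg Prod.fst h
      have h2 := congrArg Prod.snd h
      simp only [hy'] at h1 h2
      ext <;> linarith
    obtain ⟨C, hC⟩ := hell z hzU hz
    have hsub : Metric.closedBall z (ρ / 4) ⊆ Metric.closedBall z₀ ρ := by
      intro x hx
      have h1 := Metric.mem_closedBall.1 hx
      have := dist_triangle x z z₀
      exact Metric.mem_closedBall.2 (by linarith)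
    refine hopf_touch (y := y') (δ₀ := ρ / 4) (by positivity) (fun x hx => hf x (hρU (hsub hx)))
      (fun x hx => hle x (hρU (hsub hx))) hz hzy' ?_ hC
    intro x hx hxz hxy
    refine lt_of_le_of_ne (hle x (hρU (hsub hx))) fun hfx => ?_
    have h1 : sqDist z y ≤ sqDist x y := hmin ⟨hsub hx, hfx⟩
    apply hxz
    apply sqDist_eq_zero
    refine le_antisymm ?_ (sqDist_nonneg _ _)
    simp only [sqDist, hy'] at *
    nlinarith
  by_contra hcon
  push Not at hcon
  obtain ⟨x₁, hx₁, hne⟩ := hcon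
  have hopen2 : IsOpen {x | x ∈ U ∧ f x ≠ 0} :=
    hcf.isOpen_inter_preimage hU isOpen_compl_singleton
  obtain ⟨x, hxU, h1, h2⟩ := hconn _ _ hopen hopen2 (fun x hx => by
    by_cases h : f x = 0
    · exact Or.inl ⟨hx, h⟩
    · exact Or.inr ⟨hx, h⟩) ⟨x₀, hx₀, hx₀, h0⟩ ⟨x₁, hx₁, hx₁, hne⟩
  exact h2.2 h1.2

/-! ### The maximum principle for the Hessian determinant -/

/-- The polynomial identity behind the maximum principle for `D = det D²u`. Here `(p, q)`,
`(r, s, t)`, `α i`, `b i` stand for the derivatives of `u` of order one to four; the hypotheses are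
the translator equation differentiated up to twice. -/
theorem det_identity {p q r s t α₀ α₁ α₂ α₃ b₀ b₁ b₂ b₃ b₄ D d₁ d₂ A e k₁ k₂ : ℝ}
    (hE : (1 + q ^ 2) * r - 2 * p * q * s + (1 + p ^ 2) * t = 1 + p ^ 2 + q ^ 2)
    (hEx : (1 + q ^ 2) * α₀ - 2 * p * q * α₁ + (1 + p ^ 2) * α₂
      + 2 * q * s * r - 2 * (r * q + p * s) * s + 2 * p * r * t = 2 * (p * r + q * s))
    (hEy : (1 + q ^ 2) * α₁ - 2 * p * q * α₂ + (1 + p ^ 2) * α₃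
      + 2 * q * t * r - 2 * (s * q + p * t) * s + 2 * p * s * t = 2 * (p * s + q * t))
    (hD : D = r * t - s ^ 2)
    (hd₁ : d₁ = t * α₀ - 2 * s * α₁ + r * α₂) (hd₂ : d₂ = t * α₁ - 2 * s * α₂ + r * α₃)
    (hExx : (1 + q ^ 2) * b₀ - 2 * p * q * b₁ + (1 + p ^ 2) * b₂
      + 2 * q * s * α₀ - 2 * (r * q + p * s) * α₁ + 2 * p * r * α₂
      + 2 * r * D + 2 * p * d₁ = 2 * (r ^ 2 + s ^ 2 + p * α₀ + q * α₁))
    (hExy : (1 + q ^ 2) * b₁ - 2 * p * q * b₂ + (1 + p ^ 2) * b₃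
      + 2 * q * t * α₀ - 2 * (s * q + p * t) * α₁ + 2 * p * s * α₂
      + 2 * s * D + 2 * p * d₂ = 2 * (r * s + s * t + p * α₁ + q * α₂))
    (hEyy : (1 + q ^ 2) * b₂ - 2 * p * q * b₃ + (1 + p ^ 2) * b₄
      + 2 * q * t * α₁ - 2 * (s * q + p * t) * α₂ + 2 * p * s * α₃
      + 2 * t * D + 2 * q * d₂ = 2 * (s ^ 2 + t ^ 2 + p * α₂ + q * α₃))
    (hA : A = (1 + q ^ 2) * r ^ 2 - 2 * p * q * r * s + (1 + p ^ 2) * s ^ 2)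
    (he : e = 2 * (q - r * q + s * p))
    (hk₁ : k₁ = (-2 * p * q * r + (1 + p ^ 2) * s)) (hk₂ : k₂ = (1 + p ^ 2) * r) :
    A * r ^ 2 * ((1 + q ^ 2) * (b₀ * t + 2 * α₀ * α₂ + r * b₂ - 2 * α₁ ^ 2 - 2 * s * b₁)
      - 2 * p * q * (b₁ * t + α₀ * α₃ - α₁ * α₂ + r * b₃ - 2 * s * b₂)
      + (1 + p ^ 2) * (b₂ * t + 2 * α₁ * α₃ + r * b₄ - 2 * α₂ ^ 2 - 2 * s * b₃))
    = (A * r ^ 2 * (2 * p - 2 * p * t + 2 * q * s)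
        + 2 * (1 + p ^ 2 + q ^ 2) * (k₁ * r * α₁ + (1 + q ^ 2) * r ^ 2 * α₀)
        - 2 * A * r * (-p * q * α₁ + (1 + p ^ 2) * α₂)) * d₁
      + (A * r ^ 2 * (2 * q - 2 * q * r + 2 * p * s)
        + 2 * (1 + p ^ 2 + q ^ 2) * (k₂ * r * α₁ - k₂ * s * α₀)
        + 2 * A * r * (-p * q * α₀ + (1 + p ^ 2) * α₁)) * d₂
      + (A * r ^ 2 * (2 * (r + t) - 4 * D)
        + 2 * (1 + p ^ 2 + q ^ 2) * (-(r ^ 2 * e + k₁ * α₀ + k₂ * α₁) * α₁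
          + (r * s * e - (1 + q ^ 2) * r * α₀ + (1 + p ^ 2) * s * α₁) * α₀)) * D := by
  -- `y₁₀, y₁₁, y₃₁` are the components of `r ∇²` rotated into the kernel direction of `D²u`
  have hy : ∀ y₁₀ y₁₁ y₃₁ : ℝ, y₁₀ = -s * α₀ + r * α₁ → y₁₁ = -s * α₁ + r * α₂ →
      y₃₁ = -s * α₂ + r * α₃ →
      A * y₁₀ = r ^ 2 * (e * D) - k₁ * (r * d₁ - D * α₀) - k₂ * (r * d₂ - D * α₁) ∧
      A * y₁₁ = r * s * (e * D) + (1 + q ^ 2) * r * (r * d₁ - D * α₀)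
        - (1 + p ^ 2) * s * (r * d₂ - D * α₁) := by
    intro y₁₀ y₁₁ y₃₁ h10 h11 h31
    have f1 : r * y₁₁ - s * y₁₀ = r * d₁ - D * α₀ := by rw [h10, h11, hd₁, hD]; ring
    have f2 : r * y₃₁ = r * d₂ - D * α₁ + s * y₁₁ := by rw [h31, h11, hd₂, hD]; ring
    have f3 : (1 + q ^ 2) * y₁₀ - 2 * p * q * y₁₁ + (1 + p ^ 2) * y₃₁ = e * D := by
      rw [h10, h11, h31, he, hD]
      linear_combination (-s) * hEx + r * hEy
    rw [hA, hk₁, hk₂, ← f1, ← f3, show r * d₂ - D * α₁ = r * y₃₁ - s * y₁₁ by linarith]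
    constructor <;> ring
  obtain ⟨g1, g2⟩ := hy _ _ _ rfl rfl rfl
  have hQ : r * ((1 + q ^ 2) * (α₀ * α₂ - α₁ ^ 2) - p * q * (α₀ * α₃ - α₁ * α₂)
      + (1 + p ^ 2) * (α₁ * α₃ - α₂ ^ 2)) =
      (1 + p ^ 2 + q ^ 2) * (α₀ * α₂ - α₁ ^ 2) + p * q * (d₁ * α₁ - d₂ * α₀)
        - (1 + p ^ 2) * (d₁ * α₂ - d₂ * α₁) := by
    rw [hd₁, hd₂]
    linear_combination (α₀ * α₂ - α₁ ^ 2) * hE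
  have hL : (1 + q ^ 2) * (b₀ * t + r * b₂ - 2 * s * b₁)
      - 2 * p * q * (b₁ * t + r * b₃ - 2 * s * b₂)
      + (1 + p ^ 2) * (b₂ * t + r * b₄ - 2 * s * b₃)
      = (2 * p - 2 * p * t + 2 * q * s) * d₁ + (2 * q - 2 * q * r + 2 * p * s) * d₂
        + (2 * (r + t) - 4 * D) * D := by
    rw [hd₁, hd₂, hD] at *
    linear_combination t * hExx - 2 * s * hExy + r * hEyy
  linear_combination A * r ^ 2 * hL + 2 * A * r * hQ
    + 2 * (1 + p ^ 2 + q ^ 2) * (α₀ * g2 - α₁ * g1)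
    + 2 * (1 + p ^ 2 + q ^ 2) * α₀ * s * d₂ * hk₂

/-- The Hessian determinant of `u`. -/
def hdet (u : ℝ × ℝ → ℝ) (x : ℝ × ℝ) : ℝ :=
  pdx (pdx u) x * pdy (pdy u) x - (pdy (pdx u) x) ^ 2

/-- `p, q, …, α₃` are functions whose gradients chain as the derivatives up to order three of a
single function. -/
structure Jet (p q r s t α₀ α₁ α₂ α₃ b₀ b₁ b₂ b₃ b₄ : ℝ × ℝ → ℝ) (x : ℝ × ℝ) : Prop where
  p : HasGrad p (r x) (s x) x
  q : HasGrad q (s x) (t x) x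
  r : HasGrad r (α₀ x) (α₁ x) x
  s : HasGrad s (α₁ x) (α₂ x) x
  t : HasGrad t (α₂ x) (α₃ x) x
  α₀ : HasGrad α₀ (b₀ x) (b₁ x) x
  α₁ : HasGrad α₁ (b₁ x) (b₂ x) x
  α₂ : HasGrad α₂ (b₂ x) (b₃ x) x
  α₃ : HasGrad α₃ (b₃ x) (b₄ x) x

theorem hasGrad_pd {f : ℝ × ℝ → ℝ} {x : ℝ × ℝ} (h : ContDiffAt ℝ (2 : ℕ) f x) :
    HasGrad (pdx f) (pdx (pdx f) x) (pdy (pdx f) x) x ∧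
    HasGrad (pdy f) (pdy (pdx f) x) (pdy (pdy f) x) x := by
  refine ⟨(contDiffAt_pdx (n := 1) h).hasGrad (n := 0), ?_⟩
  have := (contDiffAt_pdy (n := 1) h).hasGrad (n := 0)
  rwa [pdx_pdy_comm h] at this

theorem pd_congr {f g : ℝ × ℝ → ℝ} {x : ℝ × ℝ} (h : f =ᶠ[nhds x] g) :
    pdx f =ᶠ[nhds x] pdx g ∧ pdy f =ᶠ[nhds x] pdy g := by
  constructor
  · filter_upwards [h.fderiv (𝕜 := ℝ)] with y hy using by simp [pdx, hy]
  · filter_upwards [h.fderiv (𝕜 := ℝ)] with y hy using by simp [pdy, hy]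

theorem exists_jet {u : ℝ × ℝ → ℝ} {x : ℝ × ℝ} (h : ContDiffAt ℝ (4 : ℕ) u x) :
    Jet (pdx u) (pdy u) (pdx (pdx u)) (pdy (pdx u)) (pdy (pdy u))
      (pdx (pdx (pdx u))) (pdy (pdx (pdx u))) (pdy (pdy (pdx u))) (pdy (pdy (pdy u)))
      (pdx (pdx (pdx (pdx u)))) (pdy (pdx (pdx (pdx u)))) (pdy (pdy (pdx (pdx u))))
      (pdy (pdy (pdy (pdx u)))) (pdy (pdy (pdy (pdy u)))) x := by
  have hx := contDiffAt_pdx (n := 3) h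
  have hy := contDiffAt_pdy (n := 3) h
  have hxx := contDiffAt_pdx (n := 2) hx
  have hxy := contDiffAt_pdy (n := 2) hx
  have hyy := contDiffAt_pdy (n := 2) hy
  have c0 : pdx (pdy u) =ᶠ[nhds x] pdy (pdx u) := by
    filter_upwards [h.ev] with y hy using pdx_pdy_comm (hy.of_le (by norm_num))
  have cx : pdx (pdy (pdx u)) =ᶠ[nhds x] pdy (pdx (pdx u)) := by
    filter_upwards [hx.ev] with y hy using pdx_pdy_comm (hy.of_le (by norm_num))
  have cy : pdx (pdy (pdy u)) =ᶠ[nhds x] pdy (pdy (pdx u)) := by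
    filter_upwards [hy.ev, (pd_congr c0).2] with y hy h0
    rw [← h0, pdx_pdy_comm (hy.of_le (by norm_num))]
  have e2 : pdy (pdx (pdy (pdx u))) x = pdy (pdy (pdx (pdx u))) x := (pd_congr cx).2.self_of_nhds
  have e3 : pdy (pdx (pdy (pdy u))) x = pdy (pdy (pdy (pdx u))) x := (pd_congr cy).2.self_of_nhds
  refine ⟨(hasGrad_pd (h.of_le (by norm_num))).1, (hasGrad_pd (h.of_le (by norm_num))).2,
    (hasGrad_pd (hx.of_le (by norm_num))).1, (hasGrad_pd (hx.of_le (by norm_num))).2, ?_,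
    (hasGrad_pd hxx).1, (hasGrad_pd hxx).2, ?_, ?_⟩
  · exact (hasGrad_pd (hy.of_le (by norm_num))).2.congr_val
      ((pd_congr c0).2.self_of_nhds) rfl
  · exact (hasGrad_pd hxy).2.congr_val e2 rfl
  · exact (hasGrad_pd hyy).2.congr_val e3 rfl

theorem HasGrad.eq_zero {f : ℝ × ℝ → ℝ} {a b c : ℝ} {x : ℝ × ℝ} (h : HasGrad f a b x)
    (h0 : ∀ᶠ y in nhds x, f y = c) : a = 0 ∧ b = 0 := by
  have h1 := (HasGrad.const (p := x) c).congr_fun h0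
  exact ⟨h.pdx_eq.symm.trans h1.pdx_eq, h.pdy_eq.symm.trans h1.pdy_eq⟩

/-- All the relations needed in `det_identity`. -/
theorem jet_relations {p q r s t α₀ α₁ α₂ α₃ b₀ b₁ b₂ b₃ b₄ : ℝ × ℝ → ℝ} {x : ℝ × ℝ}
    (hj : ∀ᶠ y in nhds x, Jet p q r s t α₀ α₁ α₂ α₃ b₀ b₁ b₂ b₃ b₄ y)
    (hE : ∀ᶠ y in nhds x, (1 + q y ^ 2) * r y - 2 * p y * q y * s y + (1 + p y ^ 2) * t y
      = 1 + p y ^ 2 + q y ^ 2) :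
    (∀ᶠ y in nhds x, ((1 + q y ^ 2) * α₀ y - 2 * p y * q y * α₁ y + (1 + p y ^ 2) * α₂ y
      + 2 * q y * s y * r y - 2 * (r y * q y + p y * s y) * s y + 2 * p y * r y * t y
        = 2 * (p y * r y + q y * s y))) ∧
    (∀ᶠ y in nhds x, ((1 + q y ^ 2) * α₁ y - 2 * p y * q y * α₂ y + (1 + p y ^ 2) * α₃ y
      + 2 * q y * t y * r y - 2 * (s y * q y + p y * t y) * s y + 2 * p y * s y * t y
        = 2 * (p y * s y + q y * t y))) := by
  rw [← eventually_and]
  filter_upwards [hj, hE.eventually_nhds] with y hy hEy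
  have hq2 := hy.q.mul hy.q
  have hp2 := hy.p.mul hy.p
  have h := (((((HasGrad.const 1).add hq2).mul hy.r).sub
    (((hy.p.mul hy.q).mul hy.s).const_mul 2)).add
    (((HasGrad.const 1).add hp2).mul hy.t)).sub (((HasGrad.const 1).add hp2).add hq2)
  have h' := h.eq_zero (c := 0) (hEy.mono fun z hz => by linear_combination hz)
  exact ⟨by linear_combination h'.1, by linear_combination h'.2⟩

theorem jet_relations2 {p q r s t α₀ α₁ α₂ α₃ b₀ b₁ b₂ b₃ b₄ : ℝ × ℝ → ℝ} {x : ℝ × ℝ}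
    (hj : Jet p q r s t α₀ α₁ α₂ α₃ b₀ b₁ b₂ b₃ b₄ x)
    (hEx : ∀ᶠ y in nhds x, ((1 + q y ^ 2) * α₀ y - 2 * p y * q y * α₁ y + (1 + p y ^ 2) * α₂ y
      + 2 * q y * s y * r y - 2 * (r y * q y + p y * s y) * s y + 2 * p y * r y * t y
        = 2 * (p y * r y + q y * s y)))
    (hEy : ∀ᶠ y in nhds x, ((1 + q y ^ 2) * α₁ y - 2 * p y * q y * α₂ y + (1 + p y ^ 2) * α₃ y
      + 2 * q y * t y * r y - 2 * (s y * q y + p y * t y) * s y + 2 * p y * s y * t y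
        = 2 * (p y * s y + q y * t y))) :
    let D := r x * t x - s x ^ 2
    let d₁ := t x * α₀ x - 2 * s x * α₁ x + r x * α₂ x
    let d₂ := t x * α₁ x - 2 * s x * α₂ x + r x * α₃ x
    ((1 + q x ^ 2) * b₀ x - 2 * p x * q x * b₁ x + (1 + p x ^ 2) * b₂ x
      + 2 * q x * s x * α₀ x - 2 * (r x * q x + p x * s x) * α₁ x + 2 * p x * r x * α₂ x
      + 2 * r x * D + 2 * p x * d₁ = 2 * (r x ^ 2 + s x ^ 2 + p x * α₀ x + q x * α₁ x)) ∧
    ((1 + q x ^ 2) * b₁ x - 2 * p x * q x * b₂ x + (1 + p x ^ 2) * b₃ x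
      + 2 * q x * t x * α₀ x - 2 * (s x * q x + p x * t x) * α₁ x + 2 * p x * s x * α₂ x
      + 2 * s x * D + 2 * p x * d₂ = 2 * (r x * s x + s x * t x + p x * α₁ x + q x * α₂ x)) ∧
    ((1 + q x ^ 2) * b₁ x - 2 * p x * q x * b₂ x + (1 + p x ^ 2) * b₃ x
      + 2 * q x * s x * α₁ x - 2 * (s x * p x + q x * r x) * α₂ x + 2 * p x * r x * α₃ x
      + 2 * s x * D + 2 * q x * d₁ = 2 * (r x * s x + s x * t x + p x * α₁ x + q x * α₂ x)) ∧
    ((1 + q x ^ 2) * b₂ x - 2 * p x * q x * b₃ x + (1 + p x ^ 2) * b₄ x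
      + 2 * q x * t x * α₁ x - 2 * (s x * q x + p x * t x) * α₂ x + 2 * p x * s x * α₃ x
      + 2 * t x * D + 2 * q x * d₂ = 2 * (s x ^ 2 + t x ^ 2 + p x * α₂ x + q x * α₃ x)) := by
  intro D d₁ d₂
  obtain ⟨hp, hq, hr, hs, ht, h0, h1, h2, h3⟩ := hj
  have hq2 := (HasGrad.const (p := x) 1).add (hq.mul hq)
  have hp2 := (HasGrad.const (p := x) 1).add (hp.mul hp)
  have hpq := hp.mul hq
  have hD := (hr.mul ht).sub (hs.mul hs)
  have kx := ((((((hq2.mul h0).sub ((hpq.mul h1).const_mul 2)).add (hp2.mul h2)).add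
    ((hp.mul hD).const_mul 2)).sub (((hp.mul hr).add (hq.mul hs)).const_mul 2))).eq_zero (c := 0)
    (hEx.mono fun z hz => by linear_combination hz)
  have ky := ((((((hq2.mul h1).sub ((hpq.mul h2).const_mul 2)).add (hp2.mul h3)).add
    ((hq.mul hD).const_mul 2)).sub (((hp.mul hs).add (hq.mul ht)).const_mul 2))).eq_zero (c := 0)
    (hEy.mono fun z hz => by linear_combination hz)
  refine ⟨?_, ?_, ?_, ?_⟩
  · linear_combination kx.1
  · linear_combination kx.2
  · linear_combination ky.1
  · linear_combination ky.2

/-- The translator equation and its derivatives up to order two, at one point. The mixed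
second derivative occurs in two forms, which makes the relation invariant under `x ↔ y`. -/
structure JetRel (p q r s t α₀ α₁ α₂ α₃ b₀ b₁ b₂ b₃ b₄ : ℝ) : Prop where
  E : (1 + q ^ 2) * r - 2 * p * q * s + (1 + p ^ 2) * t = 1 + p ^ 2 + q ^ 2
  Ex : (1 + q ^ 2) * α₀ - 2 * p * q * α₁ + (1 + p ^ 2) * α₂
      + 2 * q * s * r - 2 * (r * q + p * s) * s + 2 * p * r * t = 2 * (p * r + q * s)
  Ey : (1 + q ^ 2) * α₁ - 2 * p * q * α₂ + (1 + p ^ 2) * α₃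
      + 2 * q * t * r - 2 * (s * q + p * t) * s + 2 * p * s * t = 2 * (p * s + q * t)
  Exx : (1 + q ^ 2) * b₀ - 2 * p * q * b₁ + (1 + p ^ 2) * b₂
      + 2 * q * s * α₀ - 2 * (r * q + p * s) * α₁ + 2 * p * r * α₂
      + 2 * r * (r * t - s ^ 2) + 2 * p * (t * α₀ - 2 * s * α₁ + r * α₂)
      = 2 * (r ^ 2 + s ^ 2 + p * α₀ + q * α₁)
  Exy : (1 + q ^ 2) * b₁ - 2 * p * q * b₂ + (1 + p ^ 2) * b₃
      + 2 * q * t * α₀ - 2 * (s * q + p * t) * α₁ + 2 * p * s * α₂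
      + 2 * s * (r * t - s ^ 2) + 2 * p * (t * α₁ - 2 * s * α₂ + r * α₃)
      = 2 * (r * s + s * t + p * α₁ + q * α₂)
  Eyx : (1 + q ^ 2) * b₁ - 2 * p * q * b₂ + (1 + p ^ 2) * b₃
      + 2 * q * s * α₁ - 2 * (s * p + q * r) * α₂ + 2 * p * r * α₃
      + 2 * s * (r * t - s ^ 2) + 2 * q * (t * α₀ - 2 * s * α₁ + r * α₂)
      = 2 * (r * s + s * t + p * α₁ + q * α₂)
  Eyy : (1 + q ^ 2) * b₂ - 2 * p * q * b₃ + (1 + p ^ 2) * b₄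
      + 2 * q * t * α₁ - 2 * (s * q + p * t) * α₂ + 2 * p * s * α₃
      + 2 * t * (r * t - s ^ 2) + 2 * q * (t * α₁ - 2 * s * α₂ + r * α₃)
      = 2 * (s ^ 2 + t ^ 2 + p * α₂ + q * α₃)

theorem JetRel.swap {p q r s t α₀ α₁ α₂ α₃ b₀ b₁ b₂ b₃ b₄ : ℝ}
    (h : JetRel p q r s t α₀ α₁ α₂ α₃ b₀ b₁ b₂ b₃ b₄) :
    JetRel q p t s r α₃ α₂ α₁ α₀ b₄ b₃ b₂ b₁ b₀ := by
  obtain ⟨h1, h2, h3, h4, h5, h6, h7⟩ := h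
  exact ⟨by linear_combination h1, by linear_combination h3, by linear_combination h2,
    by linear_combination h7, by linear_combination h6, by linear_combination h5,
    by linear_combination h4⟩

/-- Second-order operator applied to the determinant, in terms of the jet. -/
def detOp (p q r s t α₀ α₁ α₂ α₃ b₀ b₁ b₂ b₃ b₄ : ℝ) : ℝ :=
  (1 + q ^ 2) * (b₀ * t + 2 * α₀ * α₂ + r * b₂ - 2 * α₁ ^ 2 - 2 * s * b₁)
      - 2 * p * q * (b₁ * t + α₀ * α₃ - α₁ * α₂ + r * b₃ - 2 * s * b₂)
      + (1 + p ^ 2) * (b₂ * t + 2 * α₁ * α₃ + r * b₄ - 2 * α₂ ^ 2 - 2 * s * b₃)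

theorem eventually_abs_le {g : ℝ × ℝ → ℝ} {z : ℝ × ℝ} (h : ContinuousAt g z) :
    ∀ᶠ y in nhds z, |g y| ≤ |g z| + 1 := by
  have := (continuous_abs.continuousAt.comp h).eventually (gt_mem_nhds (lt_add_one |g z|))
  exact this.mono fun y hy => le_of_lt hy

theorem div_combine {k N₁ N₂ N₃ d₁ d₂ d₃ x : ℝ} (hk : k ≠ 0)
    (h : k * x = N₁ * d₁ + N₂ * d₂ + N₃ * d₃) : x = N₁ / k * d₁ + N₂ / k * d₂ + N₃ / k * d₃ := by
  field_simp; linarith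

theorem rel_bound {p q r s t α₀ α₁ α₂ α₃ b₀ b₁ b₂ b₃ b₄ : ℝ × ℝ → ℝ} {z : ℝ × ℝ}
    (hrel : ∀ᶠ y in nhds z, JetRel (p y) (q y) (r y) (s y) (t y) (α₀ y) (α₁ y) (α₂ y) (α₃ y)
      (b₀ y) (b₁ y) (b₂ y) (b₃ y) (b₄ y))
    (hp : ContinuousAt p z) (hq : ContinuousAt q z) (hr : ContinuousAt r z)
    (hs : ContinuousAt s z) (ht : ContinuousAt t z) (h0 : ContinuousAt α₀ z)
    (h1 : ContinuousAt α₁ z) (h2 : ContinuousAt α₂ z) (hr0 : r z ≠ 0) :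
    ∃ C, ∀ᶠ y in nhds z, |detOp (p y) (q y) (r y) (s y) (t y) (α₀ y) (α₁ y) (α₂ y) (α₃ y)
      (b₀ y) (b₁ y) (b₂ y) (b₃ y) (b₄ y)| ≤
      C * (|t y * α₀ y - 2 * s y * α₁ y + r y * α₂ y| + |t y * α₁ y - 2 * s y * α₂ y + r y * α₃ y|
        + |r y * t y - s y ^ 2|) := by
  set A : ℝ × ℝ → ℝ := fun y => (1 + q y ^ 2) * r y ^ 2 - 2 * p y * q y * r y * s y
    + (1 + p y ^ 2) * s y ^ 2 with hA
  have hAc : ContinuousAt A z := by simp only [hA]; fun_prop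
  have hApos : ∀ y, r y ≠ 0 → A y * r y ^ 2 ≠ 0 := by
    intro y hy
    have : A y = r y ^ 2 + s y ^ 2 + (q y * r y - p y * s y) ^ 2 := by simp only [hA]; ring
    have : 0 < A y := by rw [this]; positivity
    positivity
  set c₁ : ℝ × ℝ → ℝ := fun y => (A y * r y ^ 2 * (2 * p y - 2 * p y * t y + 2 * q y * s y)
        + 2 * (1 + p y ^ 2 + q y ^ 2) * ((-2 * p y * q y * r y + (1 + p y ^ 2) * s y) * r y * α₁ y
          + (1 + q y ^ 2) * r y ^ 2 * α₀ y)
        - 2 * A y * r y * (-p y * q y * α₁ y + (1 + p y ^ 2) * α₂ y)) / (A y * r y ^ 2) with hc₁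
  set c₂ : ℝ × ℝ → ℝ := fun y => (A y * r y ^ 2 * (2 * q y - 2 * q y * r y + 2 * p y * s y)
        + 2 * (1 + p y ^ 2 + q y ^ 2) * ((1 + p y ^ 2) * r y * r y * α₁ y
          - (1 + p y ^ 2) * r y * s y * α₀ y)
        + 2 * A y * r y * (-p y * q y * α₀ y + (1 + p y ^ 2) * α₁ y)) / (A y * r y ^ 2) with hc₂
  set c₃ : ℝ × ℝ → ℝ := fun y => (A y * r y ^ 2 * (2 * (r y + t y) - 4 * (r y * t y - s y ^ 2))
        + 2 * (1 + p y ^ 2 + q y ^ 2) * (-(r y ^ 2 * (2 * (q y - r y * q y + s y * p y))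
            + (-2 * p y * q y * r y + (1 + p y ^ 2) * s y) * α₀ y + (1 + p y ^ 2) * r y * α₁ y)
            * α₁ y
          + (r y * s y * (2 * (q y - r y * q y + s y * p y)) - (1 + q y ^ 2) * r y * α₀ y
            + (1 + p y ^ 2) * s y * α₁ y) * α₀ y)) / (A y * r y ^ 2) with hc₃
  have k1 : ContinuousAt c₁ z := by
    simp only [hc₁]; exact ContinuousAt.div (by fun_prop) (by fun_prop) (hApos z hr0)
  have k2 : ContinuousAt c₂ z := by
    simp only [hc₂]; exact ContinuousAt.div (by fun_prop) (by fun_prop) (hApos z hr0)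
  have k3 : ContinuousAt c₃ z := by
    simp only [hc₃]; exact ContinuousAt.div (by fun_prop) (by fun_prop) (hApos z hr0)
  set C := max (|c₁ z| + 1) (max (|c₂ z| + 1) (|c₃ z| + 1))
  refine ⟨C, ?_⟩
  filter_upwards [hrel, hr.eventually_ne hr0, eventually_abs_le k1, eventually_abs_le k2,
    eventually_abs_le k3] with y hy hry e1 e2 e3
  have hne := hApos y hry
  have id := det_identity hy.E hy.Ex hy.Ey rfl rfl rfl hy.Exx hy.Exy hy.Eyy
    (A := A y) rfl rfl rfl rfl
  have hop : detOp (p y) (q y) (r y) (s y) (t y) (α₀ y) (α₁ y) (α₂ y) (α₃ y)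
      (b₀ y) (b₁ y) (b₂ y) (b₃ y) (b₄ y) = c₁ y * (t y * α₀ y - 2 * s y * α₁ y + r y * α₂ y)
      + c₂ y * (t y * α₁ y - 2 * s y * α₂ y + r y * α₃ y) + c₃ y * (r y * t y - s y ^ 2) := by
    exact div_combine hne id
  rw [hop]
  refine (abs_add_three _ _ _).trans ?_
  rw [abs_mul, abs_mul, abs_mul, mul_add, mul_add]
  gcongr
  · exact e1.trans (le_max_left _ _)
  · exact e2.trans ((le_max_left _ _).trans (le_max_right _ _))
  · exact e3.trans ((le_max_right _ _).trans (le_max_right _ _))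

/-- Near a zero of `det D²u` the determinant satisfies an elliptic differential inequality to which
the strong maximum principle applies. -/
theorem det_elliptic {u : ℝ × ℝ → ℝ} {z : ℝ × ℝ} (h : ContDiffAt ℝ (4 : ℕ) u z)
    (hE : ∀ᶠ x in nhds z, (1 + (pdy u x) ^ 2) * pdx (pdx u) x
      - 2 * pdx u x * pdy u x * pdy (pdx u) x + (1 + (pdx u x) ^ 2) * pdy (pdy u) x
      = 1 + (pdx u x) ^ 2 + (pdy u x) ^ 2) (hD : hdet u z = 0) :
    ∃ C, ∀ᶠ x in nhds z, pdx u x ^ 2 + pdy u x ^ 2 ≤ C ∧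
      -C * (|pdx (hdet u) x| + |pdy (hdet u) x| + |hdet u x|) ≤
        aOp (pdx u x) (pdy u x) (hdet u) x := by
  have hj := h.ev.mono fun y hy => exists_jet hy
  have hj0 := hj.self_of_nhds
  obtain ⟨hEx, hEy⟩ := jet_relations hj hE
  have hrel : ∀ᶠ y in nhds z, JetRel (pdx u y) (pdy u y) (pdx (pdx u) y) (pdy (pdx u) y)
      (pdy (pdy u) y) (pdx (pdx (pdx u)) y) (pdy (pdx (pdx u)) y) (pdy (pdy (pdx u)) y)
      (pdy (pdy (pdy u)) y) (pdx (pdx (pdx (pdx u))) y) (pdy (pdx (pdx (pdx u))) y)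
      (pdy (pdy (pdx (pdx u))) y) (pdy (pdy (pdy (pdx u))) y) (pdy (pdy (pdy (pdy u))) y) := by
    filter_upwards [hj, hE, hEx, hEy, hEx.eventually_nhds, hEy.eventually_nhds]
      with y jy e0 e1 e2 e3 e4
    obtain ⟨r1, r2, r3, r4⟩ := jet_relations2 jy e3 e4
    exact ⟨e0, e1, e2, r1, r2, r3, r4⟩
  have hDg : ∀ᶠ y in nhds z, HasGrad (hdet u)
      (pdy (pdy u) y * pdx (pdx (pdx u)) y - 2 * pdy (pdx u) y * pdy (pdx (pdx u)) y
        + pdx (pdx u) y * pdy (pdy (pdx u)) y)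
      (pdy (pdy u) y * pdy (pdx (pdx u)) y - 2 * pdy (pdx u) y * pdy (pdy (pdx u)) y
        + pdx (pdx u) y * pdy (pdy (pdy u)) y) y := by
    filter_upwards [hj] with y jy
    have e : hdet u = fun x => pdx (pdx u) x * pdy (pdy u) x - pdy (pdx u) x * pdy (pdx u) x := by
      funext x; simp [hdet, sq]
    rw [e]
    refine ((jy.r.mul jy.t).sub (jy.s.mul jy.s)).congr_val ?_ ?_ <;> ring
  have hop : ∀ᶠ y in nhds z, aOp (pdx u y) (pdy u y) (hdet u) y =
      detOp (pdx u y) (pdy u y) (pdx (pdx u) y) (pdy (pdx u) y)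
      (pdy (pdy u) y) (pdx (pdx (pdx u)) y) (pdy (pdx (pdx u)) y) (pdy (pdy (pdx u)) y)
      (pdy (pdy (pdy u)) y) (pdx (pdx (pdx (pdx u))) y) (pdy (pdx (pdx (pdx u))) y)
      (pdy (pdy (pdx (pdx u))) y) (pdy (pdy (pdy (pdx u))) y) (pdy (pdy (pdy (pdy u))) y) := by
    filter_upwards [hj, hDg.eventually_nhds] with y jy hy
    have hs := HasGrad.second hy
      (((jy.t.mul jy.α₀).sub ((jy.s.const_mul 2).mul jy.α₁)).add (jy.r.mul jy.α₂))
      (((jy.t.mul jy.α₁).sub ((jy.s.const_mul 2).mul jy.α₂)).add (jy.r.mul jy.α₃))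
    unfold aOp detOp
    rw [hs.1, hs.2.1, hs.2.2.2]
    ring
  have hor : pdx (pdx u) z ≠ 0 ∨ pdy (pdy u) z ≠ 0 := by
    by_contra hcon
    push Not at hcon
    have h0 := hE.self_of_nhds
    have hs : pdy (pdx u) z = 0 := by
      have := hD; unfold hdet at this; rw [hcon.1] at this; simpa using this
    rw [hcon.1, hcon.2, hs] at h0
    nlinarith [sq_nonneg (pdx u z), sq_nonneg (pdy u z)]
  have hb : ∃ C, ∀ᶠ y in nhds z, |aOp (pdx u y) (pdy u y) (hdet u) y| ≤
      C * (|pdx (hdet u) y| + |pdy (hdet u) y| + |hdet u y|) := by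
    rcases hor with h1 | h1
    · obtain ⟨C, hC⟩ := rel_bound hrel hj0.p.continuousAt hj0.q.continuousAt hj0.r.continuousAt
        hj0.s.continuousAt hj0.t.continuousAt hj0.α₀.continuousAt hj0.α₁.continuousAt
        hj0.α₂.continuousAt h1
      refine ⟨C, ?_⟩
      filter_upwards [hC, hop, hDg] with y e1 e2 e3
      rw [e2, e3.pdx_eq, e3.pdy_eq]
      exact e1
    · obtain ⟨C, hC⟩ := rel_bound (hrel.mono fun _ h => h.swap) hj0.q.continuousAt
        hj0.p.continuousAt hj0.t.continuousAt
        hj0.s.continuousAt hj0.r.continuousAt hj0.α₃.continuousAt hj0.α₂.continuousAt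
        hj0.α₁.continuousAt h1
      refine ⟨C, ?_⟩
      filter_upwards [hC, hop, hDg] with y e1 e2 e3
      rw [e2, e3.pdx_eq, e3.pdy_eq]
      convert e1 using 2
      · unfold detOp; ring
      · unfold hdet; ring_nf
  obtain ⟨C, hC⟩ := hb
  set B : ℝ := |pdx u z ^ 2 + pdy u z ^ 2| + 1
  have hcont : ContinuousAt (fun y => pdx u y ^ 2 + pdy u y ^ 2) z :=
    (hj0.p.continuousAt.pow 2).add (hj0.q.continuousAt.pow 2)
  refine ⟨max B C, ?_⟩
  filter_upwards [hC, eventually_abs_le hcont] with y e1 e2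
  refine ⟨(le_abs_self _).trans (e2.trans (le_max_left _ _)), ?_⟩
  have h1 := neg_abs_le (aOp (pdx u y) (pdy u y) (hdet u) y)
  have h2 : C * (|pdx (hdet u) y| + |pdy (hdet u) y| + |hdet u y|) ≤
      max B C * (|pdx (hdet u) y| + |pdy (hdet u) y| + |hdet u y|) :=
    mul_le_mul_of_nonneg_right (le_max_right _ _) (by positivity)
  linarith

theorem contDiffAt_hdet {u : ℝ × ℝ → ℝ} {x : ℝ × ℝ} (h : ContDiffAt ℝ (4 : ℕ) u x) :
    ContDiffAt ℝ (2 : ℕ) (hdet u) x := by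
  have hx := contDiffAt_pdx (n := 3) h
  have hy := contDiffAt_pdy (n := 3) h
  exact ((contDiffAt_pdx (n := 2) hx).mul (contDiffAt_pdy (n := 2) hy)).sub
    ((contDiffAt_pdy (n := 2) hx).pow 2)

/-- If `det D²u ≤ 0` on a connected domain and it is negative somewhere, it is negative
everywhere. -/
theorem det_neg_of_nonpos {U : Set (ℝ × ℝ)} (hU : IsOpen U) (hconn : IsPreconnected U)
    {u : ℝ × ℝ → ℝ} (h : IsTranslatorOn U u) (hle : ∀ x ∈ U, hdet u x ≤ 0)
    {x₁ : ℝ × ℝ} (hx₁ : x₁ ∈ U) (hneg : hdet u x₁ < 0) : ∀ x ∈ U, hdet u x < 0 := by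
  intro x hx
  refine lt_of_le_of_ne (hle x hx) fun h0 => hneg.ne ?_
  have hC : ∀ y ∈ U, ContDiffAt ℝ (4 : ℕ) u y := fun y hy =>
    contDiffAt_infty.1 (h.1.contDiffAt (hU.mem_nhds hy)) 4
  refine strong_max hU hconn (fun y hy => contDiffAt_hdet (hC y hy)) (pdx u) (pdy u) hle ?_ hx h0
    x₁ hx₁
  intro z hz hz0
  exact det_elliptic (hC z hz) (Filter.mem_of_superset (hU.mem_nhds hz) fun y hy => h.2 y hy) hz0

/-! ### A point of negative Hessian determinant -/

theorem IsTranslatorOn.contDiffAt {U : Set (ℝ × ℝ)} (hU : IsOpen U) {u : ℝ × ℝ → ℝ}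
    (h : IsTranslatorOn U u) (n : ℕ) {x : ℝ × ℝ} (hx : x ∈ U) : ContDiffAt ℝ n u x :=
  contDiffAt_infty.1 (h.1.contDiffAt (hU.mem_nhds hx)) n

theorem isOpen_Pgram (α w L : ℝ) : IsOpen (Pgram α w L) := by
  have : Pgram α w L = {p | 0 < p.2} ∩ {p | p.2 < w} ∩ {p | p.2 * cos α / sin α < p.1} ∩
      {p | p.1 < L + p.2 * cos α / sin α} := by
    ext p; simp [Pgram, and_assoc]
  rw [this]
  refine ((IsOpen.inter ?_ ?_).inter ?_).inter ?_ <;> refine isOpen_lt ?_ ?_ <;> fun_prop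

theorem convex_Pgram (α w L : ℝ) : Convex ℝ (Pgram α w L) := by
  rintro ⟨x1, x2⟩ ⟨h1, h2, h3, h4⟩ ⟨y1, y2⟩ ⟨g1, g2, g3, g4⟩ a b ha hb hab
  simp only [Pgram, mem_ofPred_eq, mul_div_assoc] at *
  generalize cos α / sin α = k at *
  obtain rfl : a = 1 - b := by linarith
  rcases hb.eq_or_lt with rfl | hb
  · simp; exact ⟨h1, h2, h3, h4⟩
  simp only [Prod.smul_mk, smul_eq_mul, Prod.mk_add_mk]
  refine ⟨?_, ?_, ?_, ?_⟩
  · nlinarith [mul_nonneg ha h1.le, mul_pos hb g1]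
  · nlinarith [mul_nonneg ha (sub_pos.2 h2).le, mul_pos hb (sub_pos.2 g2)]
  · nlinarith [mul_nonneg ha (sub_pos.2 h3).le, mul_pos hb (sub_pos.2 g3)]
  · nlinarith [mul_nonneg ha (sub_pos.2 h4).le, mul_pos hb (sub_pos.2 g4)]

/-- A Hessian with non-negative determinant and a negative value is negative semidefinite, which
is incompatible with the translator equation. -/
theorem hess_algebra {r s t a b k : ℝ} (hD : 0 ≤ r * t - s ^ 2)
    (hq : k ^ 2 * r + 2 * k * s + t < 0)
    (hE : (1 + b ^ 2) * r - 2 * a * b * s + (1 + a ^ 2) * t = 1 + a ^ 2 + b ^ 2) : False := by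
  have hr : r ≤ 0 := by
    by_contra h; push Not at h
    have h1 : r * (k ^ 2 * r + 2 * k * s + t) = (k * r + s) ^ 2 + (r * t - s ^ 2) := by ring
    have h2 := mul_neg_of_pos_of_neg h hq
    have h3 := sq_nonneg (k * r + s)
    linarith
  have ht : t ≤ 0 := by
    by_contra h; push Not at h
    have h1 : t * (k ^ 2 * r + 2 * k * s + t) = (k * s + t) ^ 2 + k ^ 2 * (r * t - s ^ 2) := by ring
    have h2 := mul_neg_of_pos_of_neg h hq
    have h3 := sq_nonneg (k * s + t)
    have h4 := mul_nonneg (sq_nonneg k) hD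
    linarith
  have h3 : b ^ 2 * r - 2 * a * b * s + a ^ 2 * t ≤ 0 := by
    rcases hr.eq_or_lt with h | h
    · have hs : s ^ 2 = 0 := by
        rw [h] at hD; have := sq_nonneg s; linarith
      have hs' : s = 0 := by simpa using hs
      rw [h, hs']
      have := mul_nonneg (sq_nonneg a) (neg_nonneg.2 ht)
      linarith
    · by_contra hc; push Not at hc
      have h1 : r * (b ^ 2 * r - 2 * a * b * s + a ^ 2 * t)
        = (b * r - a * s) ^ 2 + a ^ 2 * (r * t - s ^ 2) := by ring
      have h2 := mul_neg_of_neg_of_pos h hc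
      have h3 := sq_nonneg (b * r - a * s)
      have h4 := mul_nonneg (sq_nonneg a) hD
      linarith
  have h4 := sq_nonneg a
  have h5 := sq_nonneg b
  linarith

/-- A point of negative Hessian determinant exists: a segment from the bottom side to the top
side has `u → -∞` at both ends, so `u` is somewhere strictly concave along it. -/
theorem exists_det_neg {α w L : ℝ} (hw : 0 < w) (hL : 0 < L) {u : ℝ × ℝ → ℝ}
    (hu : ScherkBVP α w L u) : ∃ x ∈ Pgram α w L, hdet u x < 0 := by
  obtain ⟨htr, hbot, htop, -, -⟩ := hu
  set k := cos α / sin α with hk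
  set γ : ℝ → ℝ × ℝ := fun y => (L / 2 + y * k, y) with hγ
  have hγc : Continuous γ := by simp only [hγ]; fun_prop
  have hγP : ∀ y ∈ Ioo 0 w, γ y ∈ Pgram α w L := by
    rintro y ⟨h1, h2⟩
    simp only [Pgram, mem_ofPred_eq, hγ, mul_div_assoc, ← hk]
    refine ⟨h1, h2, by linarith, by linarith⟩
  have l0 : Tendsto (fun y => u (γ y)) (nhdsWithin 0 (Ioo 0 w)) atBot := by
    refine (hbot (L / 2) (by linarith) (by linarith)).comp ?_
    refine tendsto_nhdsWithin_iff.2 ⟨?_, ?_⟩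
    · have := (hγc.tendsto 0).mono_left (nhdsWithin_le_nhds (s := Ioo 0 w))
      simpa [hγ] using this
    · filter_upwards [self_mem_nhdsWithin] with y hy using hγP y hy
  have l1 : Tendsto (fun y => u (γ y)) (nhdsWithin w (Ioo 0 w)) atBot := by
    refine (htop (L / 2 + w * k) (by rw [mul_div_assoc, ← hk]; linarith)
      (by rw [mul_div_assoc, ← hk]; linarith)).comp ?_
    refine tendsto_nhdsWithin_iff.2 ⟨?_, ?_⟩
    · exact (hγc.tendsto w).mono_left (nhdsWithin_le_nhds (s := Ioo 0 w))
    · filter_upwards [self_mem_nhdsWithin] with y hy using hγP y hy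
  set g : ℝ → ℝ := fun y => u (γ y) + y ^ 2 with hg
  have hgc : ContinuousOn g (Ioo 0 w) := by
    intro y hy
    have h1 : ContinuousAt u (γ y) :=
      (htr.contDiffAt (isOpen_Pgram α w L) 1 (hγP y hy)).continuousAt
    exact ((h1.comp hγc.continuousAt).add (by fun_prop)).continuousWithinAt
  set M := g (w / 2) with hM
  have hmid : w / 2 ∈ Ioo 0 w := ⟨by linarith, by linarith⟩
  have hb : ∀ a ∈ ({0, w} : Set ℝ), ∃ δ > 0, ∀ y ∈ Ioo 0 w, |y - a| < δ → g y < M := by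
    intro a ha
    have hta : Tendsto (fun y => u (γ y)) (nhdsWithin a (Ioo 0 w)) atBot := by
      rcases ha with rfl | rfl
      exacts [l0, l1]
    have := hta.eventually (eventually_lt_atBot (M - w ^ 2))
    rw [eventually_nhdsWithin_iff, Metric.eventually_nhds_iff] at this
    obtain ⟨δ, hδ, h⟩ := this
    refine ⟨δ, hδ, fun y hy hya => ?_⟩
    have := h (by simpa [Real.dist_eq] using hya) hy
    simp only [hg]
    nlinarith [hy.1, hy.2]
  obtain ⟨δ₀, hδ₀, h0⟩ := hb 0 (by simp)
  obtain ⟨δ₁, hδ₁, h1⟩ := hb w (by simp)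
  set δ := min (w / 4) (min δ₀ δ₁ / 2) with hδdef
  have hδ : 0 < δ := by positivity
  have hδw : δ ≤ w / 4 := min_le_left _ _
  have hδ0 : δ < δ₀ := lt_of_le_of_lt (min_le_right _ _) (by
    have := min_le_left δ₀ δ₁; have : 0 < min δ₀ δ₁ := by positivity
    linarith)
  have hδ1 : δ < δ₁ := lt_of_le_of_lt (min_le_right _ _) (by
    have := min_le_right δ₀ δ₁; have : 0 < min δ₀ δ₁ := by positivity
    linarith)
  have hsub : Icc δ (w - δ) ⊆ Ioo 0 w := fun y hy => ⟨by linarith [hy.1], by linarith [hy.2]⟩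
  obtain ⟨y, hy, hmax⟩ := isCompact_Icc.exists_isMaxOn (s := Icc δ (w - δ))
    ⟨w / 2, by constructor <;> linarith⟩ (hgc.mono hsub)
  have hyM : M ≤ g y := hmax (a := w / 2) (by constructor <;> linarith)
  have hyw := hsub hy
  have hloc : IsLocalMax g y := by
    filter_upwards [isOpen_Ioo.mem_nhds hyw] with z hz
    rcases lt_or_ge z δ with h | h
    · exact (h0 z hz (by rw [sub_zero, abs_of_pos hz.1]; linarith)).le.trans hyM
    rcases lt_or_ge (w - δ) z with h' | h'
    · exact (h1 z hz (by rw [abs_of_neg (by linarith [hz.2])]; linarith)).le.trans hyM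
    · exact hmax ⟨h, h'⟩
  set p := γ y with hp
  have hpP := hγP y hyw
  have hu2 := htr.contDiffAt (isOpen_Pgram α w L) 2 hpP
  set f : ℝ × ℝ → ℝ := fun x => -(x.2 * x.2) with hf
  have hfC : ContDiffAt ℝ (2 : ℕ) f p := by simp only [hf]; fun_prop
  have hfg : ∀ x, HasGrad f 0 (-2 * x.2) x := by
    intro x
    have := ((HasGrad.snd (p := x)).mul HasGrad.snd).const_mul (-1)
    refine (this.congr_val ?_ ?_).congr_fun (Eventually.of_forall fun z => ?_)
    · ring
    · ring
    · simp [hf]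
  have hs := HasGrad.second (Eventually.of_forall hfg) (HasGrad.const 0)
    (HasGrad.snd.const_mul (-2) : HasGrad _ _ _ p)
  obtain ⟨-, -, s1, s2, s3⟩ := second_sub hu2 hfC
  have hline := line_second_order (f := fun x => u x - f x) (p := p) (ξ := k) (η := 1)
    (hu2.sub hfC) (by
      have hc : Tendsto (fun t : ℝ => y + t) (nhds 0) (nhds y) := by
        have : Continuous fun t : ℝ => y + t := by fun_prop
        simpa using this.tendsto 0
      have := hc.eventually hloc
      refine this.mono fun t ht => ?_
      have e : ∀ t : ℝ, u (p.1 + t * k, p.2 + t * 1) - f (p.1 + t * k, p.2 + t * 1) = g (y + t) := by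
        intro t
        simp only [hg, hf, hp, hγ]
        rw [show L / 2 + y * k + t * k = L / 2 + (y + t) * k by ring, mul_one]
        ring
      show u (p.1 + t * k, p.2 + t * 1) - f (p.1 + t * k, p.2 + t * 1) ≤
        u (p.1 + 0 * k, p.2 + 0 * 1) - f (p.1 + 0 * k, p.2 + 0 * 1)
      rw [e, e]; simpa using ht)
  rw [s1, s2, s3, hs.1, hs.2.1, hs.2.2.2] at hline
  refine ⟨p, hpP, ?_⟩
  have hpde := htr.2 p hpP
  unfold hdet
  by_contra hcon
  push Not at hcon
  exact hess_algebra (k := k) hcon (by rw [hp]; linarith) hpde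

/-! ### Separation in the plane -/

/-- The plane point `x` as a complex number. -/
def toC (x : ℝ × ℝ) : ℂ := ⟨x.1, x.2⟩

theorem continuous_toC : Continuous toC := by
  have : toC = fun x : ℝ × ℝ => (x.1 : ℂ) + x.2 * Complex.I := by
    funext x; apply Complex.ext <;> simp [toC]
  rw [this]; fun_prop

theorem toC_sub_norm_le (x y : ℝ × ℝ) : ‖toC x - toC y‖ ≤ 2 * dist x y := by
  refine (Complex.norm_le_abs_re_add_abs_im _).trans ?_
  have h1 : |x.1 - y.1| ≤ dist x y := by rw [Prod.dist_eq, ← Real.dist_eq]; exact le_max_left _ _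
  have h2 : |x.2 - y.2| ≤ dist x y := by rw [Prod.dist_eq, ← Real.dist_eq]; exact le_max_right _ _
  simp only [toC, Complex.sub_re, Complex.sub_im]
  linarith

theorem le_toC_sub_norm (x y : ℝ × ℝ) : dist x y ≤ ‖toC x - toC y‖ := by
  rw [Prod.dist_eq, Real.dist_eq, Real.dist_eq]
  exact max_le (by simpa [toC] using Complex.abs_re_le_norm (toC x - toC y))
    (by simpa [toC] using Complex.abs_im_le_norm (toC x - toC y))

/-- `z - c` has a continuous logarithm on `K`. -/
def HasLog (K : Set (ℝ × ℝ)) (c : ℝ × ℝ) : Prop :=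
  ∃ ℓ : ℝ × ℝ → ℂ, ContinuousOn ℓ K ∧ ∀ z ∈ K, Complex.exp (ℓ z) = toC z - toC c

theorem re_pos_of_norm_lt {a b : ℂ} (h : ‖a‖ < ‖b‖) : 0 < (1 + a / b).re := by
  have hb : 0 < ‖b‖ := (norm_nonneg a).trans_lt h
  have h1 : ‖a / b‖ < 1 := by rw [norm_div, div_lt_one hb]; exact h
  have h2 := (abs_lt.1 ((Complex.abs_re_le_norm (a / b)).trans_lt h1)).1
  simp only [Complex.add_re, Complex.one_re]; linarith

theorem HasLog.perturb {K : Set (ℝ × ℝ)} {c d : ℝ × ℝ} (h : HasLog K c)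
    (hcd : ∀ z ∈ K, ‖toC c - toC d‖ < ‖toC z - toC c‖) : HasLog K d := by
  obtain ⟨ℓ, hℓ, hexp⟩ := h
  have hne : ∀ z ∈ K, toC z - toC c ≠ 0 := fun z hz h0 => by
    have := hcd z hz; rw [h0, norm_zero] at this; exact absurd this (not_lt.2 (norm_nonneg _))
  have hre : ∀ z ∈ K, 0 < (1 + (toC c - toC d) / (toC z - toC c)).re := fun z hz =>
    re_pos_of_norm_lt (hcd z hz)
  refine ⟨fun z => ℓ z + Complex.log (1 + (toC c - toC d) / (toC z - toC c)), ?_, ?_⟩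
  · refine hℓ.add (ContinuousOn.clog ?_ fun z hz => Or.inl (hre z hz))
    refine continuousOn_const.add (continuousOn_const.div ?_ hne)
    exact (continuous_toC.sub continuous_const).continuousOn
  · intro z hz
    have h1 : 1 + (toC c - toC d) / (toC z - toC c) ≠ 0 := fun h => by
      have := hre z hz; rw [h] at this; simp at this
    rw [Complex.exp_add, Complex.exp_log h1, hexp z hz]
    have := hne z hz
    field_simp; ring

theorem exists_ball_hasLog {K : Set (ℝ × ℝ)} (hK : IsClosed K) {c : ℝ × ℝ} (hc : c ∉ K) :
    ∃ ε > 0, ∀ d ∈ Metric.ball c ε, d ∉ K ∧ (HasLog K c ↔ HasLog K d) := by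
  obtain ⟨ε, hε, hb⟩ := Metric.isOpen_iff.1 hK.isOpen_compl c hc
  refine ⟨ε / 4, by positivity, fun d hd => ?_⟩
  have hd' := Metric.mem_ball.1 hd
  have hz : ∀ z ∈ K, ε ≤ dist z c := fun z hz => by
    by_contra h; push Not at h; exact hb (Metric.mem_ball.2 h) hz
  refine ⟨hb (Metric.mem_ball.2 (by linarith)), fun h => h.perturb fun z hzK => ?_,
    fun h => h.perturb fun z hzK => ?_⟩
  · have h1 := toC_sub_norm_le c d
    have h2 := le_toC_sub_norm z c
    have := hz z hzK
    rw [dist_comm] at h1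
    linarith
  · have h1 := toC_sub_norm_le d c
    have h2 := le_toC_sub_norm z d
    have := hz z hzK
    have h3 := dist_triangle z d c
    linarith

theorem HasLog.of_preconnected {K T : Set (ℝ × ℝ)} (hK : IsClosed K) (hT : IsPreconnected T)
    (hTK : ∀ z ∈ T, z ∉ K) {c d : ℝ × ℝ} (hc : c ∈ T) (hd : d ∈ T) (h : HasLog K c) :
    HasLog K d := by
  by_contra hcon
  have o1 : IsOpen {x | x ∉ K ∧ HasLog K x} := Metric.isOpen_iff.2 fun x hx => by
    obtain ⟨ε, hε, hb⟩ := exists_ball_hasLog hK hx.1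
    exact ⟨ε, hε, fun y hy => ⟨(hb y hy).1, (hb y hy).2.1 hx.2⟩⟩
  have o2 : IsOpen {x | x ∉ K ∧ ¬ HasLog K x} := Metric.isOpen_iff.2 fun x hx => by
    obtain ⟨ε, hε, hb⟩ := exists_ball_hasLog hK hx.1
    exact ⟨ε, hε, fun y hy => ⟨(hb y hy).1, fun hy' => hx.2 ((hb y hy).2.2 hy')⟩⟩
  obtain ⟨x, -, hx1, hx2⟩ := hT _ _ o1 o2 (fun x hx => by
    by_cases hl : HasLog K x
    · exact Or.inl ⟨hTK x hx, hl⟩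
    · exact Or.inr ⟨hTK x hx, hl⟩) ⟨c, hc, hTK c hc, h⟩ ⟨d, hd, hTK d hd, hcon⟩
  exact hx2.2 hx1.2

theorem hasLog_of_notMem_convexHull {K H : Set (ℝ × ℝ)} (hH : IsClosed H) (hHc : Convex ℝ H)
    (hKH : K ⊆ H) {c : ℝ × ℝ} (hc : c ∉ H) : HasLog K c := by
  obtain ⟨f, u, hfc, hf⟩ := geometric_hahn_banach_point_closed hHc hH hc
  set a := f (1, 0) with ha
  set b := f (0, 1) with hb
  have hfx : ∀ x : ℝ × ℝ, f x = a * x.1 + b * x.2 := by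
    rintro ⟨x, y⟩
    have h0 : ((x, y) : ℝ × ℝ) = x • (1, 0) + y • (0, 1) := by ext <;> simp
    rw [h0, map_add, map_smul, map_smul]; simp [ha, hb]; ring
  set ω : ℂ := ⟨a, -b⟩ with hω
  have hre : ∀ z ∈ K, 0 < (ω * (toC z - toC c)).re := by
    intro z hz
    have h1 := hf z (hKH hz)
    rw [hfx] at h1 hfc
    simp only [hω, toC, Complex.mul_re, Complex.sub_re, Complex.sub_im]
    linarith
  by_cases hK : K.Nonempty
  swap
  · rw [not_nonempty_iff_eq_empty] at hK
    exact ⟨fun _ => 0, by simp [hK], by simp [hK]⟩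
  have hω0 : ω ≠ 0 := fun h => by
    obtain ⟨z, hz⟩ := hK
    have := hre z hz
    rw [h] at this; simp at this
  refine ⟨fun z => Complex.log (ω * (toC z - toC c)) - Complex.log ω, ?_, ?_⟩
  · refine (ContinuousOn.clog ?_ fun z hz => Or.inl (hre z hz)).sub continuousOn_const
    exact (continuous_const.mul (continuous_toC.sub continuous_const)).continuousOn
  · intro z hz
    have h1 : ω * (toC z - toC c) ≠ 0 := fun h => by
      have := hre z hz; rw [h] at this; simp at this
    rw [Complex.exp_sub, Complex.exp_log h1, Complex.exp_log hω0]
    field_simp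

theorem const_of_exp_eq_one {S : Set (ℝ × ℝ)} (hS : IsPreconnected S) {F : ℝ × ℝ → ℂ}
    (hF : ContinuousOn F S) (h1 : ∀ z ∈ S, Complex.exp (F z) = 1) {x y : ℝ × ℝ} (hx : x ∈ S)
    (hy : y ∈ S) : F x = F y := by
  have h_int : ∀ z ∈ S, ∃ n : ℤ, F z = n * (2 * π * Complex.I) := fun z hz =>
    Complex.exp_eq_one_iff.1 (h1 z hz)
  wlog hlt : (F x).im ≤ (F y).im generalizing x y
  · exact (this hy hx (le_of_not_ge hlt)).symm
  obtain ⟨m, hm⟩ := h_int x hx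
  obtain ⟨n, hn⟩ := h_int y hy
  have him : ∀ k : ℤ, ((k : ℂ) * (2 * π * Complex.I)).im = k * (2 * π) := by
    intro k; simp [mul_comm]
  rw [hm, hn, him, him] at hlt
  have hmn : m ≤ n := by
    have := le_of_mul_le_mul_right hlt (by positivity); exact_mod_cast this
  rcases hmn.eq_or_lt with h | h
  · rw [hm, hn, h]
  exfalso
  have hc : ContinuousOn (fun z => (F z).im) S := Complex.continuous_im.comp_continuousOn hF
  have hmem : ((m : ℝ) + 1 / 2) * (2 * π) ∈ Icc ((F x).im) ((F y).im) := by
    rw [hm, hn, him, him]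
    have : (m : ℝ) + 1 ≤ n := by exact_mod_cast h
    constructor <;> gcongr <;> linarith
  obtain ⟨z, hz, hzv⟩ := hS.intermediate_value hx hy hc hmem
  obtain ⟨k, hk⟩ := h_int z hz
  simp only [hk, him] at hzv
  have h2 : (k : ℝ) = m + 1 / 2 := mul_right_cancel₀ (by positivity : 2 * π ≠ 0) hzv
  have h3 : (2 * k : ℝ) = 2 * m + 1 := by linarith
  have h4 : 2 * k = 2 * m + 1 := by exact_mod_cast h3
  omega

/-- A closed curve made of a connected set `K₁` away from `q` and of a chord through `q` separates
the points `q ± s η` on the two sides of the chord; hence `z - c` and `z - d` cannot both have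
logarithms on it. -/
theorem chord_separates {K₁ : Set (ℝ × ℝ)} (hK₁ : IsPreconnected K₁) {q v η : ℝ × ℝ} {s s₀ : ℝ}
    (hs : s ≠ 0) (hs₀ : 0 ≤ s₀) (hvη : v.1 * η.2 - v.2 * η.1 ≠ 0)
    (hp : (q.1 + s₀ * v.1, q.2 + s₀ * v.2) ∈ K₁) (hm : (q.1 + -s₀ * v.1, q.2 + -s₀ * v.2) ∈ K₁)
    (hfar : ∀ z ∈ K₁, ‖toC (q.1 - s * η.1, q.2 - s * η.2) - toC (q.1 + s * η.1, q.2 + s * η.2)‖ <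
      ‖toC z - toC (q.1 - s * η.1, q.2 - s * η.2)‖)
    (hc : HasLog (K₁ ∪ (fun τ => (q.1 + τ * v.1, q.2 + τ * v.2)) '' Icc (-s₀) s₀)
      (q.1 + s * η.1, q.2 + s * η.2))
    (hd : HasLog (K₁ ∪ (fun τ => (q.1 + τ * v.1, q.2 + τ * v.2)) '' Icc (-s₀) s₀)
      (q.1 - s * η.1, q.2 - s * η.2)) : False := by
  set S := (fun τ => (q.1 + τ * v.1, q.2 + τ * v.2)) '' Icc (-s₀) s₀ with hS
  set c : ℝ × ℝ := (q.1 + s * η.1, q.2 + s * η.2) with hcdef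
  set d : ℝ × ℝ := (q.1 - s * η.1, q.2 - s * η.2) with hddef
  obtain ⟨ℓc, hℓc, ec⟩ := hc
  obtain ⟨ℓd, hℓd, ed⟩ := hd
  set R : ℝ × ℝ → ℂ := fun z => (toC z - toC c) / (toC z - toC d) with hR
  have hdne : ∀ z ∈ K₁ ∪ S, toC z - toC d ≠ 0 := fun z hz => by
    rw [← ed z hz]; exact Complex.exp_ne_zero _
  have hcne : ∀ z ∈ K₁ ∪ S, toC z - toC c ≠ 0 := fun z hz => by
    rw [← ec z hz]; exact Complex.exp_ne_zero _
  have hR0 : ∀ z ∈ K₁ ∪ S, R z ≠ 0 := fun z hz => div_ne_zero (hcne z hz) (hdne z hz)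
  have hRc : ContinuousOn R (K₁ ∪ S) :=
    ContinuousOn.div (continuous_toC.sub continuous_const).continuousOn
      (continuous_toC.sub continuous_const).continuousOn hdne
  have hexp : ∀ z ∈ K₁ ∪ S, Complex.exp (ℓc z - ℓd z) = R z := fun z hz => by
    rw [Complex.exp_sub, ec z hz, ed z hz]
  have hℓ : ContinuousOn (fun z => ℓc z - ℓd z) (K₁ ∪ S) := hℓc.sub hℓd
  have hslit1 : ∀ z ∈ K₁, R z ∈ Complex.slitPlane := by
    intro z hz
    refine Or.inl ?_
    have h1 := re_pos_of_norm_lt (hfar z hz)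
    have h2 : R z = 1 + (toC d - toC c) / (toC z - toC d) := by
      have := hdne z (Or.inl hz)
      simp only [hR]; field_simp; ring
    rw [h2]; exact h1
  -- on the chord `R` is never a positive real number
  have hslit2 : ∀ z ∈ S, -R z ∈ Complex.slitPlane := by
    rintro z hz
    obtain ⟨τ, hτ, hτz⟩ := id hz
    by_contra hcon
    rw [Complex.mem_slitPlane_iff] at hcon
    push Not at hcon
    obtain ⟨h1, h2⟩ := hcon
    have h3 : R z * (toC z - toC d) = toC z - toC c := div_mul_cancel₀ _ (hdne z (Or.inr hz))
    have h4 : (R z).im = 0 := by simpa using h2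
    have h5 : 0 ≤ (R z).re := by simpa using h1
    have e1 := congrArg Complex.re h3
    have e2 := congrArg Complex.im h3
    rw [← hτz] at e1 e2
    simp only [Complex.mul_re, Complex.mul_im, hτz, h4, toC, hcdef, hddef, Complex.sub_re,
      Complex.sub_im] at e1 e2
    set ρ := (R z).re
    have e3 : (1 + ρ) * s * η.1 = (1 - ρ) * τ * v.1 := by linarith
    have e4 : (1 + ρ) * s * η.2 = (1 - ρ) * τ * v.2 := by linarith
    have e5 : (1 + ρ) * s * (v.1 * η.2 - v.2 * η.1) = 0 := by linear_combination v.1 * e4 - v.2 * e3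
    have : (1 + ρ) * s ≠ 0 := mul_ne_zero (by linarith) hs
    exact (mul_ne_zero this hvη) e5
  have hpS : (q.1 + s₀ * v.1, q.2 + s₀ * v.2) ∈ S := ⟨s₀, ⟨by linarith, le_rfl⟩, rfl⟩
  have hmS : (q.1 + -s₀ * v.1, q.2 + -s₀ * v.2) ∈ S := ⟨-s₀, ⟨le_rfl, by linarith⟩, rfl⟩
  set zp : ℝ × ℝ := (q.1 + s₀ * v.1, q.2 + s₀ * v.2) with hzp
  set zm : ℝ × ℝ := (q.1 + -s₀ * v.1, q.2 + -s₀ * v.2) with hzm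
  have hSc : IsPreconnected S := isPreconnected_Icc.image _ (by fun_prop)
  have k1 := const_of_exp_eq_one hK₁ (F := fun z => ℓc z - ℓd z - Complex.log (R z))
    ((hℓ.mono subset_union_left).sub ((hRc.mono subset_union_left).clog hslit1))
    (fun z hz => by
      rw [Complex.exp_sub, hexp z (Or.inl hz), Complex.exp_log (hR0 z (Or.inl hz)),
        div_self (hR0 z (Or.inl hz))]) hp hm
  have k2 := const_of_exp_eq_one hSc
    (F := fun z => ℓc z - ℓd z - Complex.log (-R z) - π * Complex.I)
    (((hℓ.mono subset_union_right).sub ((hRc.mono subset_union_right).neg.clog hslit2)).sub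
      continuousOn_const)
    (fun z hz => by
      rw [Complex.exp_sub, Complex.exp_sub, hexp z (Or.inr hz),
        Complex.exp_log (neg_ne_zero.2 (hR0 z (Or.inr hz))), Complex.exp_pi_mul_I]
      have := hR0 z (Or.inr hz)
      field_simp) hpS hmS
  have hinv : R zm = (R zp)⁻¹ := by
    simp only [hR, inv_div]
    rw [show toC zm - toC c = -(toC zp - toC d) by
        apply Complex.ext <;> simp [toC, hzp, hzm, hcdef, hddef] <;> ring,
      show toC zm - toC d = -(toC zp - toC c) by
        apply Complex.ext <;> simp [toC, hzp, hzm, hcdef, hddef] <;> ring, neg_div_neg_eq]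
  have hl1 : Complex.log (R zm) = -Complex.log (R zp) := by
    rw [hinv, Complex.log_inv _ (Complex.slitPlane_arg_ne_pi (hslit1 zp hp))]
  have hl2 : Complex.log (-R zm) = -Complex.log (-R zp) := by
    rw [hinv, ← inv_neg, Complex.log_inv _ (Complex.slitPlane_arg_ne_pi (hslit2 zp hpS))]
  simp only [hl1, hl2] at k1 k2
  have k3 : Complex.log (R zp) = Complex.log (-R zp) := by linear_combination (k2 - k1) / 2
  have k4 := congrArg Complex.exp k3
  have hne := hR0 zp (Or.inl hp)
  rw [Complex.exp_log hne, Complex.exp_log (neg_ne_zero.2 hne)] at k4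
  exact hne (self_eq_neg.1 k4)

/-- A compact subset of an open convex planar set lies in a compact convex subset of it. -/
theorem exists_compact_convex {Ω K : Set (ℝ × ℝ)} (hΩ : Convex ℝ Ω) (hΩo : IsOpen Ω)
    (hK : IsCompact K) (hKΩ : K ⊆ Ω) : ∃ H ⊆ Ω, IsCompact H ∧ Convex ℝ H ∧ K ⊆ H := by
  have h1 : ∀ x ∈ K, ∃ t : Finset (ℝ × ℝ), {x} ⊆ interior (convexHull ℝ (t : Set (ℝ × ℝ))) ∧
      convexHull ℝ (t : Set (ℝ × ℝ)) ⊆ Ω := fun x hx =>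
    (convex_singleton x).exists_subset_interior_convexHull_finset_of_isCompact
      isCompact_singleton (hΩo.mem_nhdsSet.2 (by simpa using hKΩ hx))
  choose! t ht htΩ using h1
  obtain ⟨b, hbK, hb, hcov⟩ := hK.elim_finite_subcover_image (b := K)
    (c := fun x => interior (convexHull ℝ (t x : Set (ℝ × ℝ)))) (fun _ _ => isOpen_interior)
    (fun x hx => Set.mem_iUnion₂_of_mem hx (ht x hx rfl))
  refine ⟨convexHull ℝ (⋃ x ∈ b, (t x : Set (ℝ × ℝ))), convexHull_min ?_ hΩ, ?_,
    convex_convexHull ℝ _, ?_⟩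
  · exact iUnion₂_subset fun x hx => (subset_convexHull ℝ _).trans (htΩ x (hbK hx))
  · exact (hb.biUnion fun x _ => (t x).finite_toSet).isCompact_convexHull ℝ
  · exact hcov.trans (iUnion₂_subset fun x hx => interior_subset.trans
      (convexHull_mono (subset_biUnion_of_mem (u := fun x => (t x : Set (ℝ × ℝ))) hx)))

/-- Planar separation: if each negative region of `φ` escapes every compact convex subset of `Ω`,
and near `q` the function `φ` is non-negative along a chord in direction `v` but negative along
`±η`, then no connected compact set in `{φ > 0}` joins the two ends of the chord. -/
theorem no_positive_join {Ω : Set (ℝ × ℝ)} (hΩ : Convex ℝ Ω) (hΩo : IsOpen Ω) {φ : ℝ × ℝ → ℝ} {q v η : ℝ × ℝ}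
    {s₀ : ℝ} (hs₀ : 0 < s₀) (hvη : v.1 * η.2 - v.2 * η.1 ≠ 0) (hq : φ q = 0)
    (hchord : ∀ τ ∈ Icc (-s₀) s₀, (q.1 + τ * v.1, q.2 + τ * v.2) ∈ Ω ∧
      0 ≤ φ (q.1 + τ * v.1, q.2 + τ * v.2))
    (hneg : ∀ᶠ s in nhdsWithin (0 : ℝ) (Ioi 0),
      ((q.1 + s * η.1, q.2 + s * η.2) ∈ Ω ∧ φ (q.1 + s * η.1, q.2 + s * η.2) < 0) ∧
      ((q.1 - s * η.1, q.2 - s * η.2) ∈ Ω ∧ φ (q.1 - s * η.1, q.2 - s * η.2) < 0))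
    (hesc : ∀ c ∈ Ω, φ c < 0 → ∀ H ⊆ Ω, IsCompact H → Convex ℝ H →
      ∃ T ⊆ {x | x ∈ Ω ∧ φ x < 0}, IsPreconnected T ∧ c ∈ T ∧ ∃ d ∈ T, d ∉ H)
    {K₁ : Set (ℝ × ℝ)} (hK₁ : IsPreconnected K₁) (hK₁c : IsCompact K₁)
    (hK₁φ : ∀ x ∈ K₁, x ∈ Ω ∧ 0 < φ x)
    (hp : (q.1 + s₀ * v.1, q.2 + s₀ * v.2) ∈ K₁)
    (hm : (q.1 + -s₀ * v.1, q.2 + -s₀ * v.2) ∈ K₁) : False := by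
  set S := (fun τ => (q.1 + τ * v.1, q.2 + τ * v.2)) '' Icc (-s₀) s₀ with hS
  have hqK : q ∈ K₁ᶜ := fun h => by have := (hK₁φ q h).2; linarith
  obtain ⟨ε, hε, hb⟩ := Metric.isOpen_iff.1 hK₁c.isClosed.isOpen_compl q hqK
  have hN : ∀ᶠ s in nhdsWithin (0 : ℝ) (Ioi 0), s * (5 * (|η.1| + |η.2|)) < ε := by
    have hc : Continuous fun s : ℝ => s * (5 * (|η.1| + |η.2|)) := by fun_prop
    exact nhdsWithin_le_nhds ((hc.tendsto 0).eventually (gt_mem_nhds (by simpa using hε)))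
  obtain ⟨s, ⟨⟨⟨hcΩ, hcφ⟩, ⟨hdΩ, hdφ⟩⟩, hsε⟩, hs⟩ :=
    ((hneg.and hN).and self_mem_nhdsWithin).exists
  have hs' : 0 < s := hs
  have hKc : IsCompact (K₁ ∪ S) :=
    hK₁c.union (isCompact_Icc.image (by fun_prop))
  have hKΩ : ∀ x ∈ K₁ ∪ S, x ∈ Ω ∧ 0 ≤ φ x := by
    rintro x (hx | ⟨τ, hτ, rfl⟩)
    · exact ⟨(hK₁φ x hx).1, (hK₁φ x hx).2.le⟩
    · exact hchord τ hτ
  have hlog : ∀ c ∈ Ω, φ c < 0 → HasLog (K₁ ∪ S) c := by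
    intro c hc hcn
    obtain ⟨H, hHΩ, hHc, hHconv, hKH⟩ :=
      exists_compact_convex hΩ hΩo hKc fun x hx => (hKΩ x hx).1
    obtain ⟨T, hT, hTc, hcT, d, hdT, hdH⟩ := hesc c hc hcn H hHΩ hHc hHconv
    refine HasLog.of_preconnected hKc.isClosed hTc (fun z hz hzK => ?_) hdT hcT
      (hasLog_of_notMem_convexHull hHc.isClosed hHconv hKH hdH)
    have := (hT hz).2
    have := (hKΩ z hzK).2
    linarith
  refine chord_separates hK₁ hs'.ne' hs₀.le hvη hp hm ?_ (hlog _ hcΩ hcφ) (hlog _ hdΩ hdφ)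
  intro z hz
  have hzq : ε ≤ dist z q := by
    by_contra h; push Not at h; exact hb (Metric.mem_ball.2 h) hz
  have e1 : ‖toC (q.1 - s * η.1, q.2 - s * η.2) - toC (q.1 + s * η.1, q.2 + s * η.2)‖
      ≤ 2 * s * (|η.1| + |η.2|) := by
    refine (Complex.norm_le_abs_re_add_abs_im _).trans (le_of_eq ?_)
    simp only [toC, Complex.sub_re, Complex.sub_im]
    rw [show q.1 - s * η.1 - (q.1 + s * η.1) = -(2 * s * η.1) by ring,
      show q.2 - s * η.2 - (q.2 + s * η.2) = -(2 * s * η.2) by ring, abs_neg, abs_neg, abs_mul,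
      abs_mul (2 * s), abs_of_pos (by positivity : 0 < 2 * s)]
    ring
  have e2 := le_toC_sub_norm z (q.1 - s * η.1, q.2 - s * η.2)
  have e3 : dist (q.1 - s * η.1, q.2 - s * η.2) q ≤ s * (|η.1| + |η.2|) := by
    rw [Prod.dist_eq, Real.dist_eq, Real.dist_eq]
    have e4 : |q.1 - s * η.1 - q.1| = s * |η.1| := by
      rw [show q.1 - s * η.1 - q.1 = -(s * η.1) by ring, abs_neg, abs_mul, abs_of_pos hs']
    have e5 : |q.2 - s * η.2 - q.2| = s * |η.2| := by
      rw [show q.2 - s * η.2 - q.2 = -(s * η.2) by ring, abs_neg, abs_mul, abs_of_pos hs']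
    simp only [e4, e5]
    exact max_le (by nlinarith [abs_nonneg η.2]) (by nlinarith [abs_nonneg η.1])
  have e6 := dist_triangle z (q.1 - s * η.1, q.2 - s * η.2) q
  have e7 : 0 ≤ s * (|η.1| + |η.2|) := by positivity
  linarith

/-! ### Barriers -/

/-- Comparison with a barrier `b` on a compact set `V`: at a point where `u - b` exceeds `M`, either
the point is interior and `b` is a strict supersolution there, or `u - b` increases in some
direction pointing into `V`. -/
theorem le_of_barrier {V : Set (ℝ × ℝ)} (hV : IsCompact V) {u b : ℝ × ℝ → ℝ} {M : ℝ}
    (hu : ∀ x ∈ V, ContDiffAt ℝ (2 : ℕ) u x) (hb : ∀ x ∈ V, ContDiffAt ℝ (2 : ℕ) b x)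
    (heq : ∀ x ∈ V, aOp (pdx u x) (pdy u x) u x = 1 + pdx u x ^ 2 + pdy u x ^ 2)
    (h : ∀ x ∈ V, M < u x - b x →
      (V ∈ nhds x ∧ aOp (pdx b x) (pdy b x) b x < 1 + pdx b x ^ 2 + pdy b x ^ 2) ∨
      ∃ ξ η : ℝ, (∀ᶠ t in nhdsWithin (0 : ℝ) (Ioi 0), (x.1 + t * ξ, x.2 + t * η) ∈ V) ∧
        0 < (pdx u x - pdx b x) * ξ + (pdy u x - pdy b x) * η) :
    ∀ x ∈ V, u x - b x ≤ M := by
  intro x₀ hx₀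
  obtain ⟨z, hz, hmax⟩ := hV.exists_isMaxOn ⟨x₀, hx₀⟩ (f := fun x => u x - b x)
    (fun x hx => ((hu x hx).continuousAt.sub (hb x hx).continuousAt).continuousWithinAt)
  by_contra hcon
  push Not at hcon
  have hzM : M < u z - b z := lt_of_lt_of_le hcon (hmax hx₀)
  rcases h z hz hzM with ⟨hn, hsup⟩ | ⟨ξ, η, hev, hpos⟩
  · have hloc : IsLocalMax (fun x => u x - b x) z := hmax.isLocalMax hn
    obtain ⟨e1, e2, hcmp⟩ := hloc.compare (hu z hz) (hb z hz)
    have h1 := hcmp (pdx b z) (pdy b z)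
    have h2 := heq z hz
    rw [e1, e2] at h2
    linarith
  · have hg : HasGrad (fun x => u x - b x) (pdx u z - pdx b z) (pdy u z - pdy b z)
        (z.1 + 0 * ξ, z.2 + 0 * η) := by
      simpa using ((hu z hz).hasGrad (n := 1)).sub ((hb z hz).hasGrad (n := 1))
    have hd := hg.line
    have hlim := (hasDerivAt_iff_tendsto_slope.1 hd).mono_left
      (nhdsWithin_mono (0 : ℝ) (fun t (ht : 0 < t) => ht.ne') : nhdsWithin (0 : ℝ) (Ioi 0) ≤ _)
    obtain ⟨t, ⟨ht1, ht2⟩, ht3⟩ :=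
      ((hlim.eventually (lt_mem_nhds hpos)).and hev |>.and self_mem_nhdsWithin).exists
    have ht3 : 0 < t := ht3
    have h3 := hmax ht2
    rw [slope_def_field] at ht1
    simp only [zero_mul, add_zero, sub_zero] at ht1
    have h4 := (div_pos_iff_of_pos_right ht3).1 ht1
    simp only [mem_ofPred_eq] at h3
    linarith

/-- A function whose gradient is `C^n` is `C^(n+1)`. -/
theorem contDiffAt_of_hasGrad {f A B : ℝ × ℝ → ℝ} {p : ℝ × ℝ} {n : ℕ}
    (h : ∀ᶠ x in nhds p, HasGrad f (A x) (B x) x) (hA : ContDiffAt ℝ n A p)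
    (hB : ContDiffAt ℝ n B p) : ContDiffAt ℝ (n + 1 : ℕ) f p := by
  have := (contDiffAt_succ_iff_hasFDerivAt (𝕜 := ℝ) (n := n) (f := f) (x := p)).2
    ⟨fun x => A x • ContinuousLinearMap.fst ℝ ℝ ℝ + B x • ContinuousLinearMap.snd ℝ ℝ ℝ,
      ⟨_, h, fun x hx => ?_⟩, ?_⟩
  · simpa using this
  · refine HasFDerivAt.congr_fderiv hx ?_
    ext <;> simp
  · exact (hA.smul contDiffAt_const).add (hB.smul contDiffAt_const)

/-- Radial barrier profile, as a function of the squared radius: `-h' = g` solves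
`2 t g' = -g (1 + k + 4 k t g²)`, has prescribed steepness at squared radius `ρ`, and `h` is small
at `q₁`. It is the analogue of a catenoid, with `k = 1` replaced by a small constant. -/
theorem exists_profile {k q₁ R ε : ℝ} (hk : 0 < k) (hq₁ : 0 < q₁) (hR : q₁ < R) (hε : 0 < ε) :
    ∃ ρ, 0 < ρ ∧ ρ < q₁ ∧ ∀ B : ℝ, ∃ h g : ℝ → ℝ, h R = 0 ∧ h q₁ ≤ ε ∧ B < 2 * ρ * g ρ ∧
      ∀ t, ρ ≤ t → 0 < g t ∧ ContDiffAt ℝ (1 : ℕ) g t ∧ (t ≤ R → 0 ≤ h t) ∧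
        HasDerivAt g (-(g t * (1 + k + 4 * k * t * g t ^ 2) / (2 * t))) t ∧
        ∀ᶠ s in nhds t, HasDerivAt h (-g s) s := by
  have hR0 : 0 < R := hq₁.trans hR
  set N : ℝ := 2 + (R / ε) ^ 2 / (4 * q₁) with hN
  have hN1 : 1 < N := by
    have : 0 ≤ (R / ε) ^ 2 / (4 * q₁) := by positivity
    linarith
  have hN0 : 0 < N := by linarith
  set ρ := q₁ * N ^ (-(1 / k)) with hρ
  have hNk : 0 < N ^ (-(1 / k)) := rpow_pos_of_pos hN0 _
  have hρ0 : 0 < ρ := by positivity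
  have hρk : ρ ^ k = q₁ ^ k / N := by
    rw [hρ, mul_rpow hq₁.le hNk.le, ← rpow_mul hN0.le, show -(1 / k) * k = -1 by field_simp,
      rpow_neg_one]
    rfl
  refine ⟨ρ, hρ0, ?_, fun B => ?_⟩
  · have : N ^ (-(1 / k)) < 1 := rpow_lt_one_of_one_lt_of_neg hN1 (by
      have : 0 < 1 / k := by positivity
      linarith)
    nlinarith
  set e : ℝ := 4 * ρ / (B ^ 2 + 1) with he
  have he0 : 0 < e := by positivity
  set C : ℝ := (4 + e) / ρ ^ k with hC
  have hρk0 : 0 < ρ ^ k := rpow_pos_of_pos hρ0 _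
  have hC0 : 0 < C := by positivity
  have hCρ : C * ρ ^ k = 4 + e := by rw [hC]; field_simp
  set z : ℝ → ℝ := fun t => t * (C * t ^ k - 4) with hz
  set g : ℝ → ℝ := fun t => 1 / √(z t) with hg
  -- positivity of `z` on a neighbourhood of `[ρ, ∞)`
  have hzpos : ∀ t, 0 < t → 4 < C * t ^ k → 0 < z t := fun t ht h => mul_pos ht (by linarith)
  have hCt : ∀ t, ρ ≤ t → 4 < C * t ^ k := fun t ht => by
    have := mul_le_mul_of_nonneg_left (rpow_le_rpow hρ0.le ht hk.le) hC0.le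
    linarith
  have hdz : ∀ t, 0 < t → HasDerivAt z (C * (1 + k) * t ^ k - 4) t := by
    intro t ht
    have h1 := (hasDerivAt_id t).mul
      (((Real.hasDerivAt_rpow_const (x := t) (p := k) (Or.inl ht.ne')).const_mul C).sub_const 4)
    refine h1.congr_deriv ?_
    rw [rpow_sub_one ht.ne']
    simp only [id]
    field_simp
    ring
  have hgz : ∀ t, 0 < z t → 0 < g t ∧ g t ^ 2 = 1 / z t := by
    intro t ht
    refine ⟨by simp only [hg]; positivity, ?_⟩
    simp only [hg, div_pow, one_pow, sq_sqrt ht.le]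
  have hzc : ∀ t, 0 < t → ContDiffAt ℝ (1 : ℕ) z t := fun t ht =>
    contDiffAt_id.mul ((contDiffAt_const.mul (contDiffAt_id.rpow_const_of_ne ht.ne')).sub
      contDiffAt_const)
  have hgc : ∀ t, 0 < t → 0 < z t → ContDiffAt ℝ (1 : ℕ) g t := fun t ht hzt =>
    contDiffAt_const.div ((hzc t ht).sqrt hzt.ne') (Real.sqrt_ne_zero'.2 hzt)
  have hcontOn : ContinuousOn g {t | 0 < t ∧ 4 < C * t ^ k} := fun t ht =>
    (hgc t ht.1 (hzpos t ht.1 ht.2)).continuousAt.continuousWithinAt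
  have hconn : ∀ t, ρ ≤ t → ∀ᶠ s in nhds t, 0 < s ∧ 4 < C * s ^ k := by
    intro t ht
    have ht0 : 0 < t := hρ0.trans_le ht
    refine (lt_mem_nhds ht0).and ?_
    have : ContinuousAt (fun s : ℝ => C * s ^ k) t :=
      continuousAt_const.mul (continuousAt_id.rpow_const (Or.inl ht0.ne'))
    exact this.eventually (lt_mem_nhds (hCt t ht))
  have hseg : ∀ s, 0 < s → 4 < C * s ^ k → ∀ y ∈ uIcc s R, 0 < y ∧ 4 < C * y ^ k := by
    intro s hs hs4 y hy
    have hρR : ρ ≤ R := by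
      have : N ^ (-(1 / k)) < 1 := rpow_lt_one_of_one_lt_of_neg hN1 (by
        have : 0 < 1 / k := by positivity
        linarith)
      nlinarith
    have hmin := hy.1
    rcases min_le_iff.1 hmin with h | h
    · refine ⟨hs.trans_le h, ?_⟩
      have := mul_le_mul_of_nonneg_left (rpow_le_rpow hs.le h hk.le) hC0.le
      linarith
    · exact ⟨hR0.trans_le h, hCt y (hρR.trans h)⟩
  have hh : ∀ s, 0 < s → 4 < C * s ^ k →
      HasDerivAt (fun t => ∫ y in t..R, g y) (-g s) s := by
    intro s hs hs4
    have h_int : IntervalIntegrable g volume s R :=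
      (hcontOn.mono fun y hy => hseg s hs hs4 y hy).intervalIntegrable
    refine intervalIntegral.integral_hasDerivAt_left h_int ?_
      (hgc s hs (hzpos s hs hs4)).continuousAt
    have hopen : {t : ℝ | 0 < t ∧ 4 < C * t ^ k} ∈ nhds s := by
      have : ContinuousAt (fun s : ℝ => C * s ^ k) s :=
        continuousAt_const.mul (continuousAt_id.rpow_const (Or.inl hs.ne'))
      exact (lt_mem_nhds hs).and (this.eventually (lt_mem_nhds hs4))
    obtain ⟨O, hO, hOo, hsO⟩ := mem_nhds_iff.1 hopen
    exact (hcontOn.mono hO).stronglyMeasurableAtFilter hOo s hsO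
  have hρq : ρ < q₁ := by
    have : N ^ (-(1 / k)) < 1 := rpow_lt_one_of_one_lt_of_neg hN1 (by
      have : 0 < 1 / k := by positivity
      linarith)
    nlinarith
  refine ⟨fun t => ∫ y in t..R, g y, g, by simp, ?_, ?_, fun t ht => ?_⟩
  · -- the bound on `h q₁`
    have hzq : (R / ε) ^ 2 ≤ z q₁ := by
      have h1 : C * q₁ ^ k = (4 + e) * N := by
        rw [hC, hρk]
        have : 0 < q₁ ^ k := rpow_pos_of_pos hq₁ _
        field_simp
      have h2 : z q₁ = q₁ * ((4 + e) * N - 4) := by simp only [hz, h1]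
      rw [h2]
      have h3 : (R / ε) ^ 2 = 4 * q₁ * (N - 2) := by rw [hN]; field_simp; ring
      rw [h3]
      have := mul_pos (mul_pos hq₁ he0) hN0
      nlinarith
    have hgb : ∀ y ∈ uIoc q₁ R, ‖g y‖ ≤ ε / R := by
      intro y hy
      rw [uIoc_of_le hR.le] at hy
      have hy0 : 0 < y := hq₁.trans hy.1
      have hy4 := hCt y (hρq.le.trans hy.1.le)
      have h1 : z q₁ ≤ z y := by
        have h2 := mul_le_mul_of_nonneg_left (rpow_le_rpow hq₁.le hy.1.le hk.le) hC0.le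
        have h3 := hCt q₁ hρq.le
        exact mul_le_mul hy.1.le (by linarith) (by linarith) hy0.le
      have h2 : R / ε ≤ √(z y) := Real.le_sqrt_of_sq_le (hzq.trans h1)
      rw [Real.norm_of_nonneg (hgz y (hzpos y hy0 hy4)).1.le, ← one_div_div]
      exact one_div_le_one_div_of_le (by positivity) h2
    have h1 := intervalIntegral.norm_integral_le_of_norm_le_const hgb
    have h2 := (le_abs_self _).trans h1
    rw [abs_of_pos (by linarith)] at h2
    refine h2.trans ?_
    rw [div_mul_eq_mul_div, div_le_iff₀ hR0]
    nlinarith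
  · -- steepness at `ρ`
    have h1 : z ρ = 4 * ρ ^ 2 / (B ^ 2 + 1) := by
      simp only [hz, hCρ, he]; field_simp; ring
    have h2 : √(z ρ) = 2 * ρ / √(B ^ 2 + 1) := by
      rw [h1, Real.sqrt_div (by positivity), show 4 * ρ ^ 2 = (2 * ρ) ^ 2 by ring,
        Real.sqrt_sq (by positivity)]
    simp only [hg, h2]
    rw [one_div_div, mul_div_assoc', mul_div_cancel_left₀ _ (by positivity)]
    exact Real.lt_sqrt_of_sq_lt (by linarith)
  · have ht0 : 0 < t := hρ0.trans_le ht
    have hzt := hzpos t ht0 (hCt t ht)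
    obtain ⟨hg0, hg2⟩ := hgz t hzt
    refine ⟨hg0, hgc t ht0 hzt, fun htR => ?_, ?_, ?_⟩
    · refine intervalIntegral.integral_nonneg htR fun y hy => (hgz y ?_).1.le
      exact hzpos y (ht0.trans_le hy.1) (hCt y (ht.trans hy.1))
    · have h1 := ((hdz t ht0).sqrt hzt.ne').inv (Real.sqrt_ne_zero'.2 hzt)
      have h2 : g = fun t => (√(z t))⁻¹ := by funext t; simp only [hg, one_div]
      rw [h2]
      refine h1.congr_deriv ?_
      have hs0 : √(z t) ≠ 0 := Real.sqrt_ne_zero'.2 hzt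
      have hs2 : √(z t) ^ 2 = z t := sq_sqrt hzt.le
      have hzt' : z t = t * (C * t ^ k - 4) := rfl
      field_simp
      rw [hs2, hzt']
      ring
    · exact (hconn t ht).mono fun s hs => hh s hs.1 hs.2

/-! ### Algebra of the corner barrier -/

theorem corner_algebra_I {P Q r s t d₁ d₂ K : ℝ} (hP : |P| ≤ 1 + K) (hQ : |Q| ≤ 1 + K)
    (hK : 0 ≤ K) (hr : |r| ≤ K) (hs : |s| ≤ K) (ht : |t| ≤ K) :
    r * (-2 * Q * d₂ + d₂ ^ 2) - 2 * s * (-P * d₂ - Q * d₁ + d₁ * d₂) +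
      t * (-2 * P * d₁ + d₁ ^ 2) - (-2 * P * d₁ + d₁ ^ 2 - 2 * Q * d₂ + d₂ ^ 2) ≤
    (|d₁| + |d₂|) * (6 * (1 + K) ^ 2) * (1 + (|d₁| + |d₂|)) := by
  have b1 : |Q * d₂| ≤ (1 + K) * |d₂| := by rw [abs_mul]; gcongr
  have b2 : |P * d₂| ≤ (1 + K) * |d₂| := by rw [abs_mul]; gcongr
  have b3 : |Q * d₁| ≤ (1 + K) * |d₁| := by rw [abs_mul]; gcongr
  have b4 : |P * d₁| ≤ (1 + K) * |d₁| := by rw [abs_mul]; gcongr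
  have n1 := abs_nonneg d₁
  have n2 := abs_nonneg d₂
  have c1 : |(-2 * Q * d₂ + d₂ ^ 2)| ≤ 2 * ((1 + K) * |d₂|) + |d₂| ^ 2 := by
    refine (abs_add_le _ _).trans ?_
    rw [show -2 * Q * d₂ = -2 * (Q * d₂) by ring, abs_mul, abs_neg, abs_two, abs_pow]
    linarith
  have c2 : |(-2 * P * d₁ + d₁ ^ 2)| ≤ 2 * ((1 + K) * |d₁|) + |d₁| ^ 2 := by
    refine (abs_add_le _ _).trans ?_
    rw [show -2 * P * d₁ = -2 * (P * d₁) by ring, abs_mul, abs_neg, abs_two, abs_pow]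
    linarith
  have c3 : |(-P * d₂ - Q * d₁ + d₁ * d₂)| ≤ (1 + K) * |d₂| + (1 + K) * |d₁| + |d₁| * |d₂| := by
    refine (abs_add_le _ _).trans ?_
    rw [abs_mul d₁]
    have := abs_sub (-P * d₂) (Q * d₁)
    rw [show -P * d₂ = -(P * d₂) by ring, abs_neg] at this
    rw [show -P * d₂ = -(P * d₂) by ring]
    linarith
  have e1 : r * (-2 * Q * d₂ + d₂ ^ 2) ≤ K * (2 * ((1 + K) * |d₂|) + |d₂| ^ 2) := by
    refine (le_abs_self _).trans ?_
    rw [abs_mul]; gcongr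
  have e2 : t * (-2 * P * d₁ + d₁ ^ 2) ≤ K * (2 * ((1 + K) * |d₁|) + |d₁| ^ 2) := by
    refine (le_abs_self _).trans ?_
    rw [abs_mul]; gcongr
  have e3 : -(s * (-P * d₂ - Q * d₁ + d₁ * d₂)) ≤
      K * ((1 + K) * |d₂| + (1 + K) * |d₁| + |d₁| * |d₂|) := by
    refine (neg_le_abs _).trans ?_
    rw [abs_mul]; gcongr
  have e4 := le_abs_self (P * d₁)
  have e5 := le_abs_self (Q * d₂)
  have e6 : (|d₁| + |d₂|) * (6 * (1 + K) ^ 2) * (1 + (|d₁| + |d₂|)) -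
      (K * (2 * ((1 + K) * |d₂|) + |d₂| ^ 2) + K * (2 * ((1 + K) * |d₁|) + |d₁| ^ 2)
      + 2 * (K * ((1 + K) * |d₂| + (1 + K) * |d₁| + |d₁| * |d₂|)) + 2 * ((1 + K) * |d₁|)
      + 2 * ((1 + K) * |d₂|)) = (|d₁| + |d₂|) * (4 + 6 * K + 2 * K ^ 2) +
      (|d₁| + |d₂|) ^ 2 * (6 + 11 * K + 6 * K ^ 2) := by ring
  have e7 : 0 ≤ (|d₁| + |d₂|) * (4 + 6 * K + 2 * K ^ 2) +
      (|d₁| + |d₂|) ^ 2 * (6 + 11 * K + 6 * K ^ 2) := by positivity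
  have s1 := sq_nonneg d₁
  have s2 := sq_nonneg d₂
  linarith

theorem corner_algebra_II {P Q y₁ y₂ g k K : ℝ} (hg : 0 < g) (hK : 0 ≤ K)
    (hPQ : P ^ 2 + Q ^ 2 ≤ K) (hq : 0 < y₁ ^ 2 + y₂ ^ 2) (hk : 0 ≤ k)
    (hkK : k * (4 * (1 + K) ^ 2) ≤ 1) :
    -2 * g * (2 + (P - 2 * g * y₁) ^ 2 + (Q - 2 * g * y₂) ^ 2) +
      2 * g * (1 + k + 4 * k * (y₁ ^ 2 + y₂ ^ 2) * g ^ 2) / (y₁ ^ 2 + y₂ ^ 2) *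
        (y₁ ^ 2 + y₂ ^ 2 + (y₁ * Q - y₂ * P) ^ 2) ≤
    -(g * (1 + 4 * g ^ 2 * (y₁ ^ 2 + y₂ ^ 2)) / (2 * (1 + K))) := by
  set q := y₁ ^ 2 + y₂ ^ 2 with hqd
  set σ := 4 * g ^ 2 * q with hσ
  set X := (y₁ * Q - y₂ * P) ^ 2 / q with hX
  set Z := (y₁ * (P - 2 * g * y₁) + y₂ * (Q - 2 * g * y₂)) ^ 2 / q with hZ
  have hX0 : 0 ≤ X := by positivity
  have hZ0 : 0 ≤ Z := by positivity
  have hσ0 : 0 ≤ σ := by positivity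
  have hXK : X ≤ K := by
    rw [hX, div_le_iff₀ hq]
    have : (y₁ * Q - y₂ * P) ^ 2 + (y₁ * P + y₂ * Q) ^ 2 = (P ^ 2 + Q ^ 2) * q := by
      rw [hqd]; ring
    nlinarith [sq_nonneg (y₁ * P + y₂ * Q)]
  have hXZ : (P - 2 * g * y₁) ^ 2 + (Q - 2 * g * y₂) ^ 2 = X + Z := by
    rw [hX, hZ, ← add_div, eq_div_iff hq.ne', hqd]; ring
  have hσZ : σ ≤ 2 * Z + 2 * K := by
    have h1 : σ = (2 * g * q) ^ 2 / q := by rw [hσ]; field_simp; ring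
    have h2 : (y₁ * P + y₂ * Q) ^ 2 / q ≤ K := by
      rw [div_le_iff₀ hq]
      have : (y₁ * Q - y₂ * P) ^ 2 + (y₁ * P + y₂ * Q) ^ 2 = (P ^ 2 + Q ^ 2) * q := by
        rw [hqd]; ring
      nlinarith [sq_nonneg (y₁ * Q - y₂ * P)]
    have h3 : (2 * g * q) ^ 2 / q ≤ 2 * Z + 2 * ((y₁ * P + y₂ * Q) ^ 2 / q) := by
      rw [hZ, mul_div_assoc', mul_div_assoc', ← add_div]
      refine div_le_div_of_nonneg_right ?_ hq.le
      have : 2 * g * q = (y₁ * P + y₂ * Q) -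
        (y₁ * (P - 2 * g * y₁) + y₂ * (Q - 2 * g * y₂)) := by rw [hqd]; ring
      rw [this]
      nlinarith [sq_nonneg ((y₁ * P + y₂ * Q) +
        (y₁ * (P - 2 * g * y₁) + y₂ * (Q - 2 * g * y₂)))]
    linarith
  have hB : 2 * g * (1 + k + 4 * k * q * g ^ 2) / q * (q + (y₁ * Q - y₂ * P) ^ 2) =
      2 * g * (1 + k * (1 + σ)) * (1 + X) := by
    rw [hX, hσ]; field_simp; ring
  rw [hB, add_assoc, hXZ]
  have hK1 : 0 < 1 + K := by linarith
  have m1 : 1 + σ ≤ 2 * (1 + K) * (1 + Z) := by nlinarith [mul_nonneg hK hZ0]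
  have m2 : k * (1 + X) ≤ 1 / (4 * (1 + K)) := by
    rw [le_div_iff₀ (by positivity)]
    have : k * (1 + X) * (4 * (1 + K)) ≤ k * (1 + K) * (4 * (1 + K)) := by gcongr
    nlinarith
  have m3 : (1 + σ) / (2 * (1 + K)) ≤ 1 + Z := by
    rw [div_le_iff₀ (by positivity)]; linarith
  have m4 : k * (1 + X) * (1 + σ) ≤ 1 / (4 * (1 + K)) * (1 + σ) := by gcongr
  have m5 : 1 / (4 * (1 + K)) * (1 + σ) = (1 + σ) / (2 * (1 + K)) / 2 := by field_simp; ring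
  have m6 : g * (1 + σ) / (2 * (1 + K)) = g * ((1 + σ) / (2 * (1 + K))) := by ring
  rw [m6]
  set Y := (1 + σ) / (2 * (1 + K))
  have m7 : -(1 + Z) + k * (1 + X) * (1 + σ) ≤ -Y / 2 := by linarith
  have := mul_le_mul_of_nonneg_left m7 (by positivity : 0 ≤ 2 * g)
  linarith

theorem corner_algebra_III {y₁ y₂ g K δ : ℝ} (hg : 0 < g) (hK : 0 ≤ K)
    (hy₁ : |y₁| ≤ δ) (hy₂ : |y₂| ≤ δ) (hδ : δ * (100 * (1 + K) ^ 3) < 1) :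
    (|2 * g * y₁| + |2 * g * y₂|) * (6 * (1 + K) ^ 2) * (1 + (|2 * g * y₁| + |2 * g * y₂|)) <
      g * (1 + 4 * g ^ 2 * (y₁ ^ 2 + y₂ ^ 2)) / (2 * (1 + K)) := by
  set D := |2 * g * y₁| + |2 * g * y₂| with hD
  have hD0 : 0 ≤ D := by positivity
  have hDδ : D ≤ 4 * g * δ := by
    rw [hD, abs_mul, abs_mul (2 * g), abs_of_pos (by positivity : 0 < 2 * g)]
    have h1 := mul_le_mul_of_nonneg_left hy₁ (by positivity : 0 ≤ 2 * g)
    have h2 := mul_le_mul_of_nonneg_left hy₂ (by positivity : 0 ≤ 2 * g)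
    linarith
  set σ := 4 * g ^ 2 * (y₁ ^ 2 + y₂ ^ 2) with hσ
  have hDσ : 1 + D ≤ 2 * (1 + σ) := by
    have h1 : D ^ 2 ≤ 2 * σ := by
      have e1 := sq_abs (2 * g * y₁)
      have e2 := sq_abs (2 * g * y₂)
      rw [hD, hσ]
      have := sq_nonneg (|2 * g * y₁| - |2 * g * y₂|)
      linarith
    have := sq_nonneg (D - 1)
    linarith
  have hσ0 : 0 ≤ σ := by positivity
  have hδ0 : 0 ≤ δ := (abs_nonneg _).trans hy₁
  have h1 : D * (6 * (1 + K) ^ 2) * (1 + D) ≤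
      (4 * g * δ) * (6 * (1 + K) ^ 2) * (2 * (1 + σ)) := by gcongr
  refine h1.trans_lt ?_
  rw [lt_div_iff₀ (by positivity)]
  have h3 : 0 < g * (1 + σ) := by positivity
  have h4 := mul_lt_mul_of_pos_left hδ h3
  have h5 : 0 ≤ g * (1 + σ) * (δ * (1 + K) ^ 3) := by positivity
  linarith

/-- The radial correction with profile `g` turns a translator jet into a strict supersolution jet,
close to the centre. -/
theorem corner_algebra {P Q r s t y₁ y₂ g k K δ : ℝ} (hg : 0 < g) (hK : 0 ≤ K)
    (hPQ : P ^ 2 + Q ^ 2 ≤ K) (hr : |r| ≤ K) (hs : |s| ≤ K) (ht : |t| ≤ K)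
    (hq : 0 < y₁ ^ 2 + y₂ ^ 2) (hk : 0 ≤ k) (hkK : k * (4 * (1 + K) ^ 2) ≤ 1)
    (hy₁ : |y₁| ≤ δ) (hy₂ : |y₂| ≤ δ) (hδ : δ * (100 * (1 + K) ^ 3) < 1)
    (hpde : (1 + Q ^ 2) * r - 2 * P * Q * s + (1 + P ^ 2) * t = 1 + P ^ 2 + Q ^ 2) :
    (1 + (Q - 2 * g * y₂) ^ 2) * (r - 2 * g +
        2 * g * (1 + k + 4 * k * (y₁ ^ 2 + y₂ ^ 2) * g ^ 2) / (y₁ ^ 2 + y₂ ^ 2) * y₁ ^ 2) -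
      2 * (P - 2 * g * y₁) * (Q - 2 * g * y₂) * (s +
        2 * g * (1 + k + 4 * k * (y₁ ^ 2 + y₂ ^ 2) * g ^ 2) / (y₁ ^ 2 + y₂ ^ 2) * (y₁ * y₂)) +
      (1 + (P - 2 * g * y₁) ^ 2) * (t - 2 * g +
        2 * g * (1 + k + 4 * k * (y₁ ^ 2 + y₂ ^ 2) * g ^ 2) / (y₁ ^ 2 + y₂ ^ 2) * y₂ ^ 2) <
    1 + (P - 2 * g * y₁) ^ 2 + (Q - 2 * g * y₂) ^ 2 := by
  have hPK : |P| ≤ 1 + K := abs_le_of_sq_le_sq (by nlinarith [sq_nonneg Q]) (by linarith)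
  have hQK : |Q| ≤ 1 + K := abs_le_of_sq_le_sq (by nlinarith [sq_nonneg P]) (by linarith)
  have I := corner_algebra_I (d₁ := 2 * g * y₁) (d₂ := 2 * g * y₂) hPK hQK hK hr hs ht
  have II := corner_algebra_II hg hK hPQ hq hk hkK
  set G := 2 * g * (1 + k + 4 * k * (y₁ ^ 2 + y₂ ^ 2) * g ^ 2) / (y₁ ^ 2 + y₂ ^ 2)
  have III := corner_algebra_III hg hK hy₁ hy₂ hδ
  linarith

/-! ### Removal of corners -/

theorem hasGrad_sqDist (c x : ℝ × ℝ) :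
    HasGrad (fun x => sqDist x c) (2 * (x.1 - c.1)) (2 * (x.2 - c.2)) x := by
  have h1 : HasGrad (fun x : ℝ × ℝ => x.1 - c.1) _ _ x := HasGrad.fst.sub (HasGrad.const c.1)
  have h2 : HasGrad (fun x : ℝ × ℝ => x.2 - c.2) _ _ x := HasGrad.snd.sub (HasGrad.const c.2)
  have h3 := (h1.mul h1).add (h2.mul h2)
  have e : (fun x => sqDist x c) = fun x : ℝ × ℝ =>
      (x.1 - c.1) * (x.1 - c.1) + (x.2 - c.2) * (x.2 - c.2) := by
    funext x; unfold sqDist; ring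
  rw [e]
  refine h3.congr_val ?_ ?_ <;> ring

theorem contDiffAt_sqDist (c x : ℝ × ℝ) (n : ℕ) : ContDiffAt ℝ n (fun x => sqDist x c) x := by
  unfold sqDist; fun_prop

theorem exists_sqDist_of_eventually {c : ℝ × ℝ} {p : ℝ × ℝ → Prop} (h : ∀ᶠ x in nhds c, p x) :
    ∃ ε > 0, ∀ x, sqDist x c < ε → p x := by
  obtain ⟨r, hr, hb⟩ := Metric.eventually_nhds_iff.1 h
  refine ⟨r ^ 2, by positivity, fun x hx => hb ?_⟩
  rw [Prod.dist_eq, Real.dist_eq, Real.dist_eq]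
  unfold sqDist at hx
  refine max_lt (abs_lt_of_sq_lt_sq ?_ hr.le) (abs_lt_of_sq_lt_sq ?_ hr.le)
  · nlinarith [sq_nonneg (x.2 - c.2)]
  · nlinarith [sq_nonneg (x.1 - c.1)]

theorem isCompact_sqDist_le (c : ℝ × ℝ) (R : ℝ) : IsCompact {x | sqDist x c ≤ R} := by
  refine Metric.isCompact_of_isClosed_isBounded
    (isClosed_le (continuous_sqDist c) continuous_const) ?_
  refine (Metric.isBounded_closedBall (x := c) (r := |R| + 1)).subset fun x hx => ?_
  have hx : sqDist x c ≤ R := hx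
  unfold sqDist at hx
  have hR := le_abs_self R
  have hR0 := abs_nonneg R
  rw [Metric.mem_closedBall, Prod.dist_eq, Real.dist_eq, Real.dist_eq]
  refine max_le (abs_le_of_sq_le_sq ?_ (by linarith)) (abs_le_of_sq_le_sq ?_ (by linarith))
  · nlinarith [sq_nonneg (x.2 - c.2)]
  · nlinarith [sq_nonneg (x.1 - c.1)]

/-- The jet of `w + h(|x - c|²)` where `h' = -g`. -/
theorem radial_jet {w : ℝ × ℝ → ℝ} {h g : ℝ → ℝ} {c x : ℝ × ℝ} {g' : ℝ}
    (hw : ContDiffAt ℝ (2 : ℕ) w x) (hg : ContDiffAt ℝ (1 : ℕ) g (sqDist x c))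
    (hg' : HasDerivAt g g' (sqDist x c))
    (hh : ∀ᶠ s in nhds (sqDist x c), HasDerivAt h (-g s) s) :
    let b := fun x => w x + h (sqDist x c)
    ContDiffAt ℝ (2 : ℕ) b x ∧ pdx b x = pdx w x - 2 * g (sqDist x c) * (x.1 - c.1) ∧
    pdy b x = pdy w x - 2 * g (sqDist x c) * (x.2 - c.2) ∧
    pdx (pdx b) x = pdx (pdx w) x - 2 * g (sqDist x c) - 4 * g' * (x.1 - c.1) ^ 2 ∧
    pdy (pdx b) x = pdy (pdx w) x - 4 * g' * ((x.1 - c.1) * (x.2 - c.2)) ∧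
    pdy (pdy b) x = pdy (pdy w) x - 2 * g (sqDist x c) - 4 * g' * (x.2 - c.2) ^ 2 := by
  intro b
  have hev : ∀ᶠ y in nhds x, HasGrad b (pdx w y - 2 * g (sqDist y c) * (y.1 - c.1))
      (pdy w y - 2 * g (sqDist y c) * (y.2 - c.2)) y := by
    filter_upwards [(continuous_sqDist c).continuousAt.eventually hh, hw.ev] with y hy hwy
    refine ((hwy.hasGrad (n := 1)).add ((hasGrad_sqDist c y).comp hy)).congr_val ?_ ?_ <;> ring
  have h1 : HasGrad (fun x : ℝ × ℝ => x.1 - c.1) _ _ x := HasGrad.fst.sub (HasGrad.const c.1)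
  have h2 : HasGrad (fun x : ℝ × ℝ => x.2 - c.2) _ _ x := HasGrad.snd.sub (HasGrad.const c.2)
  have hG : HasGrad (fun x => 2 * g (sqDist x c)) _ _ x :=
    ((hasGrad_sqDist c x).comp hg').const_mul 2
  have hwx := (contDiffAt_pdx (n := 1) hw).hasGrad (n := 0)
  have hwy := (contDiffAt_pdy (n := 1) hw).hasGrad (n := 0)
  obtain ⟨e1, e2, e3, e4⟩ := HasGrad.second hev (hwx.sub (hG.mul h1)) (hwy.sub (hG.mul h2))
  have hgc : ContDiffAt ℝ (1 : ℕ) (fun x => g (sqDist x c)) x :=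
    ContDiffAt.comp x hg (contDiffAt_sqDist c x 1)
  refine ⟨contDiffAt_of_hasGrad hev ?_ ?_, hev.self_of_nhds.pdx_eq, hev.self_of_nhds.pdy_eq,
    ?_, ?_, ?_⟩
  · exact (contDiffAt_pdx (n := 1) hw).sub ((contDiffAt_const.mul hgc).mul
      (contDiffAt_fst.sub contDiffAt_const))
  · exact (contDiffAt_pdy (n := 1) hw).sub ((contDiffAt_const.mul hgc).mul
      (contDiffAt_snd.sub contDiffAt_const))
  · rw [e1]; ring
  · rw [e2]; ring
  · rw [e4]; ring

theorem IsTranslatorOn.aOp_eq {Ω : Set (ℝ × ℝ)} {u : ℝ × ℝ → ℝ} (h : IsTranslatorOn Ω u)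
    {x : ℝ × ℝ} (hx : x ∈ Ω) :
    aOp (pdx u x) (pdy u x) u x = 1 + pdx u x ^ 2 + pdy u x ^ 2 := by
  have := h.2 x hx
  unfold aOp
  linarith

/-- A point boundary singularity of one of two translators is removable for the comparison
principle: the radial barriers of `exists_profile` become vertical on small circles about `c`, so
that the difference cannot be largest there. Here `R` is a squared radius. -/
theorem corner_removal {Ω A : Set (ℝ × ℝ)} {u w : ℝ × ℝ → ℝ} {c : ℝ × ℝ} (hΩ : IsOpen Ω)
    (hu : IsTranslatorOn Ω u)
    (hw : ∀ᶠ x in nhds c, ContDiffAt ℝ (2 : ℕ) w x ∧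
      aOp (pdx w x) (pdy w x) w x = 1 + pdx w x ^ 2 + pdy w x ^ 2)
    (hA : IsOpen A) (hcl : ∀ x ∈ closure A, x ∈ Ω → 0 < u x - w x → x ∈ A)
    (hΩA : ∀ᶠ x in nhds c, x ∈ closure A → x ≠ c → x ∈ Ω) :
    ∀ᶠ R in nhdsWithin (0 : ℝ) (Ioi 0), ∀ M, 0 ≤ M →
      (∀ x ∈ closure A, sqDist x c = R → u x - w x ≤ M) →
      ∀ x ∈ A, x ≠ c → sqDist x c ≤ R → u x - w x ≤ M := by
  have hwc := hw.self_of_nhds.1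
  have cx := (contDiffAt_pdx (n := 1) hwc)
  have cy := (contDiffAt_pdy (n := 1) hwc)
  have cxx := (contDiffAt_pdx (n := 0) cx).continuousAt
  have cxy := (contDiffAt_pdy (n := 0) cx).continuousAt
  have cyy := (contDiffAt_pdy (n := 0) cy).continuousAt
  have cpq : ContinuousAt (fun x => pdx w x ^ 2 + pdy w x ^ 2) c :=
    (cx.continuousAt.pow 2).add (cy.continuousAt.pow 2)
  obtain ⟨K, hK0, hK⟩ : ∃ K, 0 ≤ K ∧ ∀ᶠ x in nhds c, pdx w x ^ 2 + pdy w x ^ 2 ≤ K ∧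
      |pdx (pdx w) x| ≤ K ∧ |pdy (pdx w) x| ≤ K ∧ |pdy (pdy w) x| ≤ K := by
    refine ⟨(|pdx w c ^ 2 + pdy w c ^ 2| + 1) + (|pdx (pdx w) c| + 1) + (|pdy (pdx w) c| + 1)
      + (|pdy (pdy w) c| + 1), by positivity, ?_⟩
    filter_upwards [eventually_abs_le cpq, eventually_abs_le cxx, eventually_abs_le cxy,
      eventually_abs_le cyy] with x h1 h2 h3 h4
    have := le_abs_self (pdx w x ^ 2 + pdy w x ^ 2)
    have n1 := abs_nonneg (pdx w c ^ 2 + pdy w c ^ 2)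
    have n2 := abs_nonneg (pdx (pdx w) c)
    have n3 := abs_nonneg (pdy (pdx w) c)
    have n4 := abs_nonneg (pdy (pdy w) c)
    refine ⟨?_, ?_, ?_, ?_⟩ <;> linarith
  obtain ⟨ε₀, hε₀, hE⟩ := exists_sqDist_of_eventually (hw.and (hK.and hΩA))
  set δ : ℝ := 1 / (200 * (1 + K) ^ 3) with hδ
  have hδ0 : 0 < δ := by positivity
  have hδ1 : δ * (100 * (1 + K) ^ 3) < 1 := by rw [hδ]; field_simp; norm_num
  set k : ℝ := 1 / (4 * (1 + K) ^ 2) with hk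
  have hk0 : 0 < k := by positivity
  have hkK : k * (4 * (1 + K) ^ 2) ≤ 1 := by rw [hk]; field_simp; norm_num
  have hev : ∀ᶠ R in nhdsWithin (0 : ℝ) (Ioi 0), R < ε₀ ∧ R < δ ^ 2 :=
    nhdsWithin_le_nhds ((gt_mem_nhds hε₀).and (gt_mem_nhds (by positivity)))
  filter_upwards [hev] with R hR M hM hbd x₁ hx₁ hx₁c hx₁R
  rcases hx₁R.eq_or_lt with h | hlt
  · exact hbd x₁ (subset_closure hx₁) h
  have hq₁ : 0 < sqDist x₁ c :=
    lt_of_le_of_ne (sqDist_nonneg _ _) fun h => hx₁c (sqDist_eq_zero h.symm)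
  refine le_of_forall_pos_le_add fun ε hε => ?_
  obtain ⟨ρ, hρ0, hρq, hprof⟩ := exists_profile hk0 hq₁ hlt hε
  set V : Set (ℝ × ℝ) := closure A ∩ {x | ρ ≤ sqDist x c} ∩ {x | sqDist x c ≤ R} with hV
  have hVc : IsCompact V := by
    rw [hV, inter_comm]
    exact (isCompact_sqDist_le c R).inter_right
      (isClosed_closure.inter (isClosed_le continuous_const (continuous_sqDist c)))
  have hVΩ : ∀ x ∈ V, x ∈ Ω := by
    rintro x ⟨⟨h1, h2⟩, h3⟩
    have h2 : ρ ≤ sqDist x c := h2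
    have h3 : sqDist x c ≤ R := h3
    refine (hE x (by linarith)).2.2 h1 ?_
    rintro rfl
    have : sqDist x x = 0 := by unfold sqDist; ring
    linarith
  have hVw : ∀ x ∈ V, (ContDiffAt ℝ (2 : ℕ) w x ∧
      aOp (pdx w x) (pdy w x) w x = 1 + pdx w x ^ 2 + pdy w x ^ 2) ∧
      (pdx w x ^ 2 + pdy w x ^ 2 ≤ K ∧
      |pdx (pdx w) x| ≤ K ∧ |pdy (pdx w) x| ≤ K ∧ |pdy (pdy w) x| ≤ K) := by
    rintro x ⟨_, h3⟩
    have h3 : sqDist x c ≤ R := h3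
    have := hE x (by linarith)
    exact ⟨this.1, this.2.1⟩
  have hVu : ∀ x ∈ V, ContDiffAt ℝ (2 : ℕ) u x := fun x hx => hu.contDiffAt hΩ 2 (hVΩ x hx)
  obtain ⟨B, hB⟩ : ∃ B, ∀ x ∈ V, -((pdx u x - pdx w x) * (x.1 - c.1) +
      (pdy u x - pdy w x) * (x.2 - c.2)) ≤ B := by
    have hcont : ContinuousOn (fun x => -((pdx u x - pdx w x) * (x.1 - c.1) +
      (pdy u x - pdy w x) * (x.2 - c.2))) V := by
      intro x hx
      have c1 := (contDiffAt_pdx (n := 1) (hVu x hx)).continuousAt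
      have c2 := (contDiffAt_pdy (n := 1) (hVu x hx)).continuousAt
      have c3 := (contDiffAt_pdx (n := 1) (hVw x hx).1.1).continuousAt
      have c4 := (contDiffAt_pdy (n := 1) (hVw x hx).1.1).continuousAt
      exact ((((c1.sub c3).mul (by fun_prop)).add ((c2.sub c4).mul
        (by fun_prop))).neg).continuousWithinAt
    obtain ⟨B, hB⟩ := (hVc.image_of_continuousOn hcont).bddAbove
    exact ⟨B, fun x hx => hB ⟨x, hx, rfl⟩⟩
  obtain ⟨h, g, hhR, hhq, hgB, hgh⟩ := hprof B
  have hjet : ∀ x ∈ V, _ := fun x hx =>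
    radial_jet (hVw x hx).1.1 (hgh _ hx.1.2).2.1 (hgh _ hx.1.2).2.2.2.1 (hgh _ hx.1.2).2.2.2.2
  have key := le_of_barrier (M := M) hVc hVu (fun x hx => (hjet x hx).1)
    (fun x hx => hu.aOp_eq (hVΩ x hx)) ?_ x₁ ⟨⟨subset_closure hx₁, hρq.le⟩, hx₁R⟩
  · linarith
  intro x hx hxM
  have hh0 := (hgh _ hx.1.2).2.2.1 hx.2
  have hxA : x ∈ A := hcl x hx.1.1 (hVΩ x hx) (by linarith)
  have hxR : sqDist x c < R := by
    refine lt_of_le_of_ne hx.2 fun h => ?_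
    have := hbd x hx.1.1 h
    rw [h, hhR] at hxM
    linarith
  obtain ⟨_, j1, j2, j3, j4, j5⟩ := hjet x hx
  rcases (show ρ ≤ sqDist x c from hx.1.2).eq_or_lt with heq | hlt'
  · right
    refine ⟨x.1 - c.1, x.2 - c.2, ?_, ?_⟩
    · have hc : Continuous fun t : ℝ => (x.1 + t * (x.1 - c.1), x.2 + t * (x.2 - c.2)) := by
        fun_prop
      have hA' : ∀ᶠ t in nhds (0 : ℝ), (x.1 + t * (x.1 - c.1), x.2 + t * (x.2 - c.2)) ∈ A :=
        hc.continuousAt.eventually (hA.mem_nhds (by simpa using hxA))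
      have hR' : ∀ᶠ t in nhds (0 : ℝ),
          sqDist (x.1 + t * (x.1 - c.1), x.2 + t * (x.2 - c.2)) c < R :=
        ((continuous_sqDist c).comp hc).continuousAt.eventually
          (gt_mem_nhds (by simpa using hxR))
      filter_upwards [nhdsWithin_le_nhds hA', nhdsWithin_le_nhds hR', self_mem_nhdsWithin]
        with t h1 h2 h3
      have h3 : 0 < t := h3
      refine ⟨⟨subset_closure h1, ?_⟩, h2.le⟩
      have e : sqDist (x.1 + t * (x.1 - c.1), x.2 + t * (x.2 - c.2)) c =
          (1 + t) ^ 2 * sqDist x c := by unfold sqDist; ring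
      have e' : ρ ≤ sqDist (x.1 + t * (x.1 - c.1), x.2 + t * (x.2 - c.2)) c := by
        rw [e, ← heq]
        exact le_mul_of_one_le_left hρ0.le (one_le_pow₀ (by linarith))
      exact e'
    · have hb := hB x hx
      rw [j1, j2, ← heq]
      have e : (x.1 - c.1) ^ 2 + (x.2 - c.2) ^ 2 = ρ := by rw [heq]; rfl
      have e2 : 2 * ρ * g ρ = 2 * g ρ * (x.1 - c.1) ^ 2 + 2 * g ρ * (x.2 - c.2) ^ 2 := by
        rw [← e]; ring
      linarith
  · left
    refine ⟨?_, ?_⟩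
    · filter_upwards [hA.mem_nhds hxA,
        (continuous_sqDist c).continuousAt.eventually (lt_mem_nhds hlt'),
        (continuous_sqDist c).continuousAt.eventually (gt_mem_nhds hxR)] with y h1 h2 h3
      exact ⟨⟨subset_closure h1, h2.le⟩, h3.le⟩
    · obtain ⟨⟨_, hpde⟩, hPQ, hr, hs, ht⟩ := hVw x hx
      have hg0 := (hgh _ hx.1.2).1
      have hq : 0 < (x.1 - c.1) ^ 2 + (x.2 - c.2) ^ 2 := hρ0.trans hlt'
      have hy : (x.1 - c.1) ^ 2 + (x.2 - c.2) ^ 2 < δ ^ 2 := hxR.trans hR.2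
      have hy1 : |x.1 - c.1| ≤ δ :=
        abs_le_of_sq_le_sq (by linarith [sq_nonneg (x.2 - c.2)]) hδ0.le
      have hy2 : |x.2 - c.2| ≤ δ :=
        abs_le_of_sq_le_sq (by linarith [sq_nonneg (x.1 - c.1)]) hδ0.le
      have alg := corner_algebra hg0 hK0 hPQ hr hs ht hq hk0.le hkK hy1 hy2 hδ1 hpde
      unfold aOp
      rw [j1, j2, j3, j4, j5]
      have e : sqDist x c = (x.1 - c.1) ^ 2 + (x.2 - c.2) ^ 2 := rfl
      rw [← e] at alg
      refine lt_of_eq_of_lt ?_ alg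
      ring

/-! ### Tilted grim reapers -/

/-- Phase of a tilted grim reaper: its graph is asymptotically vertical where the phase is
`± π / 2`. -/
def phase (a b m κ τ : ℝ) (x : ℝ × ℝ) : ℝ := κ * ((a * x.2 - b * x.1) / √(1 + m ^ 2)) + τ

/-- Tilted grim reaper with slope `m` along the unit vector `(a, b)`. It is a translator for
`κ = 1` and a strict supersolution for `0 < κ < 1`. -/
def grim (a b m κ τ k : ℝ) (x : ℝ × ℝ) : ℝ :=
  m * (a * x.1 + b * x.2) - (1 + m ^ 2) / κ * log (cos (phase a b m κ τ x)) + k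

theorem continuous_phase (a b m κ τ : ℝ) : Continuous (phase a b m κ τ) := by
  unfold phase; fun_prop

theorem hasGrad_phase (a b m κ τ : ℝ) (x : ℝ × ℝ) :
    HasGrad (phase a b m κ τ) (-(κ * b / √(1 + m ^ 2))) (κ * a / √(1 + m ^ 2)) x := by
  have h := (((HasGrad.snd (p := x)).const_mul (κ * a / √(1 + m ^ 2))).sub
    ((HasGrad.fst (p := x)).const_mul (κ * b / √(1 + m ^ 2)))).add (HasGrad.const τ)
  have e : phase a b m κ τ = fun x : ℝ × ℝ => κ * a / √(1 + m ^ 2) * x.2 -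
      κ * b / √(1 + m ^ 2) * x.1 + τ := by
    funext x; unfold phase; ring
  rw [e]
  refine h.congr_val ?_ ?_ <;> ring

theorem grim_hasGrad {a b m κ τ k : ℝ} {x : ℝ × ℝ} (hκ : κ ≠ 0)
    (hc : cos (phase a b m κ τ x) ≠ 0) :
    HasGrad (grim a b m κ τ k) (m * a - √(1 + m ^ 2) * tan (phase a b m κ τ x) * b)
      (m * b + √(1 + m ^ 2) * tan (phase a b m κ τ x) * a) x := by
  have hμ : 0 < √(1 + m ^ 2) := Real.sqrt_pos.2 (by positivity)
  have hμ2 : √(1 + m ^ 2) ^ 2 = 1 + m ^ 2 := Real.sq_sqrt (by positivity)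
  have h1 : HasGrad (fun x => log (cos (phase a b m κ τ x))) _ _ x :=
    (hasGrad_phase a b m κ τ x).comp ((Real.hasDerivAt_cos _).log hc)
  have h2 := (((((HasGrad.fst (p := x)).const_mul a).add ((HasGrad.snd (p := x)).const_mul b)
    ).const_mul m).sub (h1.const_mul ((1 + m ^ 2) / κ))).add (HasGrad.const k)
  have e : (1 + m ^ 2) / κ = √(1 + m ^ 2) ^ 2 / κ := by rw [hμ2]
  refine h2.congr_val ?_ ?_
  · rw [tan_eq_sin_div_cos, e]; field_simp; ring
  · rw [tan_eq_sin_div_cos, e]; field_simp; ring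

theorem grim_contDiffAt {a b m κ τ k : ℝ} {x : ℝ × ℝ} (hc : cos (phase a b m κ τ x) ≠ 0)
    (n : ℕ) : ContDiffAt ℝ n (grim a b m κ τ k) x := by
  have hp : ContDiffAt ℝ n (phase a b m κ τ) x := by unfold phase; fun_prop
  unfold grim
  exact (((contDiffAt_const.mul ((contDiffAt_const.mul contDiffAt_fst).add
    (contDiffAt_const.mul contDiffAt_snd))).sub (contDiffAt_const.mul
    ((hp.cos).log hc))).add contDiffAt_const)

theorem grim_jet {a b m κ τ k : ℝ} {x : ℝ × ℝ} (hκ : κ ≠ 0)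
    (hc : cos (phase a b m κ τ x) ≠ 0) :
    let S := 1 + tan (phase a b m κ τ x) ^ 2
    pdx (pdx (grim a b m κ τ k)) x = κ * S * b ^ 2 ∧
    pdy (pdx (grim a b m κ τ k)) x = -(κ * S * (a * b)) ∧
    pdy (pdy (grim a b m κ τ k)) x = κ * S * a ^ 2 := by
  intro S
  have hμ : 0 < √(1 + m ^ 2) := Real.sqrt_pos.2 (by positivity)
  have hev : ∀ᶠ y in nhds x, cos (phase a b m κ τ y) ≠ 0 :=
    ((continuous_cos.comp (continuous_phase a b m κ τ)).continuousAt).eventually_ne hc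
  have ht : HasGrad (fun x => tan (phase a b m κ τ x)) _ _ x :=
    (hasGrad_phase a b m κ τ x).comp (Real.hasDerivAt_tan hc)
  have hS : 1 / cos (phase a b m κ τ x) ^ 2 = S := by
    simp only [S, tan_eq_sin_div_cos]
    field_simp
    rw [cos_sq_add_sin_sq]
  rw [hS] at ht
  have hA : HasGrad (fun y => m * a - √(1 + m ^ 2) * tan (phase a b m κ τ y) * b) _ _ x :=
    (HasGrad.const (m * a)).sub ((ht.const_mul (√(1 + m ^ 2))).mul (HasGrad.const b))
  have hB : HasGrad (fun y => m * b + √(1 + m ^ 2) * tan (phase a b m κ τ y) * a) _ _ x :=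
    (HasGrad.const (m * b)).add ((ht.const_mul (√(1 + m ^ 2))).mul (HasGrad.const a))
  obtain ⟨e1, e2, _, e4⟩ := HasGrad.second (hev.mono fun y hy => grim_hasGrad (k := k) hκ hy) hA hB
  refine ⟨?_, ?_, ?_⟩
  · rw [e1]; field_simp; ring
  · rw [e2]; field_simp; ring
  · rw [e4]; field_simp; ring

theorem grim_aOp {a b m κ τ k : ℝ} {x : ℝ × ℝ} (hκ : κ ≠ 0) (hab : a ^ 2 + b ^ 2 = 1)
    (hc : cos (phase a b m κ τ x) ≠ 0) :
    let w := grim a b m κ τ k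
    aOp (pdx w x) (pdy w x) w x = κ * (1 + pdx w x ^ 2 + pdy w x ^ 2) := by
  intro w
  have hμ2 : √(1 + m ^ 2) ^ 2 = 1 + m ^ 2 := Real.sq_sqrt (by positivity)
  have hg := grim_hasGrad (k := k) hκ hc
  obtain ⟨j1, j2, j3⟩ := grim_jet (k := k) hκ hc
  unfold aOp
  rw [j1, j2, j3, hg.pdx_eq, hg.pdy_eq]
  set t := tan (phase a b m κ τ x)
  set μ := √(1 + m ^ 2)
  linear_combination (κ * (1 + t ^ 2) * (1 + m ^ 2 * (a ^ 2 + b ^ 2 + 1)) - κ * (m ^ 2 + μ ^ 2 * t ^ 2)) * hab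
    - κ * t ^ 2 * hμ2

/-! ### Removal of the edges of the strip -/

/-- The stretched phase `π / 2 - κ (T₂ - T)`, which reaches `π / 2` already at `T = T₂`. -/
theorem strip_phase_bounds {κ T₂ T : ℝ} (hκ : 0 < κ) (hκ1 : κ < 1) (hT₂ : T₂ ≤ π / 2)
    (hTT : T < T₂) :
    T ≤ π / 2 - κ * (T₂ - T) ∧ π / 2 - κ * (T₂ - T) < π / 2 := by
  have h1 : 0 < κ * (T₂ - T) := mul_pos hκ (by linarith)
  have h2 : κ * (T₂ - T) ≤ 1 * (T₂ - T) := mul_le_mul_of_nonneg_right hκ1.le (by linarith)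
  constructor <;> linarith

theorem strip_profile {κ T₂ t₁ T : ℝ} (hκ : 0 < κ) (hκ1 : κ < 1) (hT₂ : T₂ ≤ π / 2)
    (ht₁ : -(π / 2) < t₁) (htT : t₁ ≤ T) (hTT : T < T₂) :
    0 ≤ log (cos (π / 2 - κ * (T₂ - t₁))) / κ - log (cos (π / 2 - κ * (T₂ - T))) / κ +
      log (cos T) - log (cos t₁) := by
  have hd : ∀ s ∈ Icc t₁ T, HasDerivAt
      (fun s => log (cos s) - log (cos (π / 2 - κ * (T₂ - s))) / κ)
      (tan (π / 2 - κ * (T₂ - s)) - tan s) s := by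
    intro s hs
    obtain ⟨h1, h2⟩ := strip_phase_bounds hκ hκ1 hT₂
      (lt_of_le_of_lt hs.2 hTT)
    have hs1 : -(π / 2) < s := lt_of_lt_of_le ht₁ hs.1
    have c1 : 0 < cos s := cos_pos_of_mem_Ioo ⟨hs1, by linarith⟩
    have c2 : 0 < cos (π / 2 - κ * (T₂ - s)) := cos_pos_of_mem_Ioo ⟨by linarith, h2⟩
    have e1 := (Real.hasDerivAt_cos s).log c1.ne'
    have e0 : HasDerivAt (fun s => π / 2 - κ * (T₂ - s)) κ s := by
      have := (((hasDerivAt_id s).const_sub T₂).const_mul κ).const_sub (π / 2)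
      simpa using this
    have e2 := ((e0.cos).log c2.ne').div_const κ
    have := e1.sub e2
    refine this.congr_deriv ?_
    rw [tan_eq_sin_div_cos, tan_eq_sin_div_cos]
    field_simp
    ring
  have hmono : MonotoneOn (fun s => log (cos s) - log (cos (π / 2 - κ * (T₂ - s))) / κ)
      (Icc t₁ T) := by
    refine monotoneOn_of_deriv_nonneg (convex_Icc _ _)
      (fun s hs => (hd s hs).continuousAt.continuousWithinAt)
      (fun s hs => (hd s (interior_subset hs)).differentiableAt.differentiableWithinAt) ?_
    intro s hs
    have hs' := interior_subset hs
    rw [(hd s hs').deriv, sub_nonneg]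
    obtain ⟨h1, h2⟩ := strip_phase_bounds hκ hκ1 hT₂
      (lt_of_le_of_lt hs'.2 hTT)
    have hs1 : -(π / 2) < s := lt_of_lt_of_le ht₁ hs'.1
    exact (strictMonoOn_tan.le_iff_le ⟨hs1, by linarith⟩ ⟨by linarith, h2⟩).2 h1
  have := hmono (left_mem_Icc.2 htT) (right_mem_Icc.2 htT) htT
  simp only at this
  linarith

theorem strip_profile_tendsto {t₁ T : ℝ} (ht₁ : -(π / 2) < t₁) (htT : t₁ ≤ T)
    (hTT : T < π / 2) {ε : ℝ} (hε : 0 < ε) :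
    ∀ᶠ s in nhdsWithin (0 : ℝ) (Ioi 0),
      log (cos (π / 2 - (1 - s) * (π / 2 - s - t₁))) / (1 - s) -
        log (cos (π / 2 - (1 - s) * (π / 2 - s - T))) / (1 - s) +
      log (cos T) - log (cos t₁) < ε := by
  have key : ∀ r : ℝ, -(π / 2) < r → r < π / 2 → ContinuousAt
      (fun s : ℝ => log (cos (π / 2 - (1 - s) * (π / 2 - s - r))) / (1 - s)) 0 := by
    intro r h1 h2
    have hc : 0 < cos r := cos_pos_of_mem_Ioo ⟨h1, h2⟩
    have hin : ContinuousAt (fun s : ℝ => cos (π / 2 - (1 - s) * (π / 2 - s - r))) 0 := by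
      fun_prop
    refine ContinuousAt.div (hin.log ?_) (by fun_prop) (by norm_num)
    have : π / 2 - (1 - 0) * (π / 2 - 0 - r) = r := by ring
    rw [this]; exact hc.ne'
  have hc := (((key t₁ ht₁ (by linarith)).sub (key T (by linarith) hTT)).add
    (continuousAt_const (y := log (cos T)))).sub (continuousAt_const (y := log (cos t₁)))
  have h0 : (fun s : ℝ => log (cos (π / 2 - (1 - s) * (π / 2 - s - t₁))) / (1 - s) -
        log (cos (π / 2 - (1 - s) * (π / 2 - s - T))) / (1 - s) +
      log (cos T) - log (cos t₁)) 0 < ε := by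
    have e : ∀ r : ℝ, π / 2 - (1 - 0) * (π / 2 - 0 - r) = r := fun r => by ring
    simp only [e]
    simpa using hε
  exact (hc.eventually_lt_const h0).filter_mono nhdsWithin_le_nhds

theorem phase_stretch (a b m κ τ T₂ : ℝ) (x : ℝ × ℝ) :
    phase a b m κ (κ * τ + π / 2 - κ * T₂) x =
      π / 2 - κ * (T₂ - phase a b m 1 τ x) := by
  unfold phase; ring

/-- A nonnegative bound for `u - w` on `phase = t₁` propagates up to the edge `phase = π / 2` of
the strip over which the grim reaper `w` lives: compare `u` with slightly narrower supersolution
grim reapers, which become infinite before the edge. -/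
theorem strip_removal {Ω A : Set (ℝ × ℝ)} {u : ℝ × ℝ → ℝ} {a b m τ k t₁ : ℝ} (hΩ : IsOpen Ω)
    (hu : IsTranslatorOn Ω u) (hab : a ^ 2 + b ^ 2 = 1) (hA : IsOpen A)
    (hbd : Bornology.IsBounded A)
    (hcl : ∀ x ∈ closure A, x ∈ Ω → 0 < u x - grim a b m 1 τ k x → x ∈ A)
    (ht₁ : -(π / 2) < t₁)
    (hΩA : ∀ x ∈ closure A, t₁ ≤ phase a b m 1 τ x → phase a b m 1 τ x < π / 2 → x ∈ Ω)
    {M : ℝ} (hM : 0 ≤ M)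
    (hb : ∀ x ∈ closure A, phase a b m 1 τ x = t₁ → u x - grim a b m 1 τ k x ≤ M) :
    ∀ x ∈ A, t₁ ≤ phase a b m 1 τ x → phase a b m 1 τ x < π / 2 →
      u x - grim a b m 1 τ k x ≤ M := by
  intro x₁ hx₁ hl₁ hr₁
  refine le_of_forall_pos_le_add fun ε hε => ?_
  have hμ0 : (0 : ℝ) < 1 + m ^ 2 := by positivity
  set T := phase a b m 1 τ with hT
  have hev1 := strip_profile_tendsto ht₁ hl₁ hr₁ (ε := ε / (1 + m ^ 2)) (by positivity)
  have hev2 : ∀ᶠ s in nhdsWithin (0 : ℝ) (Ioi 0), s < min 1 (π / 2 - T x₁) :=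
    (eventually_lt_nhds (lt_min one_pos (by linarith))).filter_mono nhdsWithin_le_nhds
  obtain ⟨s, ⟨hs1, hs2⟩, hs0 : 0 < s⟩ :=
    ((hev1.and hev2).and self_mem_nhdsWithin).exists
  have hs3 := lt_of_lt_of_le hs2 (min_le_left _ _)
  have hs4 := lt_of_lt_of_le hs2 (min_le_right _ _)
  set κ := 1 - s with hκd
  set T₂ := π / 2 - s with hT₂d
  have hκ : 0 < κ := by linarith
  have hκ1 : κ < 1 := by linarith
  have hT₂ : T₂ ≤ π / 2 := by linarith
  set k' := k + (1 + m ^ 2) * (log (cos (π / 2 - κ * (T₂ - t₁))) / κ - log (cos t₁)) with hk'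
  set w' := grim a b m κ (κ * τ + π / 2 - κ * T₂) k' with hw'
  have hΔ : ∀ x, w' x = grim a b m 1 τ k x + (1 + m ^ 2) *
      (log (cos (π / 2 - κ * (T₂ - t₁))) / κ - log (cos (π / 2 - κ * (T₂ - T x))) / κ +
      log (cos (T x)) - log (cos t₁)) := by
    intro x
    simp only [hw', grim, phase_stretch, hk', ← hT]
    ring
  have hcos : ∀ x, t₁ ≤ T x → T x < T₂ → cos (phase a b m κ (κ * τ + π / 2 - κ * T₂) x) ≠ 0 := by
    intro x h1 h2
    rw [phase_stretch, ← hT]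
    obtain ⟨h3, h4⟩ := strip_phase_bounds hκ hκ1 hT₂ h2
    exact (cos_pos_of_mem_Ioo ⟨by linarith, h4⟩).ne'
  have hTc : Continuous T := continuous_phase _ _ _ _ _
  -- an upper bound for `u` minus the linear part on the compact slab
  have hK : IsCompact (closure A ∩ {x | t₁ ≤ T x ∧ T x ≤ T₂}) :=
    (hbd.isCompact_closure).inter_right ((isClosed_le continuous_const hTc).inter
      (isClosed_le hTc continuous_const))
  obtain ⟨B, hB⟩ := (hK.image_of_continuousOn
    (f := fun x : ℝ × ℝ => u x - m * (a * x.1 + b * x.2)) (by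
      intro x hx
      have hxΩ := hΩA x hx.1 hx.2.1 (by linarith [hx.2.2])
      refine ContinuousAt.continuousWithinAt ?_
      exact (hu.contDiffAt hΩ 2 hxΩ).continuousAt.sub (by fun_prop))).bddAbove
  have hlim : Tendsto (fun r => log (cos (π / 2 - κ * (T₂ - r)))) (nhdsWithin T₂ (Iio T₂)) atBot := by
    refine Real.tendsto_log_nhdsGT_zero.comp (Real.tendsto_cos_pi_div_two.comp ?_)
    refine tendsto_nhdsWithin_iff.2 ⟨?_, ?_⟩
    · have : Continuous (fun r => π / 2 - κ * (T₂ - r)) := by fun_prop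
      have h := this.tendsto T₂
      simp only [sub_self, mul_zero, sub_zero] at h
      exact h.mono_left nhdsWithin_le_nhds
    · filter_upwards [self_mem_nhdsWithin] with r (hr : r < T₂)
      have := mul_pos hκ (sub_pos.2 hr)
      simp only [mem_Iio]; linarith
  have hev3 := hlim.eventually_le_atBot ((k' - B) * κ / (1 + m ^ 2))
  have hev4 : ∀ᶠ r in nhdsWithin T₂ (Iio T₂), T x₁ < r :=
    (eventually_gt_nhds (by linarith)).filter_mono nhdsWithin_le_nhds
  obtain ⟨T₃, ⟨h31, h32⟩, h33 : T₃ < T₂⟩ := ((hev3.and hev4).and self_mem_nhdsWithin).exists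
  set V := closure A ∩ {x | t₁ ≤ T x ∧ T x ≤ T₃} with hV
  have hVc : IsCompact V :=
    (hbd.isCompact_closure).inter_right ((isClosed_le continuous_const hTc).inter
      (isClosed_le hTc continuous_const))
  have hVΩ : ∀ x ∈ V, x ∈ Ω := fun x hx => hΩA x hx.1 hx.2.1 (by linarith [hx.2.2])
  have hmain := le_of_barrier hVc (u := u) (b := w') (M := M)
    (fun x hx => hu.contDiffAt hΩ 2 (hVΩ x hx))
    (fun x hx => grim_contDiffAt (hcos x hx.2.1 (by linarith [hx.2.2])) 2)
    (fun x hx => hu.aOp_eq (hVΩ x hx)) (by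
      intro x hx hlt
      have hx2 : T x ≤ T₃ := hx.2.2
      have hx1 : t₁ ≤ T x := hx.2.1
      have hp := strip_profile hκ hκ1 hT₂ ht₁ hx1 (lt_of_le_of_lt hx2 h33)
      have hp' := mul_nonneg hμ0.le hp
      have hc := hcos x hx1 (by linarith)
      rcases hx1.eq_or_lt with he | hl
      · exfalso
        have := hb x hx.1 he.symm
        rw [hΔ] at hlt
        linarith
      rcases hx2.eq_or_lt with he | hr
      · exfalso
        have h5 : u x - m * (a * x.1 + b * x.2) ≤ B :=
          hB ⟨x, ⟨hx.1, hx.2.1, by linarith⟩, rfl⟩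
        have h6 : w' x = m * (a * x.1 + b * x.2) -
            (1 + m ^ 2) / κ * log (cos (π / 2 - κ * (T₂ - T₃))) + k' := by
          simp only [hw', grim, phase_stretch, ← hT, he]
        have h7 : (1 + m ^ 2) / κ * log (cos (π / 2 - κ * (T₂ - T₃))) ≤ k' - B := by
          calc _ ≤ (1 + m ^ 2) / κ * ((k' - B) * κ / (1 + m ^ 2)) :=
                mul_le_mul_of_nonneg_left h31 (by positivity)
            _ = k' - B := by field_simp
        linarith
      · left
        have hxA : x ∈ A := hcl x hx.1 (hVΩ x hx) (by rw [hΔ] at hlt; linarith)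
        refine ⟨?_, ?_⟩
        · have h8 : ∀ᶠ y in nhds x, t₁ < T y := hTc.continuousAt.eventually_const_lt hl
          have h9 : ∀ᶠ y in nhds x, T y < T₃ := hTc.continuousAt.eventually_lt_const hr
          filter_upwards [hA.mem_nhds hxA, h8, h9] with y e1 e2 e3
          exact ⟨subset_closure e1, e2.le, e3.le⟩
        · have h10 := grim_aOp (k := k') hκ.ne' hab hc
          simp only at h10
          rw [← hw'] at h10
          rw [h10]
          have : 0 < 1 + pdx w' x ^ 2 + pdy w' x ^ 2 := by positivity
          linarith [mul_lt_mul_of_pos_right hκ1 this])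
  have hfin := hmain x₁ ⟨subset_closure hx₁, hl₁, h32.le⟩
  rw [hΔ] at hfin
  have h11 : (1 + m ^ 2) * (log (cos (π / 2 - κ * (T₂ - t₁))) / κ -
      log (cos (π / 2 - κ * (T₂ - T x₁))) / κ + log (cos (T x₁)) - log (cos t₁)) < ε := by
    have := mul_lt_mul_of_pos_left hs1 hμ0
    rwa [mul_div_cancel₀ _ hμ0.ne'] at this
  linarith

theorem phase_neg (a b m τ : ℝ) (x : ℝ × ℝ) :
    phase (-a) (-b) (-m) 1 (-τ) x = -phase a b m 1 τ x := by
  unfold phase; rw [neg_sq]; ring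

theorem grim_neg (a b m τ k : ℝ) (x : ℝ × ℝ) :
    grim (-a) (-b) (-m) 1 (-τ) k x = grim a b m 1 τ k x := by
  unfold grim; rw [phase_neg, cos_neg, neg_sq]; ring

/-! ### Comparison of two translators -/

theorem compare_algebra {p q P Q w11 w12 w22 U : ℝ}
    (hw : (1 + Q ^ 2) * w11 - 2 * P * Q * w12 + (1 + P ^ 2) * w22 = 1 + P ^ 2 + Q ^ 2)
    (hU : U = 1 + p ^ 2 + q ^ 2) :
    U - ((1 + q ^ 2) * w11 - 2 * p * q * w12 + (1 + p ^ 2) * w22) =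
      ((p + P) * (1 - w22) + 2 * q * w12) * (p - P) +
      ((q + Q) * (1 - w11) + 2 * P * w12) * (q - Q) := by
  subst hU; linear_combination (-1 : ℝ) * hw

/-- Strong maximum principle for the difference of two solutions, on a relatively closed piece
`A` of the positivity set: the difference has no maximum in `A`. -/
theorem no_max_in_component {Ω A : Set (ℝ × ℝ)} {u w : ℝ × ℝ → ℝ} (hΩ : IsPreconnected Ω)
    (hu : ∀ x ∈ Ω, ContDiffAt ℝ (2 : ℕ) u x ∧
      aOp (pdx u x) (pdy u x) u x = 1 + pdx u x ^ 2 + pdy u x ^ 2)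
    (hw : ∀ x ∈ Ω, ContDiffAt ℝ (2 : ℕ) w x ∧
      aOp (pdx w x) (pdy w x) w x = 1 + pdx w x ^ 2 + pdy w x ^ 2)
    (hA : IsOpen A) (hAc : IsPreconnected A) (hAΩ : ∀ x ∈ A, x ∈ Ω ∧ 0 < u x - w x)
    (hcl : ∀ x ∈ closure A, x ∈ Ω → 0 < u x - w x → x ∈ A)
    {q : ℝ × ℝ} (hq : q ∈ Ω) (hq0 : u q - w q ≤ 0) {y : ℝ × ℝ} (hy : y ∈ A) :
    ∃ x ∈ A, u y - w y < u x - w x := by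
  by_contra hcon
  push Not at hcon
  set c := u y - w y with hc
  have hcpos : 0 < c := (hAΩ y hy).2
  set w' : ℝ × ℝ → ℝ := fun x => w x + c with hw'
  have ex : pdx w' = pdx w := by funext x; simp [pdx, hw', fderiv_add_const]
  have ey : pdy w' = pdy w := by funext x; simp [pdy, hw', fderiv_add_const]
  have hw'c : ∀ x ∈ Ω, ContDiffAt ℝ (2 : ℕ) w' x := fun x hx => (hw x hx).1.add contDiffAt_const
  have hconst := strong_max (U := A) (f := fun x => u x - w' x) hA hAc
    (fun x hx => (hu x (hAΩ x hx).1).1.sub (hw'c x (hAΩ x hx).1)) (pdx u) (pdy u)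
    (fun x hx => by have := hcon x hx; simp only [hw']; linarith)
    (by
      intro z hz _
      have hzΩ := (hAΩ z hz).1
      have ux := contDiffAt_pdx (n := 1) (hu z hzΩ).1
      have uy := contDiffAt_pdy (n := 1) (hu z hzΩ).1
      have wx := contDiffAt_pdx (n := 1) (hw z hzΩ).1
      have wy := contDiffAt_pdy (n := 1) (hw z hzΩ).1
      have wxx := (contDiffAt_pdx (n := 0) wx).continuousAt
      have wxy := (contDiffAt_pdy (n := 0) wx).continuousAt
      have wyy := (contDiffAt_pdy (n := 0) wy).continuousAt
      have ux := ux.continuousAt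
      have uy := uy.continuousAt
      have wx := wx.continuousAt
      have wy := wy.continuousAt
      obtain ⟨C0, b0⟩ : ∃ C, ∀ᶠ x in nhds z, |pdx u x ^ 2 + pdy u x ^ 2| ≤ C :=
        ⟨_, eventually_abs_le ((ux.pow 2).add (uy.pow 2))⟩
      obtain ⟨C1, b1⟩ : ∃ C, ∀ᶠ x in nhds z, |(pdx u x + pdx w x) * (1 - pdy (pdy w) x) +
          2 * pdy u x * pdy (pdx w) x| ≤ C :=
        ⟨_, eventually_abs_le (((ux.add wx).mul (continuousAt_const.sub wyy)).add
          ((continuousAt_const.mul uy).mul wxy))⟩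
      obtain ⟨C2, b2⟩ : ∃ C, ∀ᶠ x in nhds z, |(pdy u x + pdy w x) * (1 - pdx (pdx w) x) +
          2 * pdx w x * pdy (pdx w) x| ≤ C :=
        ⟨_, eventually_abs_le (((uy.add wy).mul (continuousAt_const.sub wxx)).add
          ((continuousAt_const.mul wx).mul wxy))⟩
      refine ⟨|C0| + |C1| + |C2|, ?_⟩
      filter_upwards [b0, b1, b2, hA.mem_nhds hz] with x h0 h1 h2 hx
      have hxΩ := (hAΩ x hx).1
      refine ⟨by linarith [le_abs_self C0, abs_nonneg C1, abs_nonneg C2,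
        le_abs_self (pdx u x ^ 2 + pdy u x ^ 2)], ?_⟩
      obtain ⟨s1, s2, s3, s4, s5⟩ := second_sub (hu x hxΩ).1 (hw'c x hxΩ)
      have heq := compare_algebra (p := pdx u x) (q := pdy u x) (hw x hxΩ).2 (hu x hxΩ).2
      have hop : aOp (pdx u x) (pdy u x) (fun x => u x - w' x) x =
          aOp (pdx u x) (pdy u x) u x - ((1 + pdy u x ^ 2) * pdx (pdx w) x -
            2 * pdx u x * pdy u x * pdy (pdx w) x + (1 + pdx u x ^ 2) * pdy (pdy w) x) := by
        unfold aOp; rw [s3, s4, s5, ex, ey]; ring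
      rw [hop, heq, s1, s2, ex, ey]
      set d := pdx u x - pdx w x
      set e := pdy u x - pdy w x
      have hd := abs_nonneg d
      have he := abs_nonneg e
      set f := |u x - w' x|
      have hf : 0 ≤ f := abs_nonneg _
      have i1 := neg_abs_le (((pdx u x + pdx w x) * (1 - pdy (pdy w) x) + 2 * pdy u x * pdy (pdx w) x) * d)
      have i2 := neg_abs_le (((pdy u x + pdy w x) * (1 - pdx (pdx w) x) + 2 * pdx w x * pdy (pdx w) x) * e)
      rw [abs_mul] at i1 i2
      have j1 := mul_le_mul_of_nonneg_right (h1.trans (le_abs_self C1)) hd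
      have j2 := mul_le_mul_of_nonneg_right (h2.trans (le_abs_self C2)) he
      have k0 := abs_nonneg C0
      have k1 := abs_nonneg C1
      have k2 := abs_nonneg C2
      have l1 := mul_nonneg (add_nonneg k0 k2) hd
      have l2 := mul_nonneg (add_nonneg k0 k1) he
      have l3 := mul_nonneg (add_nonneg (add_nonneg k0 k1) k2) hf
      linarith)
    hy (by simp only [hw']; linarith)
  have hsub : closure A ∩ Ω ⊆ A := by
    rintro x ⟨hx, hxΩ⟩
    refine hcl x hx hxΩ ?_
    have hcont : ContinuousAt (fun x => u x - w' x) x :=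
      (hu x hxΩ).1.continuousAt.sub (hw'c x hxΩ).continuousAt
    have : u x - w' x = 0 := by
      have : (nhdsWithin x A).NeBot := mem_closure_iff_nhdsWithin_neBot.1 hx
      exact tendsto_nhds_unique_of_eventuallyEq (hcont.continuousWithinAt (s := A)).tendsto
        tendsto_const_nhds (by filter_upwards [self_mem_nhdsWithin] with z hz using hconst z hz)
    simp only [hw'] at this
    linarith
  have hqA : q ∈ A := by
    have := hΩ.subset_of_closure_inter_subset hA ⟨y, (hAΩ y hy).1, hy⟩ hsub
    exact this hq
  linarith [(hAΩ q hqA).2]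

/-! ### Components above a grim reaper are not enclosed -/

theorem cos_phase_pos {a b m τ : ℝ} {x : ℝ × ℝ} (h : |phase a b m 1 τ x| < π / 2) :
    0 < cos (phase a b m 1 τ x) :=
  cos_pos_of_mem_Ioo ⟨(abs_lt.1 h).1, (abs_lt.1 h).2⟩

theorem grim_solution {a b m τ k : ℝ} {x : ℝ × ℝ} (hab : a ^ 2 + b ^ 2 = 1)
    (h : |phase a b m 1 τ x| < π / 2) :
    ContDiffAt ℝ (2 : ℕ) (grim a b m 1 τ k) x ∧
      aOp (pdx (grim a b m 1 τ k) x) (pdy (grim a b m 1 τ k) x) (grim a b m 1 τ k) x =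
        1 + pdx (grim a b m 1 τ k) x ^ 2 + pdy (grim a b m 1 τ k) x ^ 2 := by
  refine ⟨grim_contDiffAt (cos_phase_pos h).ne' 2, ?_⟩
  have := grim_aOp (k := k) one_ne_zero hab (cos_phase_pos h).ne'
  simpa using this

/-- `strip_removal` at both edges of the strip. -/
theorem strip_removal_abs {Ω A : Set (ℝ × ℝ)} {u : ℝ × ℝ → ℝ} {a b m τ k t₁ : ℝ} (hΩ : IsOpen Ω)
    (hu : IsTranslatorOn Ω u) (hab : a ^ 2 + b ^ 2 = 1) (hA : IsOpen A)
    (hbd : Bornology.IsBounded A)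
    (hcl : ∀ x ∈ closure A, x ∈ Ω → 0 < u x - grim a b m 1 τ k x → x ∈ A)
    (ht₁ : 0 < t₁)
    (hΩA : ∀ x ∈ closure A, t₁ ≤ |phase a b m 1 τ x| → |phase a b m 1 τ x| < π / 2 → x ∈ Ω)
    {M : ℝ} (hM : 0 ≤ M)
    (hb : ∀ x ∈ closure A, |phase a b m 1 τ x| = t₁ → u x - grim a b m 1 τ k x ≤ M) :
    ∀ x ∈ A, t₁ ≤ |phase a b m 1 τ x| → |phase a b m 1 τ x| < π / 2 →
      u x - grim a b m 1 τ k x ≤ M := by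
  intro x hx h1 h2
  have hπ := Real.pi_pos
  rcases le_total 0 (phase a b m 1 τ x) with h0 | h0
  · rw [abs_of_nonneg h0] at h1 h2
    refine strip_removal hΩ hu hab hA hbd hcl (by linarith) ?_ hM ?_ x hx h1 h2
    · intro y hy e1 e2
      have : |phase a b m 1 τ y| = phase a b m 1 τ y := abs_of_nonneg (by linarith)
      exact hΩA y hy (by rwa [this]) (by rwa [this])
    · intro y hy e1
      exact hb y hy (by rw [e1, abs_of_pos ht₁])
  · rw [abs_of_nonpos h0] at h1 h2
    have := strip_removal (a := -a) (b := -b) (m := -m) (τ := -τ) (k := k) (t₁ := t₁) (M := M)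
      hΩ hu (by linarith [neg_sq a, neg_sq b]) hA hbd
      (by simpa only [grim_neg] using hcl) (by linarith) (by
        intro y hy e1 e2
        rw [phase_neg] at e1 e2
        have : |phase a b m 1 τ y| = -phase a b m 1 τ y := abs_of_nonpos (by linarith)
        exact hΩA y hy (this ▸ e1) (this ▸ e2)) hM (by
        intro y hy e1
        rw [phase_neg] at e1
        rw [grim_neg]
        exact hb y hy (by rw [← abs_neg, e1, abs_of_pos ht₁])) x hx
      (by rwa [phase_neg]) (by rwa [phase_neg])
    rwa [grim_neg] at this

/-- A component `A` of the region where the translator `u` lies above the grim reaper cannot be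
surrounded, inside the strip of the grim reaper, by the domain and finitely many corners. -/
theorem component_not_enclosed {Ω A Cn : Set (ℝ × ℝ)} {u : ℝ × ℝ → ℝ} {a b m τ k : ℝ}
    (hΩ : IsOpen Ω) (hΩc : IsPreconnected Ω) (hu : IsTranslatorOn Ω u)
    (hab : a ^ 2 + b ^ 2 = 1) (hΩS : ∀ x ∈ Ω, |phase a b m 1 τ x| < π / 2)
    (hA : IsOpen A) (hAc : IsPreconnected A) (hAne : A.Nonempty)
    (hbd : Bornology.IsBounded A)
    (hAΩ : ∀ x ∈ A, x ∈ Ω ∧ 0 < u x - grim a b m 1 τ k x)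
    (hcl : ∀ x ∈ closure A, x ∈ Ω → 0 < u x - grim a b m 1 τ k x → x ∈ A)
    {q : ℝ × ℝ} (hq : q ∈ Ω) (hq0 : u q - grim a b m 1 τ k q ≤ 0) (hCn : Cn.Finite)
    (hCΩ : ∀ c ∈ Cn, c ∉ Ω)
    (hE : ∀ x ∈ closure A, |phase a b m 1 τ x| < π / 2 → x ∈ Ω ∨ x ∈ Cn) : False := by
  set w := grim a b m 1 τ k with hw
  set T := phase a b m 1 τ with hT
  have hTc : Continuous T := continuous_phase _ _ _ _ _
  have hπ := Real.pi_pos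
  -- corners inside the open strip
  set D : Set (ℝ × ℝ) := {c | c ∈ Cn ∧ |T c| < π / 2} with hD
  have hDf : D.Finite := hCn.subset fun c hc => hc.1
  have hEv : ∀ᶠ t in nhdsWithin (π / 2) (Iio (π / 2)), (∀ c ∈ D, |T c| < t) ∧ 0 < t := by
    refine Filter.Eventually.and ?_ ?_
    · refine (eventually_all_finite hDf).2 fun c hc => ?_
      exact (eventually_gt_nhds hc.2).filter_mono nhdsWithin_le_nhds
    · exact (eventually_gt_nhds (by linarith)).filter_mono nhdsWithin_le_nhds
  obtain ⟨t₁, ⟨ht1, ht0⟩, ht2 : t₁ < π / 2⟩ := (hEv.and self_mem_nhdsWithin).exists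
  have small : ∀ {c : ℝ × ℝ} {p : ℝ × ℝ → Prop}, (∀ᶠ x in nhds c, p x) →
      ∀ᶠ R in nhdsWithin (0 : ℝ) (Ioi 0), ∀ x, sqDist x c ≤ R → p x := by
    intro c p h
    obtain ⟨ε, hε, hp⟩ := exists_sqDist_of_eventually h
    filter_upwards [(eventually_lt_nhds hε).filter_mono nhdsWithin_le_nhds] with R hR x hx
    exact hp x (lt_of_le_of_lt hx hR)
  have hR1 : ∀ᶠ R in nhdsWithin (0 : ℝ) (Ioi 0), ∀ c ∈ D, ∀ x, sqDist x c ≤ R → |T x| < t₁ := by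
    refine (eventually_all_finite hDf).2 fun c hc => small ?_
    exact (hTc.abs.continuousAt).eventually_lt_const (ht1 c hc)
  have hR2 : ∀ᶠ R in nhdsWithin (0 : ℝ) (Ioi 0), ∀ c ∈ D, ∀ c' ∈ D, c' ≠ c →
      ∀ x, sqDist x c ≤ R → R < sqDist x c' := by
    refine (eventually_all_finite hDf).2 fun c hc => (eventually_all_finite hDf).2 fun c' hc' => ?_
    by_cases hcc : c' = c
    · exact Eventually.of_forall fun R h => absurd hcc h
    · have hpos : 0 < sqDist c c' := lt_of_le_of_ne (sqDist_nonneg _ _) fun h =>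
        hcc (sqDist_eq_zero h.symm).symm
      have h1 := small ((continuous_sqDist c').continuousAt.eventually_const_lt
        (show sqDist c c' / 2 < sqDist c c' by linarith))
      have h2 : ∀ᶠ R in nhdsWithin (0 : ℝ) (Ioi 0), R < sqDist c c' / 2 :=
        (eventually_lt_nhds (by linarith)).filter_mono nhdsWithin_le_nhds
      filter_upwards [h1, h2] with R e1 e2 _ x hx
      linarith [e1 x hx]
  have hR3 : ∀ᶠ R in nhdsWithin (0 : ℝ) (Ioi 0), ∀ c ∈ D, ∀ M, 0 ≤ M →
      (∀ x ∈ closure A, sqDist x c = R → u x - w x ≤ M) →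
      ∀ x ∈ A, x ≠ c → sqDist x c ≤ R → u x - w x ≤ M := by
    refine (eventually_all_finite hDf).2 fun c hc => ?_
    have hS : ∀ᶠ x in nhds c, |T x| < π / 2 := hTc.abs.continuousAt.eventually_lt_const hc.2
    refine corner_removal hΩ hu (hS.mono fun x hx => grim_solution hab hx) hA hcl ?_
    have hne : ∀ᶠ x in nhds c, ∀ c' ∈ Cn, c' ≠ c → x ≠ c' := by
      refine (eventually_all_finite hCn).2 fun c' _ => ?_
      by_cases hcc : c' = c
      · exact Eventually.of_forall fun x h => absurd hcc h
      · exact (continuousAt_id.eventually_ne (Ne.symm hcc)).mono fun x hx _ => hx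
    filter_upwards [hS, hne] with x h1 h2 h3 h4
    rcases hE x h3 h1 with h | h
    · exact h
    · exact absurd rfl (h2 x h h4)
  obtain ⟨R, ⟨⟨hR1, hR2⟩, hR3⟩, hR0 : 0 < R⟩ :=
    (((hR1.and hR2).and hR3).and self_mem_nhdsWithin).exists
  set K := closure A ∩ {x | |T x| ≤ t₁ ∧ ∀ c ∈ D, R ≤ sqDist x c} with hK
  have hKc : IsCompact K := by
    refine hbd.isCompact_closure.inter_right ?_
    refine (isClosed_le hTc.abs continuous_const).inter ?_
    have : {x : ℝ × ℝ | ∀ c ∈ D, R ≤ sqDist x c} = ⋂ c ∈ D, {x | R ≤ sqDist x c} := by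
      ext x; simp
    change IsClosed {x : ℝ × ℝ | ∀ c ∈ D, R ≤ sqDist x c}
    rw [this]
    exact isClosed_biInter fun c _ => isClosed_le continuous_const (continuous_sqDist c)
  have hKΩ : ∀ x ∈ K, x ∈ Ω := by
    rintro x ⟨hx, h1, h2⟩
    have h3 : |T x| < π / 2 := lt_of_le_of_lt h1 ht2
    rcases hE x hx h3 with h | h
    · exact h
    · have := h2 x ⟨h, h3⟩
      have h4 : sqDist x x = 0 := by simp [sqDist]
      linarith
  have hbound : ∀ M, 0 ≤ M → (∀ x ∈ K, u x - w x ≤ M) → ∀ x ∈ A, u x - w x ≤ M := by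
    intro M hM hKM x hx
    have hxΩ := (hAΩ x hx).1
    have hxS := hΩS x hxΩ
    by_cases hc : ∃ c ∈ D, sqDist x c ≤ R
    · obtain ⟨c, hcD, hcR⟩ := hc
      by_cases hxc : x = c
      · exact absurd hxΩ (hxc ▸ hCΩ c hcD.1)
      refine hR3 c hcD M hM ?_ x hx hxc hcR
      intro y hy hyR
      refine hKM y ⟨hy, (hR1 c hcD y hyR.le).le, fun c' hc' => ?_⟩
      by_cases hcc : c' = c
      · rw [hcc, hyR]
      · exact (hR2 c hcD c' hc' hcc y hyR.le).le
    · push Not at hc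
      by_cases hxt : |T x| ≤ t₁
      · exact hKM x ⟨subset_closure hx, hxt, fun c hcD => (hc c hcD).le⟩
      · push Not at hxt
        refine strip_removal_abs hΩ hu hab hA hbd hcl ht0 ?_ hM ?_ x hx hxt.le hxS
        · intro y hy e1 e2
          rcases hE y hy e2 with h | h
          · exact h
          · exact absurd (ht1 y ⟨h, e2⟩) (not_lt.2 e1)
        · intro y hy e1
          refine hKM y ⟨hy, e1.le, fun c hcD => ?_⟩
          by_contra hlt
          push Not at hlt
          have := hR1 c hcD y hlt.le
          linarith
  by_cases hpos : ∃ y ∈ K, 0 < u y - w y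
  · obtain ⟨y, hy, hy0⟩ := hpos
    obtain ⟨z, hz, hmax⟩ := hKc.exists_isMaxOn ⟨y, hy⟩ (f := fun x => u x - w x)
      (fun x hx => ((hu.contDiffAt hΩ 2 (hKΩ x hx)).continuousAt.sub
        (grim_solution hab (hΩS x (hKΩ x hx))).1.continuousAt).continuousWithinAt)
    have hz0 : 0 < u z - w z := lt_of_lt_of_le hy0 (hmax hy)
    have hzA : z ∈ A := hcl z hz.1 (hKΩ z hz) hz0
    obtain ⟨x, hx, hlt⟩ := no_max_in_component hΩc
      (fun x hx => ⟨hu.contDiffAt hΩ 2 hx, hu.aOp_eq hx⟩)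
      (fun x hx => grim_solution hab (hΩS x hx)) hA hAc hAΩ hcl hq hq0 hzA
    exact absurd (hbound _ hz0.le (fun x hx => hmax hx) x hx) (not_le.2 hlt)
  · push Not at hpos
    obtain ⟨x, hx⟩ := hAne
    linarith [hbound 0 le_rfl hpos x hx, (hAΩ x hx).2]

/-! ### Grim reapers tangent to the graph -/

/-- Slope of `u` at `q` in the direction of angle `θ`. -/
def dirSlope (u : ℝ × ℝ → ℝ) (q : ℝ × ℝ) (θ : ℝ) : ℝ := cos θ * pdx u q + sin θ * pdy u q

/-- Phase at `q` of the grim reaper of direction `θ` that is tangent to the graph of `u` at `q`. -/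
def dirPhase (u : ℝ × ℝ → ℝ) (q : ℝ × ℝ) (θ : ℝ) : ℝ :=
  arctan ((cos θ * pdy u q - sin θ * pdx u q) / √(1 + dirSlope u q θ ^ 2))

/-- Phase shift placing `q` at phase `dirPhase u q θ`. -/
def dirShift (u : ℝ × ℝ → ℝ) (q : ℝ × ℝ) (θ : ℝ) : ℝ :=
  dirPhase u q θ - (cos θ * q.2 - sin θ * q.1) / √(1 + dirSlope u q θ ^ 2)

/-- Height shift making the grim reaper agree with `u` at `q`. -/
def dirHeight (u : ℝ × ℝ → ℝ) (q : ℝ × ℝ) (θ : ℝ) : ℝ :=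
  u q - dirSlope u q θ * (cos θ * q.1 + sin θ * q.2) +
    (1 + dirSlope u q θ ^ 2) * log (cos (dirPhase u q θ))

/-- Phase function of the tangent grim reaper of direction `θ`. -/
def tphase (u : ℝ × ℝ → ℝ) (q : ℝ × ℝ) (θ : ℝ) : ℝ × ℝ → ℝ :=
  phase (cos θ) (sin θ) (dirSlope u q θ) 1 (dirShift u q θ)

/-- The grim reaper of direction `θ` tangent to the graph of `u` at `q`. -/
def treaper (u : ℝ × ℝ → ℝ) (q : ℝ × ℝ) (θ : ℝ) : ℝ × ℝ → ℝ :=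
  grim (cos θ) (sin θ) (dirSlope u q θ) 1 (dirShift u q θ) (dirHeight u q θ)

section

variable {u : ℝ × ℝ → ℝ} {q : ℝ × ℝ} {θ : ℝ}

theorem sqrt_slope_pos (m : ℝ) : 0 < √(1 + m ^ 2) := Real.sqrt_pos.2 (by positivity)

theorem dirPhase_abs_lt : |dirPhase u q θ| < π / 2 :=
  abs_lt.2 ⟨neg_pi_div_two_lt_arctan _, arctan_lt_pi_div_two _⟩

theorem tphase_line (s : ℝ) :
    tphase u q θ (q.1 + s * cos θ, q.2 + s * sin θ) = dirPhase u q θ := by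
  simp only [tphase, phase, dirShift]; ring

theorem tphase_self : tphase u q θ q = dirPhase u q θ := by
  have := tphase_line (u := u) (q := q) (θ := θ) 0
  simpa using this

theorem treaper_line (s : ℝ) :
    treaper u q θ (q.1 + s * cos θ, q.2 + s * sin θ) = u q + s * dirSlope u q θ := by
  have h := tphase_line (u := u) (q := q) (θ := θ) s
  unfold tphase at h
  simp only [treaper, grim, h, dirHeight]
  linear_combination (s * dirSlope u q θ) * (cos_sq_add_sin_sq θ)

theorem treaper_self : treaper u q θ q = u q := by
  have := treaper_line (u := u) (q := q) (θ := θ) 0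
  simpa using this

theorem treaper_solution {x : ℝ × ℝ} (h : |tphase u q θ x| < π / 2) :
    ContDiffAt ℝ (2 : ℕ) (treaper u q θ) x ∧
      aOp (pdx (treaper u q θ) x) (pdy (treaper u q θ) x) (treaper u q θ) x =
        1 + pdx (treaper u q θ) x ^ 2 + pdy (treaper u q θ) x ^ 2 :=
  grim_solution (cos_sq_add_sin_sq θ) h

theorem treaper_grad : pdx (treaper u q θ) q = pdx u q ∧ pdy (treaper u q θ) q = pdy u q := by
  have hab : |tphase u q θ q| < π / 2 := by rw [tphase_self]; exact dirPhase_abs_lt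
  have h := grim_hasGrad (k := dirHeight u q θ) one_ne_zero (cos_phase_pos hab).ne'
  have e : √(1 + dirSlope u q θ ^ 2) * tan (tphase u q θ q) =
      cos θ * pdy u q - sin θ * pdx u q := by
    rw [tphase_self, dirPhase, tan_arctan]
    field_simp [(sqrt_slope_pos (dirSlope u q θ)).ne']
  have hx : pdx (treaper u q θ) q = _ := h.pdx_eq
  have hy : pdy (treaper u q θ) q = _ := h.pdy_eq
  unfold tphase at e
  rw [e] at hx hy
  have hcs := cos_sq_add_sin_sq θ
  constructor
  · rw [hx, dirSlope]; linear_combination pdx u q * hcs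
  · rw [hy, dirSlope]; linear_combination pdy u q * hcs

theorem treaper_hess_line : let w := treaper u q θ
    cos θ ^ 2 * pdx (pdx w) q + 2 * (cos θ * sin θ) * pdy (pdx w) q +
      sin θ ^ 2 * pdy (pdy w) q = 0 := by
  intro w
  have hab : |tphase u q θ q| < π / 2 := by rw [tphase_self]; exact dirPhase_abs_lt
  obtain ⟨h1, h2, h3⟩ := grim_jet (k := dirHeight u q θ) one_ne_zero (cos_phase_pos hab).ne'
  have h1 : pdx (pdx w) q = _ := h1
  have h2 : pdy (pdx w) q = _ := h2
  have h3 : pdy (pdy w) q = _ := h3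
  rw [h1, h2, h3]; ring

theorem continuous_dirSlope : Continuous (dirSlope u q) := by unfold dirSlope; fun_prop

theorem continuous_dirPhase : Continuous (dirPhase u q) := by
  unfold dirPhase
  refine continuous_arctan.comp (Continuous.div (by fun_prop) ?_ fun θ => (sqrt_slope_pos _).ne')
  exact Real.continuous_sqrt.comp (continuous_const.add (continuous_dirSlope.pow 2))

theorem continuous_dirShift : Continuous (dirShift u q) := by
  unfold dirShift
  refine continuous_dirPhase.sub (Continuous.div (by fun_prop) ?_ fun θ => (sqrt_slope_pos _).ne')
  exact Real.continuous_sqrt.comp (continuous_const.add (continuous_dirSlope.pow 2))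

theorem continuous_dirHeight : Continuous (dirHeight u q) := by
  unfold dirHeight
  have h := continuous_dirSlope (u := u) (q := q)
  refine (continuous_const.sub (h.mul (by fun_prop))).add ((continuous_const.add (h.pow 2)).mul ?_)
  refine Continuous.log (continuous_cos.comp continuous_dirPhase) fun θ => ?_
  exact (cos_pos_of_mem_Ioo (abs_lt.1 dirPhase_abs_lt)).ne'

theorem continuous_tphase : Continuous fun z : ℝ × (ℝ × ℝ) => tphase u q z.1 z.2 := by
  unfold tphase phase
  have h := (continuous_dirSlope (u := u) (q := q)).comp (continuous_fst (X := ℝ) (Y := ℝ × ℝ))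
  have h' := (continuous_dirShift (u := u) (q := q)).comp (continuous_fst (X := ℝ) (Y := ℝ × ℝ))
  refine (continuous_const.mul (Continuous.div (by fun_prop) ?_ fun θ => (sqrt_slope_pos _).ne')).add h'
  exact Real.continuous_sqrt.comp (continuous_const.add (h.pow 2))

theorem continuousAt_treaper {z : ℝ × (ℝ × ℝ)} (hz : |tphase u q z.1 z.2| < π / 2) :
    ContinuousAt (fun z : ℝ × (ℝ × ℝ) => treaper u q z.1 z.2) z := by
  have h := (continuous_dirSlope (u := u) (q := q)).comp (continuous_fst (X := ℝ) (Y := ℝ × ℝ))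
  have h' := (continuous_dirHeight (u := u) (q := q)).comp (continuous_fst (X := ℝ) (Y := ℝ × ℝ))
  have hl : ContinuousAt (fun z : ℝ × (ℝ × ℝ) => log (cos (tphase u q z.1 z.2))) z :=
    (continuous_cos.comp continuous_tphase).continuousAt.log (cos_phase_pos hz).ne'
  unfold treaper grim
  refine ((h.continuousAt.mul (by fun_prop)).sub (ContinuousAt.mul ?_ hl)).add h'.continuousAt
  exact (((continuous_const.add (h.pow 2)).div_const 1)).continuousAt

theorem dirSlope_add_pi : dirSlope u q (θ + π) = -dirSlope u q θ := by
  unfold dirSlope; rw [cos_add_pi, sin_add_pi]; ring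

theorem dirPhase_add_pi : dirPhase u q (θ + π) = -dirPhase u q θ := by
  unfold dirPhase
  rw [dirSlope_add_pi, cos_add_pi, sin_add_pi, neg_sq, ← arctan_neg]
  congr 1; ring

theorem dirShift_add_pi : dirShift u q (θ + π) = -dirShift u q θ := by
  unfold dirShift
  rw [dirPhase_add_pi, dirSlope_add_pi, cos_add_pi, sin_add_pi, neg_sq]; ring

theorem dirHeight_add_pi : dirHeight u q (θ + π) = dirHeight u q θ := by
  unfold dirHeight
  rw [dirPhase_add_pi, dirSlope_add_pi, cos_add_pi, sin_add_pi, neg_sq, cos_neg]; ring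

theorem tphase_add_pi (x : ℝ × ℝ) : tphase u q (θ + π) x = -tphase u q θ x := by
  unfold tphase
  rw [dirSlope_add_pi, dirShift_add_pi, cos_add_pi, sin_add_pi, phase_neg]

theorem treaper_add_pi (x : ℝ × ℝ) : treaper u q (θ + π) x = treaper u q θ x := by
  unfold treaper
  rw [dirSlope_add_pi, dirShift_add_pi, dirHeight_add_pi, cos_add_pi, sin_add_pi, grim_neg]

end

/-! ### Position of the graph relative to tangent grim reapers -/

theorem hess_pos_algebra {P Q a b c : ℝ}
    (h : (1 + Q ^ 2) * a - 2 * P * Q * b + (1 + P ^ 2) * c = 1 + P ^ 2 + Q ^ 2)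
    (hd : 0 < a * c - b ^ 2) : 0 < a := by
  have h1 : a * (1 + P ^ 2 + Q ^ 2) =
      a ^ 2 + b ^ 2 + (Q * a - P * b) ^ 2 + (1 + P ^ 2) * (a * c - b ^ 2) := by
    rw [← h]; ring
  have h2 : 0 < a * (1 + P ^ 2 + Q ^ 2) := by rw [h1]; positivity
  exact pos_of_mul_pos_left h2 (by positivity)

theorem quad_pos {a b c ξ η : ℝ} (ha : 0 < a) (hd : 0 < a * c - b ^ 2) (h : ξ ^ 2 + η ^ 2 = 1) :
    0 < ξ ^ 2 * a + 2 * (ξ * η) * b + η ^ 2 * c := by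
  have h1 : a * (ξ ^ 2 * a + 2 * (ξ * η) * b + η ^ 2 * c) =
      (a * ξ + b * η) ^ 2 + (a * c - b ^ 2) * η ^ 2 := by ring
  have h2 : 0 < a * (ξ ^ 2 * a + 2 * (ξ * η) * b + η ^ 2 * c) := by
    rw [h1]
    by_cases hη : η = 0
    · have : ξ ≠ 0 := by rintro rfl; simp [hη] at h
      rw [hη]; simp only [mul_zero, add_zero, ne_eq, OfNat.ofNat_ne_zero, not_false_eq_true, zero_pow]
      positivity
    · exact add_pos_of_nonneg_of_pos (sq_nonneg _) (mul_pos hd (by positivity))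
  exact pos_of_mul_pos_right h2 ha.le

/-- Strict convexity along a segment puts `f` strictly above its tangent line. -/
theorem above_tangent {f : ℝ × ℝ → ℝ} {q : ℝ × ℝ} {ξ η s₀ : ℝ}
    (hf : ∀ t ∈ Icc 0 s₀, ContDiffAt ℝ (2 : ℕ) f (q.1 + t * ξ, q.2 + t * η) ∧
      0 < ξ ^ 2 * pdx (pdx f) (q.1 + t * ξ, q.2 + t * η) +
        2 * (ξ * η) * pdy (pdx f) (q.1 + t * ξ, q.2 + t * η) +
        η ^ 2 * pdy (pdy f) (q.1 + t * ξ, q.2 + t * η))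
    {s : ℝ} (hs : 0 < s) (hs₀ : s ≤ s₀) :
    f q + s * (ξ * pdx f q + η * pdy f q) < f (q.1 + s * ξ, q.2 + s * η) := by
  have d1 : ∀ t ∈ Icc 0 s₀, HasDerivAt (fun t : ℝ => f (q.1 + t * ξ, q.2 + t * η))
      (pdx f (q.1 + t * ξ, q.2 + t * η) * ξ + pdy f (q.1 + t * ξ, q.2 + t * η) * η) t :=
    fun t ht => ((hf t ht).1.hasGrad (n := 1)).line
  have d2 : ∀ t ∈ Icc 0 s₀, HasDerivAt (fun t : ℝ => pdx f (q.1 + t * ξ, q.2 + t * η) * ξ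
        + pdy f (q.1 + t * ξ, q.2 + t * η) * η)
      (ξ ^ 2 * pdx (pdx f) (q.1 + t * ξ, q.2 + t * η) +
        2 * (ξ * η) * pdy (pdx f) (q.1 + t * ξ, q.2 + t * η) +
        η ^ 2 * pdy (pdy f) (q.1 + t * ξ, q.2 + t * η)) t := by
    intro t ht
    have h := (hf t ht).1
    have h1 := ((contDiffAt_pdx (n := 1) h).hasGrad (n := 0)).line
    have h2 := ((contDiffAt_pdy (n := 1) h).hasGrad (n := 0)).line
    have := (h1.mul_const ξ).add (h2.mul_const η)
    rw [pdx_pdy_comm h] at this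
    exact this.congr_deriv (by ring)
  obtain ⟨c, hc, ec⟩ := exists_hasDerivAt_eq_slope _ _ hs
    (fun t ht => (d1 t ⟨ht.1, ht.2.trans hs₀⟩).continuousAt.continuousWithinAt)
    (fun t ht => d1 t ⟨ht.1.le, ht.2.le.trans hs₀⟩)
  have hcs := hc.2.le.trans hs₀
  obtain ⟨d, hd, ed⟩ := exists_hasDerivAt_eq_slope _ _ hc.1
    (fun t ht => (d2 t ⟨ht.1, ht.2.trans hcs⟩).continuousAt.continuousWithinAt)
    (fun t ht => d2 t ⟨ht.1.le, ht.2.le.trans hcs⟩)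
  have hpos := (hf d ⟨hd.1.le, hd.2.le.trans hcs⟩).2
  rw [ed] at hpos
  have hp0 : ((q.1 + 0 * ξ, q.2 + 0 * η) : ℝ × ℝ) = q := by ext <;> simp
  simp only [sub_zero, hp0] at hpos ec
  have hpos' := (div_pos_iff_of_pos_right hc.1).1 hpos
  rw [eq_div_iff hs.ne'] at ec
  have := mul_lt_mul_of_pos_right (sub_pos.1 hpos') hs
  linarith

/-- Near a critical zero, `f` is positive along any direction of positive second derivative. -/
theorem pos_along {f : ℝ × ℝ → ℝ} {q : ℝ × ℝ} {ξ η : ℝ} (hf : ContDiffAt ℝ (2 : ℕ) f q)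
    (h0 : f q = 0) (hx : pdx f q = 0) (hy : pdy f q = 0)
    (hpos : 0 < ξ ^ 2 * pdx (pdx f) q + 2 * (ξ * η) * pdy (pdx f) q + η ^ 2 * pdy (pdy f) q) :
    ∀ᶠ s in nhdsWithin (0 : ℝ) (Ioi 0), 0 < f (q.1 + s * ξ, q.2 + s * η) := by
  have cx := contDiffAt_pdx (n := 1) hf
  have cy := contDiffAt_pdy (n := 1) hf
  have cxx := (contDiffAt_pdx (n := 0) cx).continuousAt
  have cxy := (contDiffAt_pdy (n := 0) cx).continuousAt
  have cyy := (contDiffAt_pdy (n := 0) cy).continuousAt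
  have hc : ContinuousAt (fun x => ξ ^ 2 * pdx (pdx f) x + 2 * (ξ * η) * pdy (pdx f) x +
      η ^ 2 * pdy (pdy f) x) q :=
    ((continuousAt_const.mul cxx).add (continuousAt_const.mul cxy)).add (continuousAt_const.mul cyy)
  have hev := hf.ev.and (hc.eventually_const_lt hpos)
  have hl : ContinuousAt (fun t : ℝ => ((q.1 + t * ξ, q.2 + t * η) : ℝ × ℝ)) 0 := by fun_prop
  have hp0 : ((q.1 + 0 * ξ, q.2 + 0 * η) : ℝ × ℝ) = q := by ext <;> simp
  have hev' := hl.eventually (p := fun x => ContDiffAt ℝ (2 : ℕ) f x ∧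
    0 < ξ ^ 2 * pdx (pdx f) x + 2 * (ξ * η) * pdy (pdx f) x + η ^ 2 * pdy (pdy f) x)
    (by simp only [hp0]; exact hev)
  obtain ⟨ε, hε, hb⟩ := Metric.eventually_nhds_iff.1 hev'
  filter_upwards [(eventually_lt_nhds hε).filter_mono nhdsWithin_le_nhds, self_mem_nhdsWithin]
    with s hs hs0
  have := above_tangent (f := f) (q := q) (ξ := ξ) (η := η) (s₀ := s) (by
    intro t ht
    refine hb ?_
    rw [Real.dist_eq, sub_zero, abs_of_nonneg ht.1]
    exact lt_of_le_of_lt ht.2 hs) hs0 le_rfl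
  rw [h0, hx, hy] at this
  linarith

theorem saddle_algebra {P Q h11 h12 h22 c s : ℝ}
    (hA : (1 + Q ^ 2) * h11 - 2 * P * Q * h12 + (1 + P ^ 2) * h22 = 0)
    (hv : c ^ 2 * h11 + 2 * (c * s) * h12 + s ^ 2 * h22 < 0) :
    0 < (-(1 + Q ^ 2) * s - P * Q * c) ^ 2 * h11 +
      2 * ((-(1 + Q ^ 2) * s - P * Q * c) * (P * Q * s + (1 + P ^ 2) * c)) * h12 +
      (P * Q * s + (1 + P ^ 2) * c) ^ 2 * h22 := by
  have h1 : (-(1 + Q ^ 2) * s - P * Q * c) ^ 2 * h11 +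
      2 * ((-(1 + Q ^ 2) * s - P * Q * c) * (P * Q * s + (1 + P ^ 2) * c)) * h12 +
      (P * Q * s + (1 + P ^ 2) * c) ^ 2 * h22 =
      (1 + P ^ 2 + Q ^ 2) * -(c ^ 2 * h11 + 2 * (c * s) * h12 + s ^ 2 * h22) := by
    linear_combination ((1 + Q ^ 2) * s ^ 2 + 2 * P * Q * s * c + (1 + P ^ 2) * c ^ 2) * hA
  rw [h1]
  exact mul_pos (by positivity) (by linarith)

/-- Where `D²u` is definite, the tangent grim reaper of direction `θ` crosses `u` at a saddle:
there is a direction `η`, transverse to that of angle `θ`, along which `u` lies below. -/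
theorem exists_below {Ω : Set (ℝ × ℝ)} {u : ℝ × ℝ → ℝ} {q : ℝ × ℝ} (hΩ : IsOpen Ω)
    (hu : IsTranslatorOn Ω u) (hq : q ∈ Ω) (hd : 0 < hdet u q) (θ : ℝ) :
    ∃ η : ℝ × ℝ, cos θ * η.2 - sin θ * η.1 ≠ 0 ∧
      ∀ᶠ s in nhdsWithin (0 : ℝ) (Ioi 0),
        u (q.1 + s * η.1, q.2 + s * η.2) - treaper u q θ (q.1 + s * η.1, q.2 + s * η.2) < 0 ∧
        u (q.1 - s * η.1, q.2 - s * η.2) - treaper u q θ (q.1 - s * η.1, q.2 - s * η.2) < 0 := by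
  set w := treaper u q θ with hw
  have hS : |tphase u q θ q| < π / 2 := by rw [tphase_self]; exact dirPhase_abs_lt
  obtain ⟨w1, w2⟩ := treaper_solution hS
  have u1 := hu.contDiffAt hΩ 2 hq
  have u2 := hu.aOp_eq hq
  obtain ⟨g1, g2⟩ := treaper_grad (u := u) (q := q) (θ := θ)
  have w3 := treaper_hess_line (u := u) (q := q) (θ := θ)
  simp only [← hw] at w1 w2 w3 g1 g2
  obtain ⟨s1, s2, s3, s4, s5⟩ := second_sub w1 u1
  have hcs := cos_sq_add_sin_sq θ
  have ha : 0 < pdx (pdx u) q := hess_pos_algebra u2 hd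
  have hv := quad_pos ha hd hcs
  rw [g1, g2] at w2
  unfold aOp at u2 w2
  set P := pdx u q
  set Q := pdy u q
  have hA : (1 + Q ^ 2) * pdx (pdx fun x => w x - u x) q -
      2 * P * Q * pdy (pdx fun x => w x - u x) q +
      (1 + P ^ 2) * pdy (pdy fun x => w x - u x) q = 0 := by
    rw [s3, s4, s5]; linear_combination w2 - u2
  have hneg : cos θ ^ 2 * pdx (pdx fun x => w x - u x) q +
      2 * (cos θ * sin θ) * pdy (pdx fun x => w x - u x) q +
      sin θ ^ 2 * pdy (pdy fun x => w x - u x) q < 0 := by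
    rw [s3, s4, s5]; linarith
  have hsad := saddle_algebra hA hneg
  have hf : ContDiffAt ℝ (2 : ℕ) (fun x => w x - u x) q := w1.sub u1
  have h0 : w q - u q = 0 := by rw [hw, treaper_self, sub_self]
  refine ⟨(-(1 + Q ^ 2) * sin θ - P * Q * cos θ, P * Q * sin θ + (1 + P ^ 2) * cos θ), ?_, ?_⟩
  · have : cos θ * (P * Q * sin θ + (1 + P ^ 2) * cos θ) -
        sin θ * (-(1 + Q ^ 2) * sin θ - P * Q * cos θ) = 1 + (P * cos θ + Q * sin θ) ^ 2 := by
      linear_combination hcs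
    simp only [this]
    positivity
  · have e1 := pos_along hf h0 (by rw [s1, g1, sub_self]) (by rw [s2, g2, sub_self]) hsad
    have e2 := pos_along (ξ := -(-(1 + Q ^ 2) * sin θ - P * Q * cos θ))
      (η := -(P * Q * sin θ + (1 + P ^ 2) * cos θ)) hf h0 (by rw [s1, g1, sub_self])
      (by rw [s2, g2, sub_self]) (by rw [neg_sq, neg_sq, neg_mul_neg]; exact hsad)
    filter_upwards [e1, e2] with s h1 h2
    refine ⟨by linarith, ?_⟩
    rw [mul_neg, ← sub_eq_add_neg, mul_neg, ← sub_eq_add_neg] at h2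
    linarith

/-- Where `D²u` is definite, `u` lies above every tangent grim reaper along its own line, on a
segment whose length does not depend on the direction. -/
theorem exists_above {Ω : Set (ℝ × ℝ)} {u : ℝ × ℝ → ℝ} {q : ℝ × ℝ} (hΩ : IsOpen Ω)
    (hu : IsTranslatorOn Ω u) (hq : q ∈ Ω) (hd : 0 < hdet u q) :
    ∃ s₀ > 0, ∀ θ s : ℝ, 0 < s → s ≤ s₀ → (q.1 + s * cos θ, q.2 + s * sin θ) ∈ Ω ∧
      0 < u (q.1 + s * cos θ, q.2 + s * sin θ) -
        treaper u q θ (q.1 + s * cos θ, q.2 + s * sin θ) := by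
  have u1 := hu.contDiffAt hΩ 2 hq
  have ha : 0 < pdx (pdx u) q := hess_pos_algebra (hu.aOp_eq hq) hd
  have cxx := (contDiffAt_pdx (n := 0) (contDiffAt_pdx (n := 1) u1)).continuousAt
  have cd := (contDiffAt_hdet (hu.contDiffAt hΩ 4 hq)).continuousAt
  have hΩq : ∀ᶠ x in nhds q, x ∈ Ω := hΩ.mem_nhds hq
  have hev := (hΩq.and
    (cxx.eventually_const_lt ha)).and (cd.eventually_const_lt hd)
  obtain ⟨ε, hε, hb⟩ := Metric.eventually_nhds_iff.1 hev
  have hin : ∀ θ t : ℝ, t ∈ Icc 0 (ε / 2) →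
      dist ((q.1 + t * cos θ, q.2 + t * sin θ) : ℝ × ℝ) q < ε := by
    intro θ t ht
    have h1 : |t * cos θ| ≤ t := by
      rw [abs_mul, abs_of_nonneg ht.1]
      exact mul_le_of_le_one_right ht.1 (abs_cos_le_one θ)
    have h2 : |t * sin θ| ≤ t := by
      rw [abs_mul, abs_of_nonneg ht.1]
      exact mul_le_of_le_one_right ht.1 (abs_sin_le_one θ)
    rw [Prod.dist_eq, Real.dist_eq, Real.dist_eq, max_lt_iff]
    simp only [add_sub_cancel_left]
    constructor <;> linarith [ht.2]
  refine ⟨ε / 2, by positivity, fun θ s hs hs₀ => ⟨(hb (hin θ s ⟨hs.le, hs₀⟩)).1.1, ?_⟩⟩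
  have := above_tangent (f := u) (q := q) (ξ := cos θ) (η := sin θ) (s₀ := ε / 2) (by
    intro t ht
    obtain ⟨⟨h1, h2⟩, h3⟩ := hb (hin θ t ht)
    exact ⟨hu.contDiffAt hΩ 2 h1, quad_pos h2 h3 (cos_sq_add_sin_sq θ)⟩) hs hs₀
  rw [treaper_line, dirSlope]
  linarith

/-! ### The set above a tangent grim reaper -/

theorem connectedComponentIn_closed {F : Set (ℝ × ℝ)} {p x : ℝ × ℝ} (hp : p ∈ F)
    (hx : x ∈ closure (connectedComponentIn F p)) (hxF : x ∈ F) :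
    x ∈ connectedComponentIn F p := by
  have h1 : IsPreconnected (insert x (connectedComponentIn F p)) :=
    isPreconnected_connectedComponentIn.subset_closure (subset_insert _ _)
      (insert_subset hx subset_closure)
  have h2 := h1.subset_connectedComponentIn (x := p) (F := F)
    (mem_insert_of_mem _ (mem_connectedComponentIn hp))
    (insert_subset hxF (connectedComponentIn_subset F p))
  exact h2 (mem_insert _ _)

/-- The part of the parallelogram over which the tangent grim reaper of direction `θ` lives. -/
def stripDom (α w L : ℝ) (u : ℝ × ℝ → ℝ) (q : ℝ × ℝ) (θ : ℝ) : Set (ℝ × ℝ) :=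
  {x | x ∈ Pgram α w L ∧ |tphase u q θ x| < π / 2}

/-- The part of `stripDom` where `u` lies above the tangent grim reaper of direction `θ`. -/
def aboveSet (α w L : ℝ) (u : ℝ × ℝ → ℝ) (q : ℝ × ℝ) (θ : ℝ) : Set (ℝ × ℝ) :=
  {x | x ∈ stripDom α w L u q θ ∧ 0 < u x - treaper u q θ x}

section

variable {α w L : ℝ} {u : ℝ × ℝ → ℝ} {q : ℝ × ℝ}

theorem isOpen_stripDom (θ : ℝ) : IsOpen (stripDom α w L u q θ) :=
  (isOpen_Pgram α w L).inter (isOpen_lt (continuous_phase _ _ _ _ _).abs continuous_const)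

theorem convex_stripDom (θ : ℝ) : Convex ℝ (stripDom α w L u q θ) := by
  refine (convex_Pgram α w L).inter ?_
  intro x hx y hy s t hs ht hst
  have e : tphase u q θ (s • x + t • y) = s • tphase u q θ x + t • tphase u q θ y := by
    simp only [tphase, phase, Prod.fst_add, Prod.snd_add, Prod.smul_fst, Prod.smul_snd,
      smul_eq_mul]
    linear_combination (-dirShift u q θ) * hst
  change |tphase u q θ (s • x + t • y)| < π / 2
  rw [e]
  exact abs_lt.2 (convex_Ioo (-(π / 2)) (π / 2) (abs_lt.1 hx) (abs_lt.1 hy) hs ht hst)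

theorem aboveSet_eventually (hu : IsTranslatorOn (Pgram α w L) u) {θ : ℝ} {x : ℝ × ℝ}
    (hx : x ∈ aboveSet α w L u q θ) :
    ∀ᶠ z : ℝ × (ℝ × ℝ) in nhds (θ, x), z.2 ∈ aboveSet α w L u q z.1 := by
  obtain ⟨⟨h1, h2⟩, h3⟩ := hx
  have e1 : ∀ᶠ z : ℝ × (ℝ × ℝ) in nhds (θ, x), z.2 ∈ Pgram α w L :=
    continuousAt_snd.eventually ((isOpen_Pgram α w L).mem_nhds h1)
  have e2 : ∀ᶠ z : ℝ × (ℝ × ℝ) in nhds (θ, x), |tphase u q z.1 z.2| < π / 2 :=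
    continuous_tphase.abs.continuousAt.eventually_lt_const h2
  have hc : ContinuousAt (fun z : ℝ × (ℝ × ℝ) => u z.2 - treaper u q z.1 z.2) (θ, x) :=
    (ContinuousAt.comp (f := Prod.snd) (x := (θ, x))
      (hu.contDiffAt (isOpen_Pgram α w L) 2 h1).continuousAt continuousAt_snd).sub
      (continuousAt_treaper h2)
  filter_upwards [e1, e2, hc.eventually_const_lt h3] with z h1 h2 h3
  exact ⟨⟨h1, h2⟩, h3⟩

theorem isOpen_aboveSet (hu : IsTranslatorOn (Pgram α w L) u) (θ : ℝ) :
    IsOpen (aboveSet α w L u q θ) := by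
  refine isOpen_iff_mem_nhds.2 fun x hx => ?_
  have hc : ContinuousAt (fun x : ℝ × ℝ => (θ, x)) x := by fun_prop
  exact hc.eventually (aboveSet_eventually hu hx)

theorem aboveSet_add_pi (θ : ℝ) : aboveSet α w L u q (θ + π) = aboveSet α w L u q θ := by
  ext x
  simp only [aboveSet, stripDom, tphase_add_pi, treaper_add_pi, abs_neg]

theorem self_mem_stripDom (hq : q ∈ Pgram α w L) (θ : ℝ) : q ∈ stripDom α w L u q θ :=
  ⟨hq, by rw [tphase_self]; exact dirPhase_abs_lt⟩

theorem IsTranslatorOn.mono_set {Ω Ω' : Set (ℝ × ℝ)} (h : IsTranslatorOn Ω u) (hs : Ω' ⊆ Ω) :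
    IsTranslatorOn Ω' u :=
  ⟨h.1.mono hs, fun p hp => h.2 p (hs hp)⟩

/-- The two ends of the chord through `q` lie in different components of `aboveSet`: a joining
path would, together with the chord, enclose a component of the set where `u` lies below. -/
theorem chord_ends_separated (hu : IsTranslatorOn (Pgram α w L) u) (hq : q ∈ Pgram α w L)
    (hd : 0 < hdet u q) {s₀ : ℝ} (hs₀ : 0 < s₀)
    (habove : ∀ θ s : ℝ, 0 < s → s ≤ s₀ →
      (q.1 + s * cos θ, q.2 + s * sin θ) ∈ aboveSet α w L u q θ) (θ : ℝ) :
    (q.1 + -s₀ * cos θ, q.2 + -s₀ * sin θ) ∉ connectedComponentIn (aboveSet α w L u q θ)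
      (q.1 + s₀ * cos θ, q.2 + s₀ * sin θ) := by
  intro hmem
  set F := aboveSet α w L u q θ with hF
  set Ω := stripDom α w L u q θ with hΩ
  set p : ℝ × ℝ := (q.1 + s₀ * cos θ, q.2 + s₀ * sin θ) with hp
  have hpF : p ∈ F := habove θ s₀ hs₀ le_rfl
  have hΩo : IsOpen Ω := isOpen_stripDom θ
  have hΩc : Convex ℝ Ω := convex_stripDom θ
  have huΩ : IsTranslatorOn Ω u := hu.mono_set fun x hx => hx.1
  have hqΩ : q ∈ Ω := self_mem_stripDom hq θ
  have hA : IsOpen (connectedComponentIn F p) := (isOpen_aboveSet hu θ).connectedComponentIn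
  have hAconn : IsConnected (connectedComponentIn F p) := isConnected_connectedComponentIn_iff.2 hpF
  have hpath := hA.isConnected_iff_isPathConnected.1 hAconn
  obtain ⟨γ, hγ⟩ := hpath.joinedIn p (mem_connectedComponentIn hpF) _ hmem
  obtain ⟨η, hη, hbelow⟩ := exists_below (isOpen_Pgram α w L) hu hq hd θ
  have hqe : ∀ ζ : ℝ × ℝ, ∀ᶠ s in nhdsWithin (0 : ℝ) (Ioi 0),
      (q.1 + s * ζ.1, q.2 + s * ζ.2) ∈ Ω := by
    intro ζ
    have hc : ContinuousAt (fun t : ℝ => ((q.1 + t * ζ.1, q.2 + t * ζ.2) : ℝ × ℝ)) 0 := by fun_prop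
    have := hc.eventually (p := fun x => x ∈ Ω) (by simpa using hΩo.mem_nhds hqΩ)
    exact this.filter_mono nhdsWithin_le_nhds
  have hdiff : ∀ x ∈ Ω, ContinuousAt (fun x => u x - treaper u q θ x) x := fun x hx =>
    (huΩ.contDiffAt hΩo 2 hx).continuousAt.sub (treaper_solution hx.2).1.continuousAt
  refine no_positive_join (φ := fun x => u x - treaper u q θ x) (q := q) (v := (cos θ, sin θ))
    (η := η) hΩc hΩo hs₀ hη (by rw [treaper_self, sub_self]) ?_ ?_ ?_
    (K₁ := range γ) ?_ ?_ ?_ ?_ ?_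
  · intro t ht
    rcases lt_trichotomy t 0 with h | h | h
    · have := habove (θ + π) (-t) (by linarith) (by linarith [ht.1])
      rw [aboveSet_add_pi, cos_add_pi, sin_add_pi, neg_mul_neg, neg_mul_neg] at this
      exact ⟨this.1, this.2.le⟩
    · subst h
      simp only [zero_mul, add_zero]
      exact ⟨hqΩ, by rw [treaper_self, sub_self]⟩
    · have := habove θ t h ht.2
      exact ⟨this.1, this.2.le⟩
  · have h2 := hqe (-η)
    filter_upwards [hbelow, hqe η, h2] with s h1 h2 h3
    simp only [Prod.fst_neg, Prod.snd_neg, mul_neg, ← sub_eq_add_neg] at h3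
    exact ⟨⟨h2, h1.1⟩, h3, h1.2⟩
  · intro c hc hcn H hHΩ hHc _
    set G : Set (ℝ × ℝ) := {x | x ∈ Ω ∧ u x - treaper u q θ x < 0} with hG
    have hcG : c ∈ G := ⟨hc, hcn⟩
    refine ⟨connectedComponentIn G c, connectedComponentIn_subset G c,
      isPreconnected_connectedComponentIn, mem_connectedComponentIn hcG, ?_⟩
    by_contra hcon
    push Not at hcon
    have hGo : IsOpen G := by
      refine isOpen_iff_mem_nhds.2 fun x hx => ?_
      filter_upwards [hΩo.mem_nhds hx.1, (hdiff x hx.1).eventually_lt_const hx.2] with y h1 h2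
      exact ⟨h1, h2⟩
    have hsubH : closure (connectedComponentIn G c) ⊆ H :=
      closure_minimal hcon hHc.isClosed
    have hcpt : IsCompact (closure (connectedComponentIn G c)) :=
      hHc.of_isClosed_subset isClosed_closure hsubH
    obtain ⟨y, hy, hmin⟩ := hcpt.exists_isMinOn ⟨c, subset_closure (mem_connectedComponentIn hcG)⟩
      (f := fun x => u x - treaper u q θ x)
      (fun x hx => (hdiff x (hHΩ (hsubH hx))).continuousWithinAt)
    have hyG : y ∈ G := ⟨hHΩ (hsubH hy), lt_of_le_of_lt
      (hmin (subset_closure (mem_connectedComponentIn hcG))) hcn⟩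
    have hyA := connectedComponentIn_closed hcG hy hyG
    obtain ⟨x, hx, hlt⟩ := no_max_in_component (Ω := Ω) (u := treaper u q θ) (w := u)
      hΩc.isPreconnected
      (fun x hx => treaper_solution hx.2)
      (fun x hx => ⟨huΩ.contDiffAt hΩo 2 hx, huΩ.aOp_eq hx⟩)
      hGo.connectedComponentIn isPreconnected_connectedComponentIn
      (fun x hx => by
        have := connectedComponentIn_subset G c hx
        exact ⟨this.1, by linarith [this.2]⟩)
      (fun x hx hxΩ h0 => connectedComponentIn_closed hcG hx ⟨hxΩ, by linarith⟩)
      hqΩ (by rw [treaper_self, sub_self]) hyA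
    have h5 : u y - treaper u q θ y ≤ u x - treaper u q θ x := hmin (subset_closure hx)
    linarith
  · exact isPreconnected_range γ.continuous
  · exact isCompact_range γ.continuous
  · rintro x ⟨t, rfl⟩
    exact connectedComponentIn_subset F p (hγ t)
  · exact ⟨0, γ.source⟩
  · exact ⟨1, γ.target⟩

end

/-! ### Adherence to the nonhorizontal sides -/

/-- Point at height `y` of the slanted line through `(e, 0)`; the nonhorizontal sides are given by
`e = 0` and `e = L`. -/
def sidePt (α e y : ℝ) : ℝ × ℝ := (e + y * cos α / sin α, y)

section

variable {α w L : ℝ} {u : ℝ × ℝ → ℝ} {q : ℝ × ℝ} {e y θ : ℝ}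

theorem continuous_sidePt (α e : ℝ) : Continuous (sidePt α e) := by unfold sidePt; fun_prop

theorem sidePt_mem_closure (hL : 0 < L) (he : e = 0 ∨ e = L) (hy : 0 < y) (hyw : y < w) :
    sidePt α e y ∈ closure (Pgram α w L) := by
  have hc : Tendsto (fun t : ℝ => ((e + y * cos α / sin α + t * (L / 2 - e), y) : ℝ × ℝ))
      (nhdsWithin 0 (Ioi 0)) (nhds (sidePt α e y)) := by
    have : Continuous fun t : ℝ => ((e + y * cos α / sin α + t * (L / 2 - e), y) : ℝ × ℝ) := by
      fun_prop
    have h := this.tendsto 0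
    simp only [zero_mul, add_zero] at h
    exact h.mono_left nhdsWithin_le_nhds
  refine mem_closure_of_tendsto hc ?_
  have h1 : ∀ᶠ t : ℝ in nhdsWithin 0 (Ioi 0), t < 1 :=
    (eventually_lt_nhds one_pos).filter_mono nhdsWithin_le_nhds
  filter_upwards [h1, self_mem_nhdsWithin] with t ht (ht0 : 0 < t)
  have a1 := mul_pos ht0 hL
  have a2 := mul_pos (sub_pos.2 ht) hL
  refine ⟨hy, hyw, ?_, ?_⟩ <;> rcases he with rfl | rfl <;> simp only <;> linarith

theorem ScherkBVP.side_tendsto (hu : ScherkBVP α w L u) (he : e = 0 ∨ e = L) (hy : 0 < y)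
    (hyw : y < w) : Tendsto u (nhdsWithin (sidePt α e y) (Pgram α w L)) atTop := by
  obtain ⟨_, _, _, h1, h2⟩ := hu
  rcases he with rfl | rfl
  · have := h1 y hy hyw
    simpa [sidePt] using this
  · exact h2 y hy hyw

/-- Near a point of a nonhorizontal side, `u` lies above all tangent grim reapers of nearby
directions. -/
theorem side_nbhd (hu : ScherkBVP α w L u) (he : e = 0 ∨ e = L) (hy : 0 < y) (hyw : y < w)
    (hT : |tphase u q θ (sidePt α e y)| < π / 2) :
    ∃ r > 0, ∀ᶠ θ' in nhds θ, Metric.ball (sidePt α e y) r ∩ Pgram α w L ⊆ aboveSet α w L u q θ' ∧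
      |tphase u q θ' (sidePt α e y)| < π / 2 := by
  set x₀ := sidePt α e y with hx₀
  set C := treaper u q θ x₀ + 1 with hC
  have e1 : ∀ᶠ z : ℝ × (ℝ × ℝ) in nhds (θ, x₀), |tphase u q z.1 z.2| < π / 2 :=
    continuous_tphase.abs.continuousAt.eventually_lt_const hT
  have e2 : ∀ᶠ z : ℝ × (ℝ × ℝ) in nhds (θ, x₀), treaper u q z.1 z.2 < C :=
    (continuousAt_treaper (z := (θ, x₀)) hT).eventually_lt_const (lt_add_one _)
  have e3 : ∀ᶠ x in nhds x₀, x ∈ Pgram α w L → C < u x :=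
    eventually_nhdsWithin_iff.1 ((hu.side_tendsto he hy hyw).eventually_gt_atTop C)
  have e4 : ∀ᶠ z : ℝ × (ℝ × ℝ) in nhds (θ, x₀), z.2 ∈ Pgram α w L → C < u z.2 :=
    (continuous_snd.tendsto (θ, x₀)).eventually e3
  obtain ⟨r, hr, hb⟩ := Metric.eventually_nhds_iff.1 ((e1.and e2).and e4)
  refine ⟨r, hr, Metric.eventually_nhds_iff.2 ⟨r, hr, fun θ' hθ' => ⟨?_, ?_⟩⟩⟩
  · rintro x ⟨hx, hxP⟩
    obtain ⟨⟨h1, h2⟩, h3⟩ := hb (y := (θ', x)) (by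
      rw [Prod.dist_eq]; exact max_lt hθ' (Metric.mem_ball.1 hx))
    have h3 := h3 hxP
    simp only at h1 h2 h3
    exact ⟨⟨hxP, h1⟩, by linarith⟩
  · exact (hb (y := (θ', x₀)) (by rw [Prod.dist_eq]; exact max_lt hθ' (by simpa using hr))).1.1

theorem ball_subset_component {F N P : Set (ℝ × ℝ)} {p x : ℝ × ℝ} (hFP : F ⊆ P) (hN : IsOpen N)
    (hx : x ∈ N) (hNP : N ∩ P ⊆ F) (hc : IsPreconnected (N ∩ P))
    (hcl : x ∈ closure (connectedComponentIn F p)) : N ∩ P ⊆ connectedComponentIn F p := by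
  obtain ⟨z, hzN, hzA⟩ := mem_closure_iff.1 hcl N hN hx
  have hzF := connectedComponentIn_subset F p hzA
  rw [connectedComponentIn_eq hzA]
  exact hc.subset_connectedComponentIn ⟨hzN, hFP hzF⟩ hNP

theorem preconnected_ball_inter (x : ℝ × ℝ) (r : ℝ) :
    IsPreconnected (Metric.ball x r ∩ Pgram α w L) :=
  ((convex_ball x r).inter (convex_Pgram α w L)).isPreconnected

theorem aboveSet_subset (θ : ℝ) : aboveSet α w L u q θ ⊆ Pgram α w L := fun _ hx => hx.1.1

/-- Two components of `aboveSet` adherent to the same nonhorizontal side, inside the strip of the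
grim reaper, coincide. -/
theorem same_side_same_component (hL : 0 < L) (hu : ScherkBVP α w L u) (he : e = 0 ∨ e = L)
    {p p' : ℝ × ℝ}
    (hp : ∃ y, 0 < y ∧ y < w ∧ |tphase u q θ (sidePt α e y)| < π / 2 ∧
      sidePt α e y ∈ closure (connectedComponentIn (aboveSet α w L u q θ) p))
    (hp'F : p' ∈ aboveSet α w L u q θ)
    (hp' : ∃ y, 0 < y ∧ y < w ∧ |tphase u q θ (sidePt α e y)| < π / 2 ∧
      sidePt α e y ∈ closure (connectedComponentIn (aboveSet α w L u q θ) p')) :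
    p' ∈ connectedComponentIn (aboveSet α w L u q θ) p := by
  set F := aboveSet α w L u q θ with hF
  set J : Set ℝ := {y | (0 < y ∧ y < w) ∧ |tphase u q θ (sidePt α e y)| < π / 2} with hJ
  have hTc : Continuous fun y => |tphase u q θ (sidePt α e y)| :=
    ((continuous_phase _ _ _ _ _).comp (continuous_sidePt α e)).abs
  have hJo : IsOpen J :=
    ((isOpen_lt continuous_const continuous_id).inter
      (isOpen_lt continuous_id continuous_const)).inter (isOpen_lt hTc continuous_const)
  have hJc : IsPreconnected J := by
    refine Convex.isPreconnected ((convex_Ioo 0 w).inter ?_)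
    intro x hx y hy s t hs ht hst
    have e : tphase u q θ (sidePt α e (s • x + t • y)) =
        s • tphase u q θ (sidePt α e x) + t • tphase u q θ (sidePt α e y) := by
      simp only [tphase, phase, sidePt, smul_eq_mul]
      linear_combination (-dirShift u q θ + sin θ * e / √(1 + dirSlope u q θ ^ 2)) * hst
    change |tphase u q θ (sidePt α _ (s • x + t • y))| < π / 2
    rw [e]
    exact abs_lt.2 (convex_Ioo (-(π / 2)) (π / 2) (abs_lt.1 hx) (abs_lt.1 hy) hs ht hst)
  -- at every side point in the strip, a half ball lies in `F`
  have hball : ∀ y ∈ J, ∃ r > 0, Metric.ball (sidePt α e y) r ∩ Pgram α w L ⊆ F := by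
    intro y hy
    obtain ⟨r, hr, hev⟩ := side_nbhd (q := q) hu he hy.1.1 hy.1.2 hy.2
    exact ⟨r, hr, hev.self_of_nhds.1⟩
  have hclosed : ∀ (p : ℝ × ℝ) (y : ℝ), y ∈ J → ∀ r > 0,
      Metric.ball (sidePt α e y) r ∩ Pgram α w L ⊆ connectedComponentIn F p →
      ∀ y' ∈ J, sidePt α e y' ∈ Metric.ball (sidePt α e y) r →
      sidePt α e y' ∈ closure (connectedComponentIn F p) := by
    intro p y _ r _ hsub y' hy' hmem
    refine closure_mono hsub ?_
    exact Metric.isOpen_ball.inter_closure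
      ⟨hmem, sidePt_mem_closure hL he hy'.1.1 hy'.1.2⟩
  have hmain : J ⊆ {y | y ∈ J ∧ sidePt α e y ∈ closure (connectedComponentIn F p)} := by
    refine hJc.subset_of_closure_inter_subset ?_ ?_ ?_
    · refine isOpen_iff_mem_nhds.2 ?_
      rintro y ⟨hyJ, hy⟩
      obtain ⟨r, hr, hb⟩ := hball y hyJ
      have hsub := ball_subset_component (aboveSet_subset θ) Metric.isOpen_ball
        (Metric.mem_ball_self hr) hb (preconnected_ball_inter _ _) hy
      filter_upwards [hJo.mem_nhds hyJ, (continuous_sidePt α e).continuousAt.eventually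
        (Metric.ball_mem_nhds _ hr)] with y' h1 h2
      exact ⟨h1, hclosed p y hyJ r hr hsub y' h1 h2⟩
    · obtain ⟨y, h1, h2, h3, h4⟩ := hp
      exact ⟨y, ⟨⟨h1, h2⟩, h3⟩, ⟨⟨h1, h2⟩, h3⟩, h4⟩
    · rintro y ⟨hy, hyJ⟩
      refine ⟨hyJ, ?_⟩
      obtain ⟨r, hr, hb⟩ := hball y hyJ
      have hn := (continuous_sidePt α e).continuousAt.eventually (Metric.ball_mem_nhds (sidePt α e y) hr)
      obtain ⟨y', h1, h2⟩ := mem_closure_iff_nhds.1 hy _ hn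
      have hsub := ball_subset_component (aboveSet_subset θ) Metric.isOpen_ball
        h1 hb (preconnected_ball_inter _ _) h2.2
      exact hclosed p y hyJ r hr hsub y hyJ (Metric.mem_ball_self hr)
  obtain ⟨y, h1, h2, h3, h4⟩ := hp'
  have hyJ : y ∈ J := ⟨⟨h1, h2⟩, h3⟩
  obtain ⟨r, hr, hb⟩ := hball y hyJ
  have s1 := ball_subset_component (aboveSet_subset θ) Metric.isOpen_ball
    (Metric.mem_ball_self hr) hb (preconnected_ball_inter _ _) h4
  have s2 := ball_subset_component (aboveSet_subset θ) Metric.isOpen_ball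
    (Metric.mem_ball_self hr) hb (preconnected_ball_inter _ _) (hmain hyJ).2
  obtain ⟨z, hz⟩ := mem_closure_iff.1 (sidePt_mem_closure (α := α) hL he h1 h2) _
    Metric.isOpen_ball (Metric.mem_ball_self hr)
  rw [connectedComponentIn_eq (s2 hz), ← connectedComponentIn_eq (s1 hz)]
  exact mem_connectedComponentIn hp'F

/-- Adherence to a nonhorizontal side persists under small rotations of the direction. -/
theorem touch_eventually (hL : 0 < L) (hu : ScherkBVP α w L u) (he : e = 0 ∨ e = L)
    {p : ℝ → ℝ × ℝ} (hp : Continuous p) (hpF : p θ ∈ aboveSet α w L u q θ)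
    (h : ∃ y, 0 < y ∧ y < w ∧ |tphase u q θ (sidePt α e y)| < π / 2 ∧
      sidePt α e y ∈ closure (connectedComponentIn (aboveSet α w L u q θ) (p θ))) :
    ∀ᶠ θ' in nhds θ, ∃ y, 0 < y ∧ y < w ∧ |tphase u q θ' (sidePt α e y)| < π / 2 ∧
      sidePt α e y ∈ closure (connectedComponentIn (aboveSet α w L u q θ') (p θ')) := by
  obtain ⟨y, hy, hyw, hT, hcl⟩ := h
  obtain ⟨r, hr, hev⟩ := side_nbhd (q := q) hu he hy hyw hT
  set N := Metric.ball (sidePt α e y) r with hN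
  have hA : IsOpen (connectedComponentIn (aboveSet α w L u q θ) (p θ)) :=
    (isOpen_aboveSet hu.1 θ).connectedComponentIn
  have hpath := hA.isConnected_iff_isPathConnected.1 (isConnected_connectedComponentIn_iff.2 hpF)
  obtain ⟨z, hzN, hzA⟩ := mem_closure_iff.1 hcl N Metric.isOpen_ball (Metric.mem_ball_self hr)
  have hzP : z ∈ Pgram α w L := aboveSet_subset θ (connectedComponentIn_subset _ _ hzA)
  obtain ⟨γ, hγ⟩ := hpath.joinedIn (p θ) (mem_connectedComponentIn hpF) z hzA
  -- the path stays above for nearby directions, by compactness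
  have e1 : ∀ᶠ θ' in nhds θ, ∀ x ∈ range γ, x ∈ aboveSet α w L u q θ' := by
    refine (isCompact_range γ.continuous).eventually_forall_of_forall_eventually ?_
    rintro x ⟨t, rfl⟩
    have := aboveSet_eventually hu.1 (connectedComponentIn_subset _ _ (hγ t))
    exact this
  obtain ⟨ε, hε, hb⟩ := Metric.eventually_nhds_iff.1 (aboveSet_eventually hu.1 hpF)
  have e2 : ∀ᶠ θ' in nhds θ, p θ' ∈ Metric.ball (p θ) ε :=
    hp.continuousAt.eventually (Metric.ball_mem_nhds _ hε)
  filter_upwards [hev, e1, e2, Metric.ball_mem_nhds θ hε] with θ' h1 h2 h3 h4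
  refine ⟨y, hy, hyw, h1.2, ?_⟩
  have hB : Metric.ball (p θ) ε ⊆ aboveSet α w L u q θ' := by
    intro x hx
    exact hb (y := (θ', x)) (by rw [Prod.dist_eq]; exact max_lt h4 hx)
  have c1 : IsPreconnected (Metric.ball (p θ) ε ∪ range γ) :=
    (convex_ball _ _).isPreconnected.union (p θ) (Metric.mem_ball_self hε) ⟨0, γ.source⟩
      (isPreconnected_range γ.continuous)
  have c2 : IsPreconnected (Metric.ball (p θ) ε ∪ range γ ∪ N ∩ Pgram α w L) :=
    c1.union z (Or.inr ⟨1, γ.target⟩) ⟨hzN, hzP⟩ (preconnected_ball_inter _ _)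
  have c3 := c2.subset_connectedComponentIn (x := p θ') (F := aboveSet α w L u q θ')
    (Or.inl (Or.inl h3)) (union_subset (union_subset hB h2) h1.1)
  refine closure_mono (subset_union_right.trans c3) ?_
  exact Metric.isOpen_ball.inter_closure ⟨Metric.mem_ball_self hr, sidePt_mem_closure hL he hy hyw⟩

end

/-! ### The sign of the Hessian determinant -/

section

variable {α w L : ℝ} {u : ℝ × ℝ → ℝ} {q : ℝ × ℝ} {θ : ℝ}

theorem closure_Pgram_subset : closure (Pgram α w L) ⊆
    {x | 0 ≤ x.2 ∧ x.2 ≤ w ∧ x.2 * cos α / sin α ≤ x.1 ∧ x.1 ≤ L + x.2 * cos α / sin α} := by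
  refine closure_minimal (fun x hx => ⟨hx.1.le, hx.2.1.le, hx.2.2.1.le, hx.2.2.2.le⟩) ?_
  have hc : Continuous fun x : ℝ × ℝ => x.2 * cos α / sin α := by fun_prop
  exact (isClosed_le continuous_const continuous_snd).inter
    ((isClosed_le continuous_snd continuous_const).inter
      ((isClosed_le hc continuous_fst).inter (isClosed_le continuous_fst (continuous_const.add hc))))

theorem isBounded_Pgram : Bornology.IsBounded (Pgram α w L) := by
  -- the parallelogram is the image of a rectangle under a shear
  have hc : Continuous fun z : ℝ × ℝ => ((z.1 + z.2 * cos α / sin α, z.2) : ℝ × ℝ) := by fun_prop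
  refine ((isCompact_Icc (a := (0 : ℝ)) (b := L)).prod
    (isCompact_Icc (a := (0 : ℝ)) (b := w))).image hc |>.isBounded.subset ?_
  rintro x ⟨h1, h2, h3, h4⟩
  refine ⟨(x.1 - x.2 * cos α / sin α, x.2), ⟨⟨?_, ?_⟩, h1.le, h2.le⟩, ?_⟩
  · simp only; linarith
  · simp only; linarith
  · ext <;> simp

/-- Points of a set where `u` exceeds a tangent grim reaper do not accumulate, inside the strip of
the grim reaper, at boundary points where `u → -∞`. -/
theorem not_mem_closure_of_atBot {A : Set (ℝ × ℝ)} {x : ℝ × ℝ}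
    (hA : A ⊆ aboveSet α w L u q θ) (hx : Tendsto u (nhdsWithin x (Pgram α w L)) atBot)
    (hT : |tphase u q θ x| < π / 2) : x ∉ closure A := by
  intro hcl
  have hc : ContinuousAt (treaper u q θ) x := (treaper_solution hT).1.continuousAt
  have e1 := hc.eventually_const_lt (sub_one_lt (treaper u q θ x))
  have e2 := eventually_nhdsWithin_iff.1 (hx.eventually_lt_atBot (treaper u q θ x - 1))
  obtain ⟨z, hz, hzA⟩ := mem_closure_iff_nhds.1 hcl _ (e1.and e2)
  have h1 := hA hzA
  have h2 : treaper u q θ x - 1 < treaper u q θ z := hz.1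
  have h3 : u z < treaper u q θ x - 1 := hz.2 h1.1.1
  linarith [h1.2]

/-- Every component of `aboveSet` is adherent to one of the two nonhorizontal sides inside the
strip of the grim reaper. -/
theorem side_reached (hw : 0 < w) (hL : 0 < L) (hu : ScherkBVP α w L u) (hq : q ∈ Pgram α w L)
    {p : ℝ × ℝ} (hp : p ∈ aboveSet α w L u q θ) :
    ∃ e, (e = 0 ∨ e = L) ∧ ∃ y, 0 < y ∧ y < w ∧ |tphase u q θ (sidePt α e y)| < π / 2 ∧
      sidePt α e y ∈ closure (connectedComponentIn (aboveSet α w L u q θ) p) := by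
  by_contra hcon
  push Not at hcon
  have hAF := connectedComponentIn_subset (aboveSet α w L u q θ) p
  refine component_not_enclosed (Ω := stripDom α w L u q θ) (u := u)
    (A := connectedComponentIn (aboveSet α w L u q θ) p)
    (Cn := {(0, 0), (L, 0), (w * cos α / sin α, w), (L + w * cos α / sin α, w)})
    (a := cos θ) (b := sin θ) (m := dirSlope u q θ) (τ := dirShift u q θ) (k := dirHeight u q θ)
    (q := q) (isOpen_stripDom θ) (convex_stripDom θ).isPreconnected
    (hu.1.mono_set fun x hx => hx.1) (cos_sq_add_sin_sq θ) (fun x hx => hx.2)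
    (isOpen_aboveSet hu.1 θ).connectedComponentIn isPreconnected_connectedComponentIn
    ⟨p, mem_connectedComponentIn hp⟩
    (isBounded_Pgram.subset (hAF.trans (aboveSet_subset θ)))
    (fun x hx => hAF hx)
    (fun x hx hxΩ h0 => connectedComponentIn_closed hp hx ⟨hxΩ, h0⟩)
    (self_mem_stripDom hq θ) ?_ (Set.toFinite _) ?_ ?_
  · exact (sub_eq_zero.2 treaper_self.symm).le
  · rintro c hc ⟨hcP, _⟩
    obtain ⟨h1, h2, _, _⟩ := hcP
    simp only [mem_insert_iff, mem_singleton_iff] at hc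
    rcases hc with rfl | rfl | rfl | rfl
    · exact lt_irrefl _ h1
    · exact lt_irrefl _ h1
    · exact lt_irrefl _ h2
    · exact lt_irrefl _ h2
  · rintro ⟨x, y⟩ hx hT
    have hT : |tphase u q θ (x, y)| < π / 2 := hT
    obtain ⟨h1, h2, h3, h4⟩ :=
      closure_Pgram_subset (closure_mono (hAF.trans (aboveSet_subset θ)) hx)
    simp only at h1 h2 h3 h4
    simp only [mem_insert_iff, mem_singleton_iff, Prod.mk.injEq]
    rcases h1.eq_or_lt with rfl | h1
    · simp only [zero_mul, zero_div, add_zero] at h3 h4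
      rcases h3.eq_or_lt with rfl | h3
      · exact Or.inr (Or.inl ⟨rfl, rfl⟩)
      rcases h4.eq_or_lt with rfl | h4
      · exact Or.inr (Or.inr (Or.inl ⟨rfl, rfl⟩))
      exact absurd hx (not_mem_closure_of_atBot hAF (hu.2.1 x h3 h4) hT)
    rcases h2.eq_or_lt with rfl | h2
    · rcases h3.eq_or_lt with h3 | h3
      · exact Or.inr (Or.inr (Or.inr (Or.inl ⟨h3.symm, rfl⟩)))
      rcases h4.eq_or_lt with h4 | h4
      · exact Or.inr (Or.inr (Or.inr (Or.inr ⟨h4, rfl⟩)))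
      exact absurd hx (not_mem_closure_of_atBot hAF (hu.2.2.1 x h3 h4) hT)
    rcases h3.eq_or_lt with h3 | h3
    · have e : sidePt α 0 y = (x, y) := by rw [sidePt, ← h3, zero_add]
      exact absurd hx (e ▸ hcon 0 (Or.inl rfl) y h1 h2 (e ▸ hT))
    rcases h4.eq_or_lt with h4 | h4
    · have e : sidePt α L y = (x, y) := by rw [sidePt, ← h4]
      exact absurd hx (e ▸ hcon L (Or.inr rfl) y h1 h2 (e ▸ hT))
    exact Or.inl ⟨⟨h1, h2, h3, h4⟩, hT⟩

/-- Rotating the direction by `π` interchanges the two ends of the chord, hence interchanges the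
nonhorizontal sides to which they are joined; connectedness of the circle of directions forbids
this. -/
theorem hdet_nonpos (hw : 0 < w) (hL : 0 < L) (hu : ScherkBVP α w L u) (hq : q ∈ Pgram α w L) :
    hdet u q ≤ 0 := by
  by_contra hd
  push Not at hd
  obtain ⟨s₀, hs₀, hab⟩ := exists_above (isOpen_Pgram α w L) hu.1 hq hd
  have habove : ∀ θ s : ℝ, 0 < s → s ≤ s₀ →
      (q.1 + s * cos θ, q.2 + s * sin θ) ∈ aboveSet α w L u q θ := fun θ s h1 h2 =>
    ⟨⟨(hab θ s h1 h2).1, by rw [tphase_line]; exact dirPhase_abs_lt⟩, (hab θ s h1 h2).2⟩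
  set p : ℝ → ℝ × ℝ := fun θ => (q.1 + s₀ * cos θ, q.2 + s₀ * sin θ) with hp
  have hpc : Continuous p := by rw [hp]; fun_prop
  have hpF : ∀ θ, p θ ∈ aboveSet α w L u q θ := fun θ => habove θ s₀ hs₀ le_rfl
  set U : ℝ → Set ℝ := fun e => {θ | ∃ y, 0 < y ∧ y < w ∧ |tphase u q θ (sidePt α e y)| < π / 2 ∧
      sidePt α e y ∈ closure (connectedComponentIn (aboveSet α w L u q θ) (p θ))} with hU
  have hopen : ∀ e, (e = 0 ∨ e = L) → IsOpen (U e) := fun e he =>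
    isOpen_iff_mem_nhds.2 fun θ hθ => touch_eventually hL hu he hpc (hpF θ) hθ
  have hcover : ∀ θ, θ ∈ U 0 ∨ θ ∈ U L := by
    intro θ
    obtain ⟨e, rfl | rfl, h⟩ := side_reached hw hL hu hq (hpF θ)
    · exact Or.inl h
    · exact Or.inr h
  have hanti : ∀ e, (e = 0 ∨ e = L) → ∀ θ, θ ∈ U e → θ + π ∈ U e → False := by
    intro e he θ h1 h2
    have hF := hpF (θ + π)
    rw [hU, mem_ofPred_eq] at h2
    simp only [tphase_add_pi, aboveSet_add_pi, abs_neg] at h2 hF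
    have h3 := same_side_same_component hL hu he h1 hF h2
    refine chord_ends_separated hu.1 hq hd hs₀ habove θ ?_
    simpa [hp, cos_add_pi, sin_add_pi] using h3
  have hne : ∀ e, (e = 0 ∨ e = L) → ∀ e', (∀ θ, θ ∈ U e ∨ θ ∈ U e') → (U e').Nonempty := by
    intro e he e' hc
    by_contra hem
    have h : ∀ θ, θ ∈ U e := fun θ => (hc θ).resolve_right fun h => hem ⟨θ, h⟩
    exact hanti e he 0 (h _) (h _)
  have n2 := hne 0 (Or.inl rfl) L hcover
  have n1 := hne L (Or.inr rfl) 0 fun θ => (hcover θ).symm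
  obtain ⟨θ, _, h0, h1⟩ := isPreconnected_univ (α := ℝ) (U 0) (U L) (hopen 0 (Or.inl rfl))
    (hopen L (Or.inr rfl)) (fun θ _ => hcover θ) (by simpa using n1) (by simpa using n2)
  rcases hcover (θ + π) with h | h
  · exact hanti 0 (Or.inl rfl) θ h0 h
  · exact hanti L (Or.inr rfl) θ h1 h

end

/-- a Scherk translator has strictly negative Gauss curvature everywhere,
i.e. `det D²u < 0` on `P(α,w,L)`. -/
theorem scherk_negative_gauss_curvature (α w L : ℝ) (hα : α ∈ Set.Ioo 0 π)
    (hw : w ∈ Set.Ioo 0 π) (hL : 0 < L) (u : ℝ × ℝ → ℝ) (hu : ScherkBVP α w L u) :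
    ∀ p ∈ Pgram α w L,
      pdx (pdx u) p * pdy (pdy u) p - (pdy (pdx u) p) ^ 2 < 0 := by
  obtain ⟨x₁, hx₁, hneg⟩ := exists_det_neg hw.1 hL hu
  exact det_neg_of_nonpos (isOpen_Pgram α w L) (convex_Pgram α w L).isPreconnected hu.1
    (fun x hx => hdet_nonpos hw.1 hL hu hx) hx₁ hneg
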